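/- Let Ω be a bounded simply connected domain in ℂ whose boundary ∂Ω is a simple closed C^∞-smooth curve (the image of a C^∞ embedding of the circle into ℂ with nonvanishing derivative). For h holomorphic and square-integrable on Ω, define a holomorphic function H on the exterior ℂ ∖ cl(Ω) by conj(H(w)) = ∬_{z ∈ Ω} h(z)/(\bar{z} − \bar{w}) dA_z. Then for every positive integer N there exist a positive integer M and a constant C > 0, depending only on Ω and N, such that: for every square-integrable holomorphic h on Ω, if the norm ‖H‖^M := sup over w ∈ ℂ ∖ cl(Ω) and 0 ≤ k ≤ M of ‖(iterated derivative of order k of H)(w)‖ is finite, then the norm ‖h‖_N := sup over z ∈ Ω and 0 ≤ k ≤ N of ‖(iterated derivative of order k of h)(z)‖ is finite and satisfies ‖h‖_N ≤ C ‖H‖^M. -/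

import Mathlib

namespace SDB
open MeasureTheory Set Filter Topology Metric
open scoped NNReal

/-- The Wirtinger derivative with respect to `z`. -/
noncomputable def dz (g : ℂ → ℂ) (z : ℂ) : ℂ :=
  (fderiv ℝ g z 1 - Complex.I * fderiv ℝ g z Complex.I) / 2

/-- The Wirtinger derivative with respect to the conjugate variable. -/
noncomputable def dzb (g : ℂ → ℂ) (z : ℂ) : ℂ :=
  (fderiv ℝ g z 1 + Complex.I * fderiv ℝ g z Complex.I) / 2

lemma int_lineDeriv_zero_real {F : ℂ → ℝ} {K : ℝ≥0} (hF : LipschitzWith K F)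
    (hc : HasCompactSupport F) (v : ℂ) : ∫ z, lineDeriv ℝ F z v = 0 := by
  have h1 : LipschitzWith 0 (fun _ : ℂ => (1 : ℝ)) := LipschitzWith.const _
  have := LipschitzWith.integral_lineDeriv_mul_eq (μ := (volume : Measure ℂ)) h1 hF hc (-v)
  have h0 : ∀ x : ℂ, lineDeriv ℝ (fun _ : ℂ => (1 : ℝ)) x (-v) = 0 := by
    intro x; simp [lineDeriv]
  simpa [h0] using this.symm

lemma lip_integrable_fderiv {F : ℂ → ℂ} {K : ℝ≥0} (hF : LipschitzWith K F)
    (hc : HasCompactSupport F) (v : ℂ) : Integrable (fun z => fderiv ℝ F z v) := by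
  have hm : AEStronglyMeasurable (fun z => fderiv ℝ F z v) (volume : Measure ℂ) :=
    (measurable_fderiv_apply_const ℝ F v).aestronglyMeasurable
  have hcs : HasCompactSupport (fun z => fderiv ℝ F z v) :=
    hc.fderiv_apply (𝕜 := ℝ) v
  refine (Measure.integrableOn_of_bounded (s := tsupport (fun z => fderiv ℝ F z v))
    (M := K * ‖v‖) ?_ hm ?_).integrable_of_forall_notMem_eq_zero ?_
  · exact hcs.isCompact.measure_lt_top.ne
  · refine Eventually.of_forall fun z => ?_
    exact ((fderiv ℝ F z).le_opNorm v).trans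
      (mul_le_mul_of_nonneg_right (norm_fderiv_le_of_lipschitz ℝ hF) (norm_nonneg _))
  · intro z hz
    exact image_eq_zero_of_notMem_tsupport (f := fun z => fderiv ℝ F z v) hz

lemma int_fderiv_zero {F : ℂ → ℂ} {K : ℝ≥0} (hF : LipschitzWith K F)
    (hc : HasCompactSupport F) (v : ℂ) : ∫ z, fderiv ℝ F z v = 0 := by
  have hintg := lip_integrable_fderiv hF hc v
  have hre : LipschitzWith (1 * K) (fun z => (F z).re) :=
    (LipschitzWith.of_dist_le_mul (K := 1) (fun a b => by
      simpa [Complex.dist_eq, Real.dist_eq] using Complex.abs_re_le_norm (a - b))).comp hF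
  have him : LipschitzWith (1 * K) (fun z => (F z).im) :=
    (LipschitzWith.of_dist_le_mul (K := 1) (fun a b => by
      simpa [Complex.dist_eq, Real.dist_eq] using Complex.abs_im_le_norm (a - b))).comp hF
  have hcre : HasCompactSupport (fun z => (F z).re) := hc.comp_left (g := Complex.re) rfl
  have hcim : HasCompactSupport (fun z => (F z).im) := hc.comp_left (g := Complex.im) rfl
  have hd : ∀ᵐ z ∂(volume : Measure ℂ), DifferentiableAt ℝ F z := hF.ae_differentiableAt
  have e1 : ∫ z, (fderiv ℝ F z v).re = 0 := by
    rw [← int_lineDeriv_zero_real hre hcre v]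
    refine integral_congr_ae ?_
    filter_upwards [hd] with z hz
    have : HasFDerivAt (fun z => (F z).re) (Complex.reCLM.comp (fderiv ℝ F z)) z :=
      (Complex.reCLM.hasFDerivAt).comp z hz.hasFDerivAt
    rw [(this.hasLineDerivAt v).lineDeriv]; simp
  have e2 : ∫ z, (fderiv ℝ F z v).im = 0 := by
    rw [← int_lineDeriv_zero_real him hcim v]
    refine integral_congr_ae ?_
    filter_upwards [hd] with z hz
    have : HasFDerivAt (fun z => (F z).im) (Complex.imCLM.comp (fderiv ℝ F z)) z :=
      (Complex.imCLM.hasFDerivAt).comp z hz.hasFDerivAt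
    rw [(this.hasLineDerivAt v).lineDeriv]; simp
  apply Complex.ext
  · exact (integral_re hintg).symm.trans e1
  · exact (integral_im hintg).symm.trans e2

lemma dz_norm_le {g : ℂ → ℂ} {K : ℝ≥0} (hg : LipschitzWith K g) (z : ℂ) : ‖dz g z‖ ≤ K := by
  unfold dz
  have h1 : ‖fderiv ℝ g z 1‖ ≤ K := by
    refine ((fderiv ℝ g z).le_opNorm 1).trans ?_
    simpa using norm_fderiv_le_of_lipschitz ℝ hg
  have h2 : ‖fderiv ℝ g z Complex.I‖ ≤ K := by
    refine ((fderiv ℝ g z).le_opNorm _).trans ?_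
    simpa using norm_fderiv_le_of_lipschitz ℝ hg
  have h3 := norm_sub_le (fderiv ℝ g z 1) (Complex.I * fderiv ℝ g z Complex.I)
  rw [norm_div]; simp only [norm_mul, Complex.norm_I, one_mul, Complex.norm_two] at *
  linarith

lemma dzb_norm_le {g : ℂ → ℂ} {K : ℝ≥0} (hg : LipschitzWith K g) (z : ℂ) : ‖dzb g z‖ ≤ K := by
  unfold dzb
  have h1 : ‖fderiv ℝ g z 1‖ ≤ K := by
    refine ((fderiv ℝ g z).le_opNorm 1).trans ?_
    simpa using norm_fderiv_le_of_lipschitz ℝ hg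
  have h2 : ‖fderiv ℝ g z Complex.I‖ ≤ K := by
    refine ((fderiv ℝ g z).le_opNorm _).trans ?_
    simpa using norm_fderiv_le_of_lipschitz ℝ hg
  have h3 := norm_add_le (fderiv ℝ g z 1) (Complex.I * fderiv ℝ g z Complex.I)
  rw [norm_div]; simp only [norm_mul, Complex.norm_I, one_mul, Complex.norm_two] at *
  linarith

lemma dz_measurable (g : ℂ → ℂ) : Measurable (dz g) := by
  unfold dz
  have h1 := measurable_fderiv_apply_const ℝ g 1
  have h2 := measurable_fderiv_apply_const ℝ g Complex.I
  fun_prop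

lemma dzb_measurable (g : ℂ → ℂ) : Measurable (dzb g) := by
  unfold dzb
  have h1 := measurable_fderiv_apply_const ℝ g 1
  have h2 := measurable_fderiv_apply_const ℝ g Complex.I
  fun_prop

lemma int_dz_zero {F : ℂ → ℂ} {K : ℝ≥0} (hF : LipschitzWith K F)
    (hc : HasCompactSupport F) : ∫ z, dz F z = 0 := by
  unfold dz
  rw [integral_div, integral_sub (lip_integrable_fderiv hF hc 1)
    ((lip_integrable_fderiv hF hc _).const_mul _), integral_const_mul,
    int_fderiv_zero hF hc, int_fderiv_zero hF hc]
  simp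

lemma int_dzb_zero {F : ℂ → ℂ} {K : ℝ≥0} (hF : LipschitzWith K F)
    (hc : HasCompactSupport F) : ∫ z, dzb F z = 0 := by
  unfold dzb
  rw [integral_div, integral_add (lip_integrable_fderiv hF hc 1)
    ((lip_integrable_fderiv hF hc _).const_mul _), integral_const_mul,
    int_fderiv_zero hF hc, int_fderiv_zero hF hc]
  simp

lemma dz_congr {f g : ℂ → ℂ} {z : ℂ} (h : f =ᶠ[𝓝 z] g) : dz f z = dz g z := by
  unfold dz; rw [h.fderiv_eq]

lemma dzb_congr {f g : ℂ → ℂ} {z : ℂ} (h : f =ᶠ[𝓝 z] g) : dzb f z = dzb g z := by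
  unfold dzb; rw [h.fderiv_eq]

lemma dz_mul {f g : ℂ → ℂ} {z : ℂ} (hf : DifferentiableAt ℝ f z) (hg : DifferentiableAt ℝ g z) :
    dz (fun w => f w * g w) z = f z * dz g z + g z * dz f z := by
  unfold dz
  rw [fderiv_fun_mul hf hg]
  simp; ring

lemma dzb_mul {f g : ℂ → ℂ} {z : ℂ} (hf : DifferentiableAt ℝ f z) (hg : DifferentiableAt ℝ g z) :
    dzb (fun w => f w * g w) z = f z * dzb g z + g z * dzb f z := by
  unfold dzb
  rw [fderiv_fun_mul hf hg]
  simp; ring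

lemma dz_sub {f g : ℂ → ℂ} {z : ℂ} (hf : DifferentiableAt ℝ f z) (hg : DifferentiableAt ℝ g z) :
    dz (fun w => f w - g w) z = dz f z - dz g z := by
  unfold dz
  rw [fderiv_fun_sub hf hg]
  simp; ring

lemma dz_const_mul {g : ℂ → ℂ} {z : ℂ} (c : ℂ) (hg : DifferentiableAt ℝ g z) :
    dz (fun w => c * g w) z = c * dz g z := by
  unfold dz
  rw [fderiv_const_mul hg]
  simp; ring

lemma dz_sum {ι : Type*} (s : Finset ι) {g : ι → ℂ → ℂ} {z : ℂ}
    (hg : ∀ i ∈ s, DifferentiableAt ℝ (g i) z) :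
    dz (fun w => ∑ i ∈ s, g i w) z = ∑ i ∈ s, dz (g i) z := by
  unfold dz
  rw [fderiv_fun_sum hg]
  simp [Finset.mul_sum, Finset.sum_sub_distrib, ← Finset.sum_div]

lemma hol_fderiv {f : ℂ → ℂ} {z f' : ℂ} (hf : HasDerivAt f f' z) (v : ℂ) :
    fderiv ℝ f z v = f' * v := by
  rw [(hf.hasFDerivAt.restrictScalars ℝ).fderiv]
  simp [mul_comm]

lemma dz_hol {f : ℂ → ℂ} {z f' : ℂ} (hf : HasDerivAt f f' z) : dz f z = f' := by
  unfold dz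
  rw [hol_fderiv hf, hol_fderiv hf]
  linear_combination (-(f' / 2)) * Complex.I_mul_I

lemma dzb_hol {f : ℂ → ℂ} {z f' : ℂ} (hf : HasDerivAt f f' z) : dzb f z = 0 := by
  unfold dzb
  rw [hol_fderiv hf, hol_fderiv hf]
  linear_combination (f' / 2) * Complex.I_mul_I

lemma anti_differentiableAt {f : ℂ → ℂ} {z f' : ℂ} (hf : HasDerivAt f f' z) :
    HasFDerivAt (fun w => (starRingEnd ℂ) (f w))
      ((Complex.conjCLE : ℂ →L[ℝ] ℂ).comp (fderiv ℝ f z)) z := by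
  have h1 : HasFDerivAt f (fderiv ℝ f z) z :=
    (hf.hasFDerivAt.restrictScalars ℝ).differentiableAt.hasFDerivAt
  exact (Complex.conjCLE : ℂ →L[ℝ] ℂ).hasFDerivAt.comp z h1

lemma dz_anti {f : ℂ → ℂ} {z f' : ℂ} (hf : HasDerivAt f f' z) :
    dz (fun w => (starRingEnd ℂ) (f w)) z = 0 := by
  unfold dz
  rw [(anti_differentiableAt hf).fderiv]
  simp [hol_fderiv hf]
  linear_combination ((starRingEnd ℂ) f') * Complex.I_mul_I

lemma dzb_anti {f : ℂ → ℂ} {z f' : ℂ} (hf : HasDerivAt f f' z) :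
    dzb (fun w => (starRingEnd ℂ) (f w)) z = (starRingEnd ℂ) f' := by
  unfold dzb
  rw [(anti_differentiableAt hf).fderiv]
  simp [hol_fderiv hf]
  linear_combination (-(starRingEnd ℂ) f' / 2) * Complex.I_mul_I

end SDB


namespace SDB
open MeasureTheory Set Filter Topology Metric
open scoped NNReal

lemma lip_mul_bdd {X : Type*} [PseudoMetricSpace X] {f g : X → ℂ} {Kf Kg A B : ℝ≥0}
    (hf : LipschitzWith Kf f) (hg : LipschitzWith Kg g) (hA : ∀ z, ‖f z‖ ≤ A) (hB : ∀ z, ‖g z‖ ≤ B) :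
    LipschitzWith (A * Kg + B * Kf) (fun z => f z * g z) := by
  refine LipschitzWith.of_dist_le_mul fun x y => ?_
  have e : f x * g x - f y * g y = f x * (g x - g y) + g y * (f x - f y) := by ring
  rw [Complex.dist_eq, e]
  refine (norm_add_le _ _).trans ?_
  rw [norm_mul, norm_mul]
  have h1 : ‖g x - g y‖ ≤ Kg * dist x y := by simpa [Complex.dist_eq] using hg.dist_le_mul x y
  have h2 : ‖f x - f y‖ ≤ Kf * dist x y := by simpa [Complex.dist_eq] using hf.dist_le_mul x y
  have h3 := mul_le_mul (hA x) h1 (norm_nonneg _) A.2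
  have h4 := mul_le_mul (hB y) h2 (norm_nonneg _) B.2
  push_cast
  calc _ ≤ A * (Kg * dist x y) + B * (Kf * dist x y) := add_le_add h3 h4
    _ = _ := by ring

lemma lip_compact_bdd {f : ℂ → ℂ} (hf : Continuous f) (hc : HasCompactSupport f) :
    ∃ A : ℝ≥0, ∀ z, ‖f z‖ ≤ A := by
  obtain ⟨C, hC⟩ := hf.bounded_above_of_compact_support hc
  exact ⟨C.toNNReal, fun z => (hC z).trans (Real.le_coe_toNNReal C)⟩

lemma exists_cutoff {s : Set ℂ} {U : Set ℂ} (hs : IsCompact s) (hU : IsOpen U) (hsU : s ⊆ U) :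
    ∃ χ : ℂ → ℝ, ContDiff ℝ (⊤ : ℕ∞) χ ∧ HasCompactSupport χ ∧ tsupport χ ⊆ U ∧
      ∀ z ∈ s, χ =ᶠ[𝓝 z] 1 := by
  obtain ⟨V, hV, hsV, hVU, hVc⟩ := exists_open_between_and_isCompact_closure hs hU hsU
  obtain ⟨W, hW, hsW, hWV, hWc⟩ := exists_open_between_and_isCompact_closure hs hV hsV
  have hd : Disjoint Vᶜ (closure W) :=
    disjoint_left.2 fun z hz hz' => hz (hWV hz')
  obtain ⟨f, hf0, hf1, hf2⟩ :=
    exists_contMDiffMap_zero_one_of_isClosed (n := (⊤ : ℕ∞)) (modelWithCornersSelf ℝ ℂ)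
      hV.isClosed_compl isClosed_closure hd
  have hsupp : tsupport f ⊆ closure V := by
    refine closure_mono fun z hz => ?_
    by_contra h
    exact hz (by simpa using hf0 h)
  refine ⟨f, f.contMDiff.contDiff, ?_, hsupp.trans hVU, fun z hz => ?_⟩
  · exact HasCompactSupport.of_support_subset_isCompact hVc
      ((subset_tsupport _).trans hsupp)
  · filter_upwards [hW.mem_nhds (hsW hz)] with w hw
    simpa using hf1 (subset_closure hw)

lemma green_compact {Ω : Set ℂ} (hΩ : IsOpen Ω) {h g : ℂ → ℂ} {K : ℝ≥0}
    (hh : DifferentiableOn ℂ h Ω) (hg : LipschitzWith K g) (hc : HasCompactSupport g)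
    (hs : tsupport g ⊆ Ω) : ∫ z in Ω, (starRingEnd ℂ) (h z) * dz g z = 0 := by
  obtain ⟨χ, hχ, hχc, hχs, hχ1⟩ := exists_cutoff hc.isCompact hΩ hs
  set F : ℂ → ℂ := fun z => (starRingEnd ℂ) (h z) * (χ z : ℂ) with hF
  have hFc : HasCompactSupport F := by
    refine HasCompactSupport.of_support_subset_isCompact hχc.isCompact fun z hz => ?_
    refine subset_tsupport _ fun h0 => hz ?_
    simp [hF, h0]
  have hFd : ContDiff ℝ 1 F := by
    rw [contDiff_iff_contDiffAt]
    intro z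
    by_cases hz : z ∈ Ω
    · have h1 : ContDiffAt ℂ 1 h z := (hh.analyticAt (hΩ.mem_nhds hz)).contDiffAt
      have h2 : ContDiffAt ℝ 1 (fun w => (starRingEnd ℂ) (h w)) z :=
        (Complex.conjCLE : ℂ →L[ℝ] ℂ).contDiff.contDiffAt.comp z (h1.restrict_scalars ℝ)
      have h3 : ContDiffAt ℝ 1 (fun w => (χ w : ℂ)) z :=
        Complex.ofRealCLM.contDiff.contDiffAt.comp z ((hχ.of_le (by simp)).contDiffAt)
      exact h2.mul h3
    · have : F =ᶠ[𝓝 z] fun _ => 0 := by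
        have hz' : z ∉ tsupport χ := fun h' => hz (hχs h')
        filter_upwards [(isClosed_tsupport χ).isOpen_compl.mem_nhds hz'] with w hw
        simp [hF, image_eq_zero_of_notMem_tsupport hw]
      exact (contDiffAt_const (c := (0 : ℂ))).congr_of_eventuallyEq this
  obtain ⟨KF, hKF⟩ := ContDiff.lipschitzWith_of_hasCompactSupport hFc hFd one_ne_zero
  obtain ⟨A, hA⟩ := lip_compact_bdd hFd.continuous hFc
  obtain ⟨B, hB⟩ := lip_compact_bdd hg.continuous hc
  have hprod := lip_mul_bdd hKF hg hA hB
  have hpc : HasCompactSupport (fun z => F z * g z) := hc.mul_left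
  have key := int_dz_zero hprod hpc
  rw [← key, ← integral_indicator hΩ.measurableSet]
  refine integral_congr_ae ?_
  filter_upwards [hg.ae_differentiableAt (μ := (volume : Measure ℂ))] with z hz
  rw [dz_mul (hFd.differentiable one_ne_zero z) hz]
  by_cases hzs : z ∈ tsupport g
  · have hzΩ := hs hzs
    rw [indicator_of_mem hzΩ]
    have e1 : F =ᶠ[𝓝 z] fun w => (starRingEnd ℂ) (h w) := by
      filter_upwards [hχ1 z hzs] with w hw
      simp [hF, hw]
    rw [dz_congr e1, dz_anti (hh.differentiableAt (hΩ.mem_nhds hzΩ)).hasDerivAt, e1.eq_of_nhds]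
    simp
  · have e1 : g =ᶠ[𝓝 z] fun _ => 0 := by
      filter_upwards [(isClosed_tsupport g).isOpen_compl.mem_nhds hzs] with w hw
      exact image_eq_zero_of_notMem_tsupport hw
    have e2 : dz g z = 0 := by rw [dz_congr e1]; simp [dz]
    rw [e2, e1.eq_of_nhds]
    simp [indicator, e2]

/-- Green identity: a Lipschitz function vanishing on the frontier. -/
lemma green {Ω : Set ℂ} (hΩ : IsOpen Ω) (hb : Bornology.IsBounded Ω) {h ψ : ℂ → ℂ} {K : ℝ≥0}
    (hh : DifferentiableOn ℂ h Ω) (hi : IntegrableOn h Ω) (hψ : LipschitzWith K ψ)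
    (h0 : ∀ z ∈ frontier Ω, ψ z = 0) : ∫ z in Ω, (starRingEnd ℂ) (h z) * dz ψ z = 0 := by
  have hne : Ω ≠ univ := by
    rintro rfl
    exact NormedSpace.unbounded_univ ℝ ℂ hb
  have hne' : (Ωᶜ).Nonempty := nonempty_compl.2 hne
  have hψd : ∀ z ∈ Ω, ‖ψ z‖ ≤ K * infDist z Ωᶜ := by
    intro z hz
    obtain ⟨y, hy, hy'⟩ := exists_mem_frontier_infDist_compl_eq_dist hz hne
    have := hψ.dist_le_mul z y
    rw [h0 y hy, dist_zero_right] at this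
    rwa [hy']
  have hext : ∀ ε : ℝ, 0 < ε → ∃ g : ℂ → ℂ,
      LipschitzWith (lipschitzExtensionConstant ℂ * (2 * K)) g ∧
      (∀ z, 2 * ε ≤ infDist z Ωᶜ → g z = ψ z) ∧ (∀ z, infDist z Ωᶜ ≤ ε → g z = 0) := by
    intro ε hε
    classical
    let g0 : ℂ → ℂ := fun z => if 2 * ε ≤ infDist z Ωᶜ then ψ z else 0
    have hmem : ∀ z, 2 * ε ≤ infDist z Ωᶜ → z ∈ Ω := by
      intro z hz
      by_contra hn
      have := infDist_zero_of_mem (show z ∈ Ωᶜ from hn)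
      linarith
    have hcross : ∀ z z', 2 * ε ≤ infDist z Ωᶜ → infDist z' Ωᶜ ≤ ε →
        ‖ψ z‖ ≤ 2 * K * dist z z' := by
      intro z z' hz hz'
      have h1 := hψd z (hmem z hz)
      have h2 : infDist z Ωᶜ ≤ infDist z' Ωᶜ + dist z z' := infDist_le_infDist_add_dist
      have h3 : (0 : ℝ) ≤ K := K.2
      nlinarith
    have hl : LipschitzOnWith (2 * K) g0 {z | 2 * ε ≤ infDist z Ωᶜ ∨ infDist z Ωᶜ ≤ ε} := by
      refine LipschitzOnWith.of_dist_le_mul fun z hz z' hz' => ?_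
      push_cast
      have hK : (0 : ℝ) ≤ K := K.2
      rcases hz with hz | hz <;> rcases hz' with hz' | hz'
      · simp only [g0, if_pos hz, if_pos hz']
        have := hψ.dist_le_mul z z'
        have h5 : (0 : ℝ) ≤ dist z z' := dist_nonneg
        nlinarith
      · simp only [g0, if_pos hz, if_neg (by linarith : ¬ (2 * ε ≤ infDist z' Ωᶜ)), dist_zero_right]
        exact hcross z z' hz hz'
      · simp only [g0, if_pos hz', if_neg (by linarith : ¬ (2 * ε ≤ infDist z Ωᶜ)), dist_zero_left]
        rw [dist_comm]
        exact hcross z' z hz' hz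
      · simp only [g0, if_neg (by linarith : ¬ (2 * ε ≤ infDist z Ωᶜ)),
          if_neg (by linarith : ¬ (2 * ε ≤ infDist z' Ωᶜ)), dist_self]
        positivity
    obtain ⟨g, hg, hgeq⟩ := hl.extend_finite_dimension
    refine ⟨g, hg, fun z hz => ?_, fun z hz => ?_⟩
    · rw [← hgeq (Or.inl hz)]; simp only [g0, if_pos hz]
    · rw [← hgeq (Or.inr hz)]; simp only [g0, if_neg (by linarith : ¬ (2 * ε ≤ infDist z Ωᶜ))]
  choose! g hgl hg1 hg0 using hext
  have hzero : ∀ n : ℕ, ∫ z in Ω, (starRingEnd ℂ) (h z) * dz (g (1 / ((n : ℝ) + 1))) z = 0 := by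
    intro n
    have hε : (0 : ℝ) < 1 / ((n : ℝ) + 1) := by positivity
    set ε := 1 / ((n : ℝ) + 1)
    have hsub : tsupport (g ε) ⊆ {z | ε ≤ infDist z Ωᶜ} := by
      refine closure_minimal (fun z hz => ?_) (isClosed_le continuous_const (continuous_infDist_pt _))
      by_contra hn
      exact hz (hg0 ε hε z (le_of_not_ge hn))
    have hsubΩ : {z | ε ≤ infDist z Ωᶜ} ⊆ Ω := by
      intro z hz
      by_contra hn
      have := infDist_zero_of_mem (show z ∈ Ωᶜ from hn)
      have hz' : ε ≤ infDist z Ωᶜ := hz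
      linarith
    refine green_compact hΩ hh (hgl ε hε) ?_ (hsub.trans hsubΩ)
    exact Metric.isCompact_of_isClosed_isBounded (isClosed_tsupport _)
      (hb.subset (hsub.trans hsubΩ))
  have hlim : Tendsto (fun n : ℕ => ∫ z in Ω, (starRingEnd ℂ) (h z) *
      dz (g (1 / ((n : ℝ) + 1))) z) atTop (𝓝 (∫ z in Ω, (starRingEnd ℂ) (h z) * dz ψ z)) := by
    refine tendsto_integral_of_dominated_convergence
      (fun z => ‖h z‖ * (lipschitzExtensionConstant ℂ * (2 * K) : ℝ≥0)) ?_ ?_ ?_ ?_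
    · intro n
      refine AEStronglyMeasurable.mul ?_ (dz_measurable _).aestronglyMeasurable
      exact Complex.continuous_conj.comp_aestronglyMeasurable hi.aestronglyMeasurable
    · exact hi.norm.mul_const _
    · intro n
      refine Eventually.of_forall fun z => ?_
      rw [norm_mul, RCLike.norm_conj]
      exact mul_le_mul_of_nonneg_left (dz_norm_le (hgl _ (by positivity)) z) (norm_nonneg _)
    · refine (ae_restrict_mem hΩ.measurableSet).mono fun z hz => ?_
      have hpos : 0 < infDist z Ωᶜ :=
        (hΩ.isClosed_compl.notMem_iff_infDist_pos hne').1 (by simpa using hz)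
      have h1 : Tendsto (fun n : ℕ => 2 * (1 / ((n : ℝ) + 1))) atTop (𝓝 0) := by
        simpa using (tendsto_one_div_add_atTop_nhds_zero_nat (𝕜 := ℝ)).const_mul 2
      refine tendsto_const_nhds.congr' ?_
      filter_upwards [h1.eventually_lt_const hpos] with n hn
      congr 1
      refine (dz_congr ?_).symm
      filter_upwards [(isOpen_lt continuous_const (continuous_infDist_pt Ωᶜ)).mem_nhds hn] with w hw
      exact hg1 _ (by positivity) w (le_of_lt hw)
  simp only [hzero] at hlim
  exact (tendsto_nhds_unique hlim tendsto_const_nhds)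

end SDB


namespace SDB
open MeasureTheory Set Filter Topology Metric
open scoped NNReal

lemma circle_inner {h : ℂ → ℂ} {a : ℂ} {r : ℝ} (hr : 0 < r) (m : ℕ)
    (hh : DifferentiableOn ℂ h (closedBall a r)) :
    ∫ θ in (-Real.pi)..Real.pi, h (circleMap a r θ) * (starRingEnd ℂ) (circleMap 0 r θ) ^ m =
      2 * Real.pi * r ^ (2 * m) / m.factorial * iteratedDeriv m h a := by
  have h1 := hh.circleIntegral_one_div_sub_center_pow_smul hr m
  have hp : Function.Periodic (fun θ => h (circleMap a r θ) * (starRingEnd ℂ) (circleMap 0 r θ) ^ m)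
      (2 * Real.pi) := by
    intro θ
    simp only [(periodic_circleMap a r) θ, (periodic_circleMap 0 r) θ]
  have h2 := hp.intervalIntegral_add_eq (-Real.pi) 0
  have e1 : -Real.pi + 2 * Real.pi = Real.pi := by ring
  rw [e1, zero_add] at h2
  rw [h2]
  have hI : (Complex.I) ≠ 0 := Complex.I_ne_zero
  have hr' : (r : ℂ) ≠ 0 := by exact_mod_cast hr.ne'
  have h3 : ∀ θ : ℝ, h (circleMap a r θ) * (starRingEnd ℂ) (circleMap 0 r θ) ^ m =
      (r ^ (2 * m) / Complex.I) * (deriv (circleMap a r) θ •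
        ((1 / (circleMap a r θ - a) ^ (m + 1)) • h (circleMap a r θ))) := by
    intro θ
    have h4 : circleMap a r θ - a = circleMap 0 r θ := by simp [circleMap]
    have h5 : circleMap 0 r θ ≠ 0 := by simp [circleMap, hr']
    have h6 : (starRingEnd ℂ) (circleMap 0 r θ) = r ^ 2 / circleMap 0 r θ := by
      rw [eq_div_iff h5, mul_comm, Complex.mul_conj, Complex.normSq_eq_norm_sq]
      simp
    rw [h4, h6, deriv_circleMap]
    simp only [smul_eq_mul, div_pow]
    field_simp
    try ring
  simp_rw [h3]
  rw [intervalIntegral.integral_const_mul]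
  rw [circleIntegral] at h1
  rw [h1, smul_eq_mul]
  field_simp

lemma area_formula {h : ℂ → ℂ} {a : ℂ} {ρ : ℝ} (hρ : 0 < ρ) (m : ℕ)
    (hh : DifferentiableOn ℂ h (closedBall a ρ)) :
    ∫ z in ball a ρ, h z * (starRingEnd ℂ) (z - a) ^ m =
      Real.pi * ρ ^ (2 * m + 2) / ((m + 1) * m.factorial) * iteratedDeriv m h a := by
  set G : ℂ → ℂ := fun z => h z * (starRingEnd ℂ) (z - a) ^ m with hG
  have hGc : ContinuousOn G (closedBall a ρ) := by
    refine hh.continuousOn.mul (Continuous.continuousOn ?_)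
    exact (Complex.continuous_conj.comp (continuous_id.sub continuous_const)).pow _
  have t1 : ∫ z in ball a ρ, G z = ∫ u, (ball (0:ℂ) ρ).indicator (fun u => G (a + u)) u := by
    rw [← integral_indicator measurableSet_ball, ← integral_add_left_eq_self _ a]
    congr 1
    ext u
    simp only [indicator, mem_ball, dist_eq_norm]
    simp
  rw [t1, ← Complex.integral_comp_polarCoord_symm, polarCoord_target]
  have t2 : ∀ p ∈ Ioi (0:ℝ) ×ˢ Ioo (-Real.pi) Real.pi,
      p.1 • (ball (0:ℂ) ρ).indicator (fun u => G (a + u)) (Complex.polarCoord.symm p) =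
      (Ioo (0:ℝ) ρ ×ˢ Ioo (-Real.pi) Real.pi).indicator (fun p => p.1 • G (circleMap a p.1 p.2)) p := by
    rintro ⟨r, θ⟩ ⟨hr, hθ⟩
    have e : Complex.polarCoord.symm (r, θ) = circleMap 0 r θ := by
      rw [Complex.polarCoord_symm_apply]
      simp [circleMap, Complex.exp_mul_I]
    have hn : ‖circleMap 0 r θ‖ = r := by
      have hr0 : 0 < r := hr
      simpa using abs_of_pos hr0
    rw [e]
    have e2 : a + circleMap 0 r θ = circleMap a r θ := by simp [circleMap]
    by_cases hrr : r < ρ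
    · rw [indicator_of_mem (by simpa [hn] using hrr), indicator_of_mem (by exact ⟨⟨hr, hrr⟩, hθ⟩), e2]
    · rw [indicator_of_notMem (by simpa [hn] using hrr), indicator_of_notMem (fun h' => hrr h'.1.2)]
      simp
  rw [setIntegral_congr_fun (measurableSet_Ioi.prod measurableSet_Ioo) t2,
    setIntegral_indicator (measurableSet_Ioo.prod measurableSet_Ioo)]
  have e3 : Ioi (0:ℝ) ×ˢ Ioo (-Real.pi) Real.pi ∩ Ioo (0:ℝ) ρ ×ˢ Ioo (-Real.pi) Real.pi =
      Ioo (0:ℝ) ρ ×ˢ Ioo (-Real.pi) Real.pi :=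
    inter_eq_right.2 (prod_mono (fun x hx => hx.1) le_rfl)
  rw [e3]
  have hcont : ContinuousOn (fun p : ℝ × ℝ => p.1 • G (circleMap a p.1 p.2))
      (Icc (0:ℝ) ρ ×ˢ Icc (-Real.pi) Real.pi) := by
    refine continuous_fst.continuousOn.smul (hGc.comp ?_ ?_)
    · unfold circleMap; fun_prop
    · rintro ⟨r, θ⟩ ⟨hr, hθ⟩
      simp only [mem_closedBall, dist_eq_norm]
      have : circleMap a r θ - a = circleMap 0 r θ := by simp [circleMap]
      rw [this]
      simpa [abs_of_nonneg hr.1] using hr.2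
  have hintg : IntegrableOn (fun p : ℝ × ℝ => p.1 • G (circleMap a p.1 p.2))
      (Ioo (0:ℝ) ρ ×ˢ Ioo (-Real.pi) Real.pi) (volume.prod volume) :=
    (hcont.integrableOn_compact (isCompact_Icc.prod isCompact_Icc)).mono_set
      (prod_mono Ioo_subset_Icc_self Ioo_subset_Icc_self)
  rw [Measure.volume_eq_prod, setIntegral_prod _ hintg]
  have hin : ∀ r ∈ Ioo (0:ℝ) ρ, ∫ θ in Ioo (-Real.pi) Real.pi, r • G (circleMap a r θ) =
      (r:ℂ) ^ (2 * m + 1) * (2 * Real.pi / m.factorial * iteratedDeriv m h a) := by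
    intro r hr
    have := circle_inner hr.1 m (hh.mono (closedBall_subset_closedBall hr.2.le))
    rw [intervalIntegral.integral_of_le (by linarith [Real.pi_pos]), integral_Ioc_eq_integral_Ioo] at this
    rw [integral_smul]
    have e4 : ∀ θ, G (circleMap a r θ) =
        h (circleMap a r θ) * (starRingEnd ℂ) (circleMap 0 r θ) ^ m := by
      intro θ; simp [hG, circleMap]
    simp_rw [e4]
    rw [this]
    simp only [Complex.real_smul]
    ring
  rw [setIntegral_congr_fun measurableSet_Ioo hin, integral_mul_const,
    ← integral_Ioc_eq_integral_Ioo, ← intervalIntegral.integral_of_le hρ.le]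
  have e5 : ∫ r in (0:ℝ)..ρ, (r:ℂ) ^ (2 * m + 1) = ((ρ ^ (2 * m + 2) / (2 * m + 2) : ℝ) : ℂ) := by
    have : ∀ r : ℝ, (r:ℂ) ^ (2 * m + 1) = ((r ^ (2 * m + 1) : ℝ) : ℂ) := by intro r; push_cast; rfl
    simp_rw [this]
    rw [intervalIntegral.integral_ofReal, integral_pow]
    congr 1
    push_cast
    simp
    ring_nf
  rw [e5]
  push_cast
  have : ((m:ℂ) + 1) ≠ 0 := by exact_mod_cast Nat.succ_ne_zero m
  have h2 : ((2:ℂ) * m + 2) = 2 * (m + 1) := by ring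
  rw [h2]
  field_simp

end SDB


namespace SDB
open MeasureTheory Set Filter Topology Metric
open scoped NNReal

/-- Regularised kernel: equals `1 / conj u` for `‖u‖ ≥ ρ`. -/
noncomputable def sk (ρ : ℝ) (u : ℂ) : ℂ := u / ((max ‖u‖ ρ : ℝ) : ℂ) ^ 2

lemma sk_norm {ρ : ℝ} (hρ : 0 < ρ) (u : ℂ) : ‖sk ρ u‖ ≤ 1 / ρ := by
  unfold sk
  have h1 : 0 < max ‖u‖ ρ := lt_max_of_lt_right hρ
  rw [norm_div, norm_pow, Complex.norm_real, Real.norm_of_nonneg h1.le, div_le_div_iff₀ (by positivity) hρ]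
  nlinarith [le_max_left ‖u‖ ρ, le_max_right ‖u‖ ρ, norm_nonneg u]

lemma sk_lip {ρ : ℝ} (hρ : 0 < ρ) : LipschitzWith (3 / ρ ^ 2).toNNReal (sk ρ) := by
  refine LipschitzWith.of_dist_le_mul fun u v => ?_
  rw [Real.coe_toNNReal _ (by positivity), dist_eq_norm, dist_eq_norm]
  unfold sk
  set M := max ‖u‖ ρ
  set N := max ‖v‖ ρ
  have hM : ρ ≤ M := le_max_right _ _
  have hN : ρ ≤ N := le_max_right _ _
  have hv : ‖v‖ ≤ N := le_max_left _ _
  have hM0 : 0 < M := hρ.trans_le hM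
  have hN0 : 0 < N := hρ.trans_le hN
  have hMN : |N - M| ≤ ‖u - v‖ := by
    rw [abs_sub_comm]
    have := abs_max_sub_max_le_abs ‖u‖ ‖v‖ ρ
    exact this.trans (abs_norm_sub_norm_le u v)
  have hMc : (M:ℂ) ≠ 0 := by exact_mod_cast hM0.ne'
  have hNc : (N:ℂ) ≠ 0 := by exact_mod_cast hN0.ne'
  have e : u / (M:ℂ)^2 - v / (N:ℂ)^2 = (u - v) / (M:ℂ)^2 + v * (((N - M) * (N + M) / (M^2 * N^2) : ℝ) : ℂ) := by
    push_cast
    field_simp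
    ring
  rw [e]
  refine (norm_add_le _ _).trans ?_
  rw [norm_div, norm_pow, norm_mul, Complex.norm_real, Complex.norm_real, Real.norm_of_nonneg hM0.le,
    Real.norm_eq_abs, abs_div, abs_mul, abs_of_pos (by positivity : 0 < N + M),
    abs_of_pos (by positivity : 0 < M^2 * N^2)]
  have h1 : ‖u - v‖ / M^2 ≤ ‖u - v‖ / ρ^2 := by gcongr
  have h2 : ‖v‖ * (|N - M| * (N + M) / (M^2 * N^2)) ≤ ‖u - v‖ * (2 / ρ^2) := by
    calc ‖v‖ * (|N - M| * (N + M) / (M^2 * N^2)) ≤ N * (‖u - v‖ * (N + M) / (M^2 * N^2)) := by gcongr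
      _ = ‖u - v‖ * (1 / M^2 + 1 / (M * N)) := by field_simp
      _ ≤ ‖u - v‖ * (1 / ρ^2 + 1 / (ρ * ρ)) := by gcongr
      _ = _ := by ring
  calc _ ≤ ‖u - v‖ / ρ^2 + ‖u - v‖ * (2 / ρ^2) := add_le_add h1 h2
    _ = _ := by ring

lemma sk_pow_lip {ρ : ℝ} (hρ : 0 < ρ) (a : ℂ) (j : ℕ) :
    ∃ K : ℝ≥0, LipschitzWith K (fun z => sk ρ (z - a) ^ j) := by
  have hs : LipschitzWith ((3 / ρ ^ 2).toNNReal * 1) (fun z => sk ρ (z - a)) :=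
    (sk_lip hρ).comp (LipschitzWith.of_dist_le_mul (K := 1) fun x y => by simp)
  have hb : ∀ u : ℂ, ‖sk ρ (u - a)‖ ≤ (1 / ρ).toNNReal := fun u => by
    rw [Real.coe_toNNReal _ (by positivity)]; exact sk_norm hρ _
  induction j with
  | zero => exact ⟨0, by simp⟩
  | succ n ih =>
    obtain ⟨K, hK⟩ := ih
    simp_rw [pow_succ]
    have key := lip_mul_bdd hK hs (A := (1 / ρ).toNNReal ^ n) (fun z => by
      rw [norm_pow]; push_cast
      exact pow_le_pow_left₀ (norm_nonneg _) (hb z) n) hb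
    exact ⟨_, key⟩

lemma sk_out {ρ : ℝ} (hρ : 0 < ρ) {u : ℂ} (hu : ρ ≤ ‖u‖) : sk ρ u = ((starRingEnd ℂ) u)⁻¹ := by
  unfold sk
  have hu0 : u ≠ 0 := norm_pos_iff.1 (hρ.trans_le hu)
  rw [max_eq_left hu, ← Complex.ofReal_pow, ← Complex.normSq_eq_norm_sq, ← Complex.mul_conj]
  have : (starRingEnd ℂ) u ≠ 0 := by simpa using hu0
  field_simp

lemma sk_in {ρ : ℝ} {u : ℂ} (hu : ‖u‖ ≤ ρ) : sk ρ u = u / ρ ^ 2 := by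
  unfold sk
  rw [max_eq_right hu]

lemma dz_sk_pow {ρ : ℝ} (hρ : 0 < ρ) (a : ℂ) (j : ℕ) {z : ℂ} (hz : z ∉ sphere a ρ) :
    dz (fun z => sk ρ (z - a) ^ (j + 1)) z =
      (ball a ρ).indicator (fun z => ((j:ℂ) + 1) * (z - a) ^ j / ρ ^ (2 * j + 2)) z := by
  have hρc : (ρ:ℂ) ≠ 0 := by exact_mod_cast hρ.ne'
  by_cases hb : z ∈ ball a ρ
  · rw [indicator_of_mem hb]
    have e : (fun z => sk ρ (z - a) ^ (j + 1)) =ᶠ[𝓝 z] fun z => ((z - a) / ρ ^ 2) ^ (j + 1) := by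
      filter_upwards [isOpen_ball.mem_nhds hb] with w hw
      rw [sk_in]
      rw [mem_ball, dist_eq_norm] at hw
      exact hw.le
    rw [dz_congr e]
    have hd : HasDerivAt (fun z => ((z - a) / (ρ:ℂ) ^ 2) ^ (j + 1))
        (((j + 1 : ℕ) : ℂ) * ((z - a) / ρ ^ 2) ^ j * (1 / ρ ^ 2)) z := by
      have := (((hasDerivAt_id z).sub_const a).div_const ((ρ:ℂ)^2)).fun_pow (j + 1)
      simpa using this
    rw [dz_hol hd, div_pow]
    push_cast
    field_simp
    try ring
  · rw [indicator_of_notMem hb]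
    have hz' : z ∈ (closedBall a ρ)ᶜ := by
      intro h
      rw [mem_closedBall] at h
      rw [mem_ball] at hb
      exact hz (le_antisymm h (not_lt.1 hb))
    have e : (fun z => sk ρ (z - a) ^ (j + 1)) =ᶠ[𝓝 z]
        fun z => (starRingEnd ℂ) (((z - a)⁻¹) ^ (j + 1)) := by
      filter_upwards [isClosed_closedBall.isOpen_compl.mem_nhds hz'] with w hw
      rw [sk_out hρ]
      · simp
      · have hw' : ¬ dist w a ≤ ρ := hw
        rw [dist_eq_norm] at hw'
        exact (not_le.1 hw').le
    rw [dz_congr e]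
    have hza : z - a ≠ 0 := by
      intro h
      apply hz'
      rw [sub_eq_zero] at h
      rw [h]
      exact mem_closedBall_self hρ.le
    have hd : DifferentiableAt ℂ (fun z => ((z - a)⁻¹) ^ (j + 1)) z := by
      fun_prop (disch := assumption)
    exact dz_anti hd.hasDerivAt

lemma moment {Ω : Set ℂ} {h : ℂ → ℂ} (hh : DifferentiableOn ℂ h Ω) {a : ℂ} {ρ : ℝ}
    (hρ : 0 < ρ) (hb : closedBall a ρ ⊆ Ω) (j : ℕ) :
    ∫ z in Ω, (starRingEnd ℂ) (h z) * dz (fun z => sk ρ (z - a) ^ (j + 1)) z =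
      Real.pi / j.factorial * (starRingEnd ℂ) (iteratedDeriv j h a) := by
  have hρc : (ρ:ℂ) ≠ 0 := by exact_mod_cast hρ.ne'
  have h1 : ∫ z in Ω, (starRingEnd ℂ) (h z) * dz (fun z => sk ρ (z - a) ^ (j + 1)) z =
      ∫ z in Ω, (ball a ρ).indicator (fun z => (((j:ℂ) + 1) / ρ ^ (2 * j + 2)) *
        (starRingEnd ℂ) (h z * (starRingEnd ℂ) (z - a) ^ j)) z := by
    refine integral_congr_ae (ae_restrict_of_ae ?_)
    have hnull : (volume : Measure ℂ) (sphere a ρ) = 0 := Measure.addHaar_sphere _ _ _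
    filter_upwards [measure_eq_zero_iff_ae_notMem.1 hnull] with z hz
    rw [dz_sk_pow hρ a j hz]
    by_cases hzb : z ∈ ball a ρ
    · rw [indicator_of_mem hzb, indicator_of_mem hzb]
      simp only [map_mul, map_pow, Complex.conj_conj]
      ring
    · rw [indicator_of_notMem hzb, indicator_of_notMem hzb, mul_zero]
  rw [h1, setIntegral_indicator measurableSet_ball,
    inter_eq_right.2 (ball_subset_closedBall.trans hb), integral_const_mul, integral_conj,
    area_formula hρ j (hh.mono hb)]
  simp only [map_mul, map_div₀, map_pow, Complex.conj_ofReal, map_add, map_natCast, map_one]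
  have : ((j:ℂ) + 1) ≠ 0 := by exact_mod_cast Nat.succ_ne_zero j
  have h3 : ((j.factorial : ℕ) : ℂ) ≠ 0 := by exact_mod_cast j.factorial_ne_zero
  field_simp

lemma interior_bound {Ω : Set ℂ} {h : ℂ → ℂ} (hh : DifferentiableOn ℂ h Ω)
    (hi : IntegrableOn h Ω) {a : ℂ} {ρ : ℝ} (hρ : 0 < ρ) (hb : closedBall a ρ ⊆ Ω)
    (m : ℕ) : ‖iteratedDeriv m h a‖ ≤
      ((m + 1) * m.factorial / (Real.pi * ρ ^ (m + 2))) * ∫ z in Ω, ‖h z‖ := by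
  have h1 := area_formula hρ m (hh.mono hb)
  have h2 : ‖∫ z in ball a ρ, h z * (starRingEnd ℂ) (z - a) ^ m‖ ≤ ρ ^ m * ∫ z in Ω, ‖h z‖ := by
    have hsub := ball_subset_closedBall.trans hb
    have hi' := hi.mono_set hsub
    refine (norm_integral_le_integral_norm _).trans ?_
    calc ∫ z in ball a ρ, ‖h z * (starRingEnd ℂ) (z - a) ^ m‖ ≤ ∫ z in ball a ρ, ρ ^ m * ‖h z‖ := by
          refine setIntegral_mono_on₀ ?_ (hi'.norm.const_mul _) measurableSet_ball.nullMeasurableSet ?_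
          · have := hi'.norm.const_mul (ρ ^ m)
            refine this.mono' ?_ ?_
            · refine (hi'.aestronglyMeasurable.mul (Continuous.aestronglyMeasurable ?_)).norm
              exact (Complex.continuous_conj.comp (continuous_id.sub continuous_const)).pow _
            · filter_upwards [ae_restrict_mem measurableSet_ball] with z hz
              rw [mem_ball, dist_eq_norm] at hz
              simp only [norm_norm, norm_mul, norm_pow, RCLike.norm_conj]
              rw [mul_comm]
              gcongr
          · intro z hz
            rw [mem_ball, dist_eq_norm] at hz
            rw [norm_mul, norm_pow, RCLike.norm_conj, mul_comm]
            gcongr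
      _ = ρ ^ m * ∫ z in ball a ρ, ‖h z‖ := integral_const_mul _ _
      _ ≤ ρ ^ m * ∫ z in Ω, ‖h z‖ := by
          refine mul_le_mul_of_nonneg_left ?_ (by positivity)
          exact setIntegral_mono_set hi.norm (Eventually.of_forall fun _ => norm_nonneg _)
            hsub.eventuallyLE
  rw [h1] at h2
  have hc : ‖(Real.pi * ρ ^ (2 * m + 2) / (((m:ℂ) + 1) * m.factorial) : ℂ)‖ =
      Real.pi * ρ ^ (2 * m + 2) / ((m + 1) * m.factorial) := by
    have : (Real.pi * ρ ^ (2 * m + 2) / (((m:ℂ) + 1) * m.factorial) : ℂ) =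
      ((Real.pi * ρ ^ (2 * m + 2) / ((m + 1) * m.factorial) : ℝ) : ℂ) := by push_cast; rfl
    rw [this, Complex.norm_real, Real.norm_of_nonneg (by positivity)]
  rw [norm_mul, hc] at h2
  have hf : (0:ℝ) < m.factorial := by exact_mod_cast m.factorial_pos
  have hpi := Real.pi_pos
  have h4 : Real.pi * ρ ^ (2 * m + 2) / ((m + 1) * m.factorial) =
    ρ ^ m * (Real.pi * ρ ^ (m + 2) / ((m + 1) * m.factorial)) := by ring
  rw [h4, mul_assoc] at h2
  have h5 := le_of_mul_le_mul_left h2 (by positivity)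
  calc ‖iteratedDeriv m h a‖ = ((m + 1) * m.factorial / (Real.pi * ρ ^ (m + 2))) *
        (Real.pi * ρ ^ (m + 2) / ((m + 1) * m.factorial) * ‖iteratedDeriv m h a‖) := by
        field_simp
    _ ≤ _ := by gcongr

lemma cauchy_kernel_deriv {Ω : Set ℂ} {f : ℂ → ℂ} (hi : IntegrableOn f Ω) (hΩ : MeasurableSet Ω) (k : ℕ)
    {w : ℂ} (hw : w ∉ closure Ω) :
    HasDerivAt (fun w => ∫ z in Ω, f z / (z - w) ^ (k + 1))
      (((k:ℂ) + 1) * ∫ z in Ω, f z / (z - w) ^ (k + 2)) w := by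
  obtain ⟨δ, hδ, hball⟩ := Metric.isOpen_iff.1 isClosed_closure.isOpen_compl w hw
  have hdist : ∀ z ∈ Ω, ∀ x ∈ ball w (δ / 2), δ / 2 ≤ ‖z - x‖ := by
    intro z hz x hx
    by_contra hn
    push Not at hn
    have : z ∈ ball w δ := by
      rw [mem_ball] at hx ⊢
      rw [← dist_eq_norm] at hn
      linarith [dist_triangle z x w]
    exact hball this (subset_closure hz)
  rw [← integral_const_mul]
  have hmeas : ∀ x : ℂ, ∀ n : ℕ, AEStronglyMeasurable (fun z => f z / (z - x) ^ n) (volume.restrict Ω) := by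
    intro x n
    have hm : Measurable (fun z : ℂ => ((z - x) ^ n)⁻¹) := by fun_prop
    simp_rw [div_eq_mul_inv]
    exact hi.aestronglyMeasurable.mul hm.aestronglyMeasurable
  have hbd : ∀ n : ℕ, ∀ z ∈ Ω, ∀ x ∈ ball w (δ / 2), ‖f z / (z - x) ^ n‖ ≤ ‖f z‖ / (δ / 2) ^ n := by
    intro n z hz x hx
    rw [norm_div, norm_pow]
    have := hdist z hz x hx
    gcongr
  refine (hasDerivAt_integral_of_dominated_loc_of_deriv_le (μ := volume.restrict Ω)
    (F := fun w z => f z / (z - w) ^ (k + 1))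
    (F' := fun w z => ((k:ℂ) + 1) * (f z / (z - w) ^ (k + 2)))
    (bound := fun z => ((k:ℝ) + 1) * (‖f z‖ / (δ / 2) ^ (k + 2)))
    (ball_mem_nhds w (half_pos hδ)) ?_ ?_ ?_ ?_ ?_ ?_).2
  · exact Eventually.of_forall fun x => hmeas x _
  · refine (hi.norm.div_const ((δ/2)^(k+1))).mono' (hmeas w _) ?_
    filter_upwards [ae_restrict_mem hΩ] with z hz
    exact hbd _ z hz w (mem_ball_self (half_pos hδ))
  · exact (hmeas w _).const_mul _
  · filter_upwards [ae_restrict_mem hΩ] with z hz x hx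
    rw [norm_mul]
    have : ‖(k:ℂ) + 1‖ = (k:ℝ) + 1 := by
      have e : (k:ℂ) + 1 = ((k + 1 : ℕ) : ℂ) := by push_cast; rfl
      rw [e, Complex.norm_natCast]; push_cast; rfl
    rw [this]
    have := hbd (k+2) z hz x hx
    gcongr
  · exact (hi.norm.div_const _).const_mul _
  · filter_upwards [ae_restrict_mem hΩ] with z hz x hx
    have hne : z - x ≠ 0 := norm_pos_iff.1 ((half_pos hδ).trans_le (hdist z hz x hx))
    have h1 : HasDerivAt (fun x => (z - x) ^ (k + 1)) (((k + 1 : ℕ) : ℂ) * (z - x) ^ k * (-1)) x := by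
      have := ((hasDerivAt_id x).const_sub z).fun_pow (k + 1)
      simpa using this
    have h2 := (hasDerivAt_const x (f z)).fun_div h1 (pow_ne_zero _ hne)
    refine h2.congr_deriv ?_
    push_cast
    field_simp
    ring

lemma iteratedDeriv_cauchy {Ω : Set ℂ} {f : ℂ → ℂ} (hi : IntegrableOn f Ω) (hΩ : MeasurableSet Ω)
    {H : ℂ → ℂ} (hH : ∀ w ∉ closure Ω, H w = ∫ z in Ω, f z / (z - w)) (k : ℕ) :
    ∀ w ∉ closure Ω, iteratedDeriv k H w = k.factorial * ∫ z in Ω, f z / (z - w) ^ (k + 1) := by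
  induction k with
  | zero => intro w hw; simpa using hH w hw
  | succ n ih =>
    intro w hw
    rw [iteratedDeriv_succ]
    have e : iteratedDeriv n H =ᶠ[𝓝 w] fun w => n.factorial * ∫ z in Ω, f z / (z - w) ^ (n + 1) := by
      filter_upwards [isClosed_closure.isOpen_compl.mem_nhds hw] with x hx
      exact ih x hx
    rw [e.deriv_eq, ((cauchy_kernel_deriv hi hΩ n hw).const_mul _).deriv, Nat.factorial_succ]
    push_cast
    ring

end SDB


namespace SDB
open MeasureTheory Set Filter Topology Metric
open scoped NNReal

lemma lip_mul_integrable {Ω : Set ℂ} {f g : ℂ → ℂ} {K : ℝ≥0} (hi : IntegrableOn f Ω)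
    (hg : LipschitzWith K g) : IntegrableOn (fun z => f z * dz g z) Ω := by
  have := hi.norm.mul_const (K:ℝ)
  refine this.mono' (hi.aestronglyMeasurable.mul (dz_measurable _).aestronglyMeasurable) ?_
  refine Eventually.of_forall fun z => ?_
  rw [norm_mul]
  exact mul_le_mul_of_nonneg_left (dz_norm_le hg z) (norm_nonneg _)

lemma near_boundary {Ω : Set ℂ} (hΩ : IsOpen Ω) (hb : Bornology.IsBounded Ω) {h H : ℂ → ℂ}
    (hh : DifferentiableOn ℂ h Ω) (hi : IntegrableOn h Ω)
    (hH : ∀ w ∉ closure Ω, H w = ∫ z in Ω, (starRingEnd ℂ) (h z) / (z - w))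
    {a w : ℂ} (ha : a ∈ Ω) (hw : w ∉ closure Ω) (m : ℕ) (D : ℕ → ℂ) {C : ℝ} (hC : 0 < C)
    (hD : ∀ j ≤ m, ‖D j‖ ≤ C) (hDm : 1 / C ≤ ‖D m‖)
    (hE : ∀ z ∈ frontier Ω, ∀ z' ∈ frontier Ω,
      ‖(((z - w) ^ (m + 1))⁻¹ - ∑ j ∈ Finset.range (m + 1), D j * ((starRingEnd ℂ) (z - a) ^ (j + 1))⁻¹) -
       (((z' - w) ^ (m + 1))⁻¹ - ∑ j ∈ Finset.range (m + 1), D j * ((starRingEnd ℂ) (z' - a) ^ (j + 1))⁻¹)‖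
        ≤ C * ‖z - z'‖) {B : ℝ} (hB : ‖iteratedDeriv (m + 1) H w‖ ≤ B) :
    ‖iteratedDeriv m h a‖ ≤ C * m.factorial * (B + lipschitzExtensionConstant ℂ * C * (∫ z in Ω, ‖h z‖)
      + 4 * C * ∑ j ∈ Finset.range m, ‖iteratedDeriv j h a‖) := by
  obtain ⟨ρ0, hρ0, hball⟩ := Metric.isOpen_iff.1 hΩ a ha
  obtain ⟨ρ, hρ, hcb⟩ : ∃ ρ > 0, closedBall a ρ ⊆ Ω :=
    ⟨ρ0 / 2, half_pos hρ0, (closedBall_subset_ball (half_lt_self hρ0)).trans hball⟩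
  obtain ⟨δ, hδ, hball2⟩ := Metric.isOpen_iff.1 isClosed_closure.isOpen_compl w hw
  have hfar : ∀ z ∈ closure Ω, δ ≤ ‖z - w‖ := by
    intro z hz
    by_contra hn
    rw [← dist_eq_norm] at hn
    exact hball2 (mem_ball.2 (not_le.1 hn)) hz
  have hfra : ∀ z ∈ frontier Ω, ρ ≤ ‖z - a‖ := by
    intro z hz
    by_contra hn
    rw [← dist_eq_norm] at hn
    have : z ∈ Ω := hcb (mem_closedBall.2 (not_le.1 hn).le)
    rw [hΩ.frontier_eq] at hz
    exact hz.2 this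
  set E : ℂ → ℂ := fun z => ((z - w) ^ (m + 1))⁻¹ -
    ∑ j ∈ Finset.range (m + 1), D j * ((starRingEnd ℂ) (z - a) ^ (j + 1))⁻¹ with hEdef
  have hElip : LipschitzOnWith C.toNNReal E (frontier Ω) := by
    refine LipschitzOnWith.of_dist_le_mul fun z hz z' hz' => ?_
    rw [dist_eq_norm, dist_eq_norm, Real.coe_toNNReal _ hC.le]
    exact hE z hz z' hz'
  obtain ⟨L, hL, hLE⟩ := hElip.extend_finite_dimension
  obtain ⟨K1, hK1⟩ := sk_pow_lip (half_pos hδ) w (m + 1)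
  set P : ℂ → ℂ := fun z => (starRingEnd ℂ) (sk (δ / 2) (z - w) ^ (m + 1)) with hP
  have hPl : LipschitzWith K1 P := by
    refine LipschitzWith.of_dist_le_mul fun x y => ?_
    rw [hP, dist_eq_norm, ← map_sub, RCLike.norm_conj, ← dist_eq_norm]
    exact hK1.dist_le_mul x y
  have hPe : ∀ z, δ / 2 ≤ ‖z - w‖ → P z = ((z - w) ^ (m + 1))⁻¹ := by
    intro z hz
    simp only [hP]
    rw [sk_out (half_pos hδ) hz]
    simp
  choose Ks hKs using fun j : ℕ => sk_pow_lip hρ a (j + 1)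
  set S : ℂ → ℂ := fun z => ∑ j ∈ Finset.range (m + 1), D j * sk ρ (z - a) ^ (j + 1) with hS
  obtain ⟨KS, hKS⟩ : ∃ K, LipschitzWith K S := by
    simp only [hS]
    refine Finset.sum_induction (fun j z => D j * sk ρ (z - a) ^ (j + 1))
      (fun F : ℂ → ℂ => ∃ K, LipschitzWith K F) ?_ ?_ ?_ |> fun h => by
        simpa only [Finset.sum_fn] using h
    · rintro F G ⟨K, hK⟩ ⟨K', hK'⟩
      exact ⟨_, hK.add hK'⟩
    · exact ⟨0, LipschitzWith.const _⟩
    · intro j _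
      have : LipschitzWith (‖D j‖₊ * Ks j) (fun z => D j * sk ρ (z - a) ^ (j + 1)) :=
        (lipschitzWith_smul (D j)).comp (hKs j)
      exact ⟨_, this⟩
  have hψ : LipschitzWith (K1 + KS + lipschitzExtensionConstant ℂ * C.toNNReal)
      (fun z => P z - S z - L z) := (hPl.sub hKS).sub hL
  have hψ0 : ∀ z ∈ frontier Ω, P z - S z - L z = 0 := by
    intro z hz
    rw [hPe z (by linarith [hfar z (frontier_subset_closure hz)]), ← hLE hz]
    simp only [hEdef, hS]
    have : ∀ j, sk ρ (z - a) ^ (j + 1) = ((starRingEnd ℂ) (z - a) ^ (j + 1))⁻¹ := by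
      intro j
      rw [sk_out hρ (hfra z hz), inv_pow]
    simp_rw [this]
    ring
  have hgreen := green hΩ hb hh hi hψ hψ0
  have hic : IntegrableOn (fun z => (starRingEnd ℂ) (h z)) Ω :=
    hi.norm.mono' (Complex.continuous_conj.comp_aestronglyMeasurable hi.aestronglyMeasurable)
      (Eventually.of_forall fun z => by simp)
  have hdec : ∫ z in Ω, (starRingEnd ℂ) (h z) * dz (fun z => P z - S z - L z) z =
      (∫ z in Ω, (starRingEnd ℂ) (h z) * dz P z) -
      (∑ j ∈ Finset.range (m + 1), D j *
        ∫ z in Ω, (starRingEnd ℂ) (h z) * dz (fun z => sk ρ (z - a) ^ (j + 1)) z) -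
      ∫ z in Ω, (starRingEnd ℂ) (h z) * dz L z := by
    have i1 := lip_mul_integrable hic hPl
    have i2 := lip_mul_integrable hic hL
    have i3 := fun j => (lip_mul_integrable hic (hKs j)).const_mul (D j)
    have i4 := integrable_finsetSum (Finset.range (m + 1)) (fun j _ => i3 j)
    have i5 : Integrable (fun z => (starRingEnd ℂ) (h z) * dz P z - ∑ i ∈ Finset.range (m + 1),
        D i * ((starRingEnd ℂ) (h z) * dz (fun z => sk ρ (z - a) ^ (i + 1)) z)) (volume.restrict Ω) :=
      i1.sub i4
    simp_rw [← integral_const_mul]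
    rw [← integral_finsetSum _ (fun j _ => i3 j), ← integral_sub i1 i4, ← integral_sub i5 i2]
    refine integral_congr_ae (ae_restrict_of_ae ?_)
    have hae : ∀ᵐ z : ℂ, ∀ j : ℕ, DifferentiableAt ℝ (fun z => sk ρ (z - a) ^ (j + 1)) z :=
      ae_all_iff.2 fun j => (hKs j).ae_differentiableAt
    filter_upwards [hPl.ae_differentiableAt (μ := (volume : Measure ℂ)),
      hL.ae_differentiableAt (μ := (volume : Measure ℂ)), hae,
      hKS.ae_differentiableAt (μ := (volume : Measure ℂ))] with z h1 h2 h3 h4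
    rw [dz_sub (h1.fun_sub h4) h2, dz_sub h1 h4]
    simp only [hS]
    rw [dz_sum _ (fun j _ => (h3 j).const_mul (D j))]
    simp_rw [fun j => dz_const_mul (D j) (h3 j)]
    rw [mul_sub, mul_sub, Finset.mul_sum]
    congr 2
    refine Finset.sum_congr rfl fun j _ => ?_
    ring
  have hPint : ∫ z in Ω, (starRingEnd ℂ) (h z) * dz P z = -(iteratedDeriv (m + 1) H w / m.factorial) := by
    have e := iteratedDeriv_cauchy hic hΩ.measurableSet hH (m + 1) w hw
    rw [e, Nat.factorial_succ]
    have h3 : ((m.factorial : ℕ) : ℂ) ≠ 0 := by exact_mod_cast m.factorial_ne_zero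
    have e2 : -(((((m + 1) * m.factorial : ℕ) : ℂ) *
        ∫ z in Ω, (starRingEnd ℂ) (h z) / (z - w) ^ (m + 1 + 1)) / m.factorial) =
        (-((m:ℂ) + 1)) * ∫ z in Ω, (starRingEnd ℂ) (h z) / (z - w) ^ (m + 1 + 1) := by
      push_cast
      field_simp
    rw [e2, ← integral_const_mul]
    refine setIntegral_congr_fun hΩ.measurableSet fun z hz => ?_
    have hz2 : z ∈ {z | δ / 2 < ‖z - w‖} := by
      have := hfar z (subset_closure hz)
      change δ / 2 < _
      linarith
    have hopen : IsOpen {z : ℂ | δ / 2 < ‖z - w‖} := isOpen_lt continuous_const (by fun_prop)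
    have ev : P =ᶠ[𝓝 z] fun z => ((z - w) ^ (m + 1))⁻¹ := by
      filter_upwards [hopen.mem_nhds hz2] with x hx
      exact hPe x hx.le
    have hne : z - w ≠ 0 := norm_pos_iff.1 (hδ.trans_le (hfar z (subset_closure hz)))
    have h1 : HasDerivAt (fun x => (x - w) ^ (m + 1)) (((m + 1 : ℕ) : ℂ) * (z - w) ^ m) z := by
      have := ((hasDerivAt_id z).sub_const w).fun_pow (m + 1)
      simpa using this
    have h2 := h1.fun_inv (pow_ne_zero _ hne)
    rw [dz_congr ev, dz_hol h2]
    push_cast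
    field_simp
    try ring
  rw [hdec, hPint] at hgreen
  simp_rw [fun j => moment hh hρ hcb j] at hgreen
  rw [Finset.sum_range_succ] at hgreen
  have hpi := Real.pi_gt_three
  have hpi4 := Real.pi_lt_four
  have hfac : ∀ j : ℕ, (1:ℝ) ≤ j.factorial := fun j => by exact_mod_cast j.factorial_pos
  have hnpi : ‖(Real.pi : ℂ)‖ = Real.pi := by
    rw [Complex.norm_real, Real.norm_of_nonneg Real.pi_pos.le]
  have hLint : ‖∫ z in Ω, (starRingEnd ℂ) (h z) * dz L z‖ ≤
      lipschitzExtensionConstant ℂ * C * (∫ z in Ω, ‖h z‖) := by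
    refine (norm_integral_le_integral_norm _).trans ?_
    rw [← integral_const_mul]
    refine integral_mono_of_nonneg (Eventually.of_forall fun z => norm_nonneg _) (hi.norm.const_mul _)
      (Eventually.of_forall fun z => ?_)
    simp only [norm_mul, RCLike.norm_conj]
    rw [mul_comm]
    refine mul_le_mul_of_nonneg_right ?_ (norm_nonneg _)
    have := dz_norm_le hL z
    simpa [Real.coe_toNNReal _ hC.le] using this
  have hsum : ‖∑ j ∈ Finset.range m, D j * (Real.pi / j.factorial *
      (starRingEnd ℂ) (iteratedDeriv j h a))‖ ≤ 4 * C * ∑ j ∈ Finset.range m, ‖iteratedDeriv j h a‖ := by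
    refine (norm_sum_le _ _).trans ?_
    rw [Finset.mul_sum]
    refine Finset.sum_le_sum fun j hj => ?_
    rw [norm_mul, norm_mul, RCLike.norm_conj, norm_div, hnpi, Complex.norm_natCast]
    have h1 := hD j (Finset.mem_range.1 hj).le
    have h2 : Real.pi / j.factorial ≤ 4 := by
      rw [div_le_iff₀ (by linarith [hfac j])]
      nlinarith [hfac j]
    calc ‖D j‖ * (Real.pi / j.factorial * ‖iteratedDeriv j h a‖) ≤ C * (4 * ‖iteratedDeriv j h a‖) := by
          gcongr
      _ = _ := by ring
  have hmain : D m * (Real.pi / m.factorial * (starRingEnd ℂ) (iteratedDeriv m h a)) =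
      -(iteratedDeriv (m + 1) H w / m.factorial)
      - (∑ j ∈ Finset.range m, D j * (Real.pi / j.factorial * (starRingEnd ℂ) (iteratedDeriv j h a)))
      - ∫ z in Ω, (starRingEnd ℂ) (h z) * dz L z := by
    linear_combination -hgreen
  have hBm : ‖iteratedDeriv (m + 1) H w / m.factorial‖ ≤ B := by
    rw [norm_div, Complex.norm_natCast]
    refine (div_le_self (norm_nonneg _) (hfac m)).trans hB
  have hn := congrArg norm hmain
  have hn2 : ‖D m * (Real.pi / m.factorial * (starRingEnd ℂ) (iteratedDeriv m h a))‖ ≤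
      (B + lipschitzExtensionConstant ℂ * C * (∫ z in Ω, ‖h z‖)
      + 4 * C * ∑ j ∈ Finset.range m, ‖iteratedDeriv j h a‖) := by
    rw [hn]
    refine (norm_sub_le _ _).trans ?_
    refine (add_le_add (norm_sub_le _ _) le_rfl).trans ?_
    rw [norm_neg]
    linarith
  have hn3 : 1 / C * (1 / m.factorial * ‖iteratedDeriv m h a‖) ≤
      ‖D m * (Real.pi / m.factorial * (starRingEnd ℂ) (iteratedDeriv m h a))‖ := by
    rw [norm_mul, norm_mul, RCLike.norm_conj, norm_div, hnpi, Complex.norm_natCast]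
    have : (1:ℝ) ≤ Real.pi := by linarith
    gcongr
  have hn4 := hn3.trans hn2
  have hf0 : (0:ℝ) < m.factorial := by linarith [hfac m]
  calc ‖iteratedDeriv m h a‖ = C * m.factorial * (1 / C * (1 / m.factorial * ‖iteratedDeriv m h a‖)) := by
        field_simp
    _ ≤ _ := by gcongr

end SDB


namespace SDB
open MeasureTheory Set Filter Topology Metric
open scoped NNReal

/-- The geometric input on the domain. -/
def Geo (Ω : Set ℂ) : Prop := ∀ m : ℕ, ∃ d0 : ℝ, 0 < d0 ∧ ∃ C : ℝ, 0 < C ∧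
  ∀ a ∈ Ω, infDist a Ωᶜ < d0 → ∃ w ∉ closure Ω, ∃ D : ℕ → ℂ,
    (∀ j ≤ m, ‖D j‖ ≤ C) ∧ 1 / C ≤ ‖D m‖ ∧
    (∀ z ∈ frontier Ω, ∀ z' ∈ frontier Ω,
      ‖(((z - w) ^ (m + 1))⁻¹ - ∑ j ∈ Finset.range (m + 1), D j * ((starRingEnd ℂ) (z - a) ^ (j + 1))⁻¹) -
       (((z' - w) ^ (m + 1))⁻¹ - ∑ j ∈ Finset.range (m + 1), D j * ((starRingEnd ℂ) (z' - a) ^ (j + 1))⁻¹)‖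
        ≤ C * ‖z - z'‖)

lemma exterior_nonempty {Ω : Set ℂ} (hb : Bornology.IsBounded Ω) : ∃ w, w ∉ closure Ω := by
  by_contra hn
  push Not at hn
  have : closure Ω = univ := eq_univ_of_forall hn
  exact NormedSpace.unbounded_univ ℝ ℂ (this ▸ hb.closure)

lemma closedBall_sub_of_infDist {Ω : Set ℂ} {a : ℂ} {d : ℝ} (hd : 0 < d)
    (h : d ≤ infDist a Ωᶜ) : closedBall a (d / 2) ⊆ Ω := by
  intro z hz
  by_contra hn
  have := infDist_le_dist_of_mem (x := a) (show z ∈ Ωᶜ from hn)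
  rw [mem_closedBall, dist_comm] at hz
  linarith

lemma step_bound {Ω : Set ℂ} (hΩ : IsOpen Ω) (hb : Bornology.IsBounded Ω) (hG : Geo Ω) (m : ℕ) :
    ∃ K : ℝ, 0 < K ∧ ∀ h H : ℂ → ℂ, DifferentiableOn ℂ h Ω → IntegrableOn h Ω →
    (∀ w ∉ closure Ω, H w = ∫ z in Ω, (starRingEnd ℂ) (h z) / (z - w)) →
    ∀ B : ℝ, (∀ w ∉ closure Ω, ‖iteratedDeriv (m + 1) H w‖ ≤ B) → ∀ a ∈ Ω,
      ‖iteratedDeriv m h a‖ ≤ K * (B + (∫ z in Ω, ‖h z‖) +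
        ∑ j ∈ Finset.range m, ‖iteratedDeriv j h a‖) := by
  obtain ⟨d0, hd0, C, hC, hgeo⟩ := hG m
  set K1 : ℝ := (m + 1) * m.factorial / (Real.pi * (d0 / 2) ^ (m + 2)) with hK1
  set K2 : ℝ := C * m.factorial * (1 + lipschitzExtensionConstant ℂ * C + 4 * C) with hK2
  have hf : (0:ℝ) < m.factorial := by exact_mod_cast m.factorial_pos
  have hpi := Real.pi_pos
  have hK1p : 0 < K1 := by positivity
  have hK2p : 0 < K2 := by positivity
  refine ⟨K1 + K2, by positivity, fun h H hh hi hH B hB a ha => ?_⟩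
  have hB0 : 0 ≤ B := by
    obtain ⟨w, hw⟩ := exterior_nonempty hb
    exact (norm_nonneg _).trans (hB w hw)
  have hA : 0 ≤ ∫ z in Ω, ‖h z‖ := integral_nonneg fun _ => norm_nonneg _
  have hS : 0 ≤ ∑ j ∈ Finset.range m, ‖iteratedDeriv j h a‖ := Finset.sum_nonneg fun _ _ => norm_nonneg _
  set A := ∫ z in Ω, ‖h z‖
  set S := ∑ j ∈ Finset.range m, ‖iteratedDeriv j h a‖
  by_cases hd : infDist a Ωᶜ < d0
  · obtain ⟨w, hw, D, hD, hDm, hE⟩ := hgeo a ha hd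
    have := near_boundary hΩ hb hh hi hH ha hw m D hC hD hDm hE (hB w hw)
    refine this.trans ?_
    set c : ℝ := (lipschitzExtensionConstant ℂ : ℝ)
    have hc : 0 ≤ c := NNReal.coe_nonneg _
    have h1 : B + c * C * A + 4 * C * S ≤ (1 + c * C + 4 * C) * (B + A + S) := by
      have e1 : 0 ≤ c * C := by positivity
      nlinarith [mul_nonneg e1 hB0, mul_nonneg e1 hA, mul_nonneg e1 hS, mul_nonneg hC.le hB0,
        mul_nonneg hC.le hA, mul_nonneg hC.le hS]
    calc C * m.factorial * (B + c * C * A + 4 * C * S)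
        ≤ C * m.factorial * ((1 + c * C + 4 * C) * (B + A + S)) := by gcongr
      _ = K2 * (B + A + S) := by rw [hK2]; ring
      _ ≤ (K1 + K2) * (B + A + S) := by
        have : 0 ≤ K1 * (B + A + S) := by positivity
        linarith
  · have hcb := closedBall_sub_of_infDist hd0 (not_lt.1 hd)
    have := interior_bound hh hi (half_pos hd0) hcb m
    refine this.trans ?_
    change K1 * A ≤ _
    nlinarith [mul_nonneg hK1p.le hB0, mul_nonneg hK1p.le hS, mul_nonneg hK2p.le hB0,
      mul_nonneg hK2p.le hA, mul_nonneg hK2p.le hS]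

lemma deriv_bound {Ω : Set ℂ} (hΩ : IsOpen Ω) (hb : Bornology.IsBounded Ω) (hG : Geo Ω) (N : ℕ) :
    ∃ K : ℝ, 0 < K ∧ ∀ h H : ℂ → ℂ, DifferentiableOn ℂ h Ω → IntegrableOn h Ω →
    (∀ w ∉ closure Ω, H w = ∫ z in Ω, (starRingEnd ℂ) (h z) / (z - w)) →
    ∀ B : ℝ, (∀ w ∉ closure Ω, ∀ k ≤ N, ‖iteratedDeriv k H w‖ ≤ B) → ∀ a ∈ Ω, ∀ k < N,
      ‖iteratedDeriv k h a‖ ≤ K * (B + (∫ z in Ω, ‖h z‖)) := by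
  induction N with
  | zero => exact ⟨1, one_pos, fun h H _ _ _ B _ a _ k hk => absurd hk (Nat.not_lt_zero k)⟩
  | succ n ih =>
    obtain ⟨K, hK, ih⟩ := ih
    obtain ⟨K', hK', hstep⟩ := step_bound hΩ hb hG n
    refine ⟨K + K' * (1 + n * K), by positivity, fun h H hh hi hH B hB a ha k hk => ?_⟩
    have hB0 : 0 ≤ B := by
      obtain ⟨w, hw⟩ := exterior_nonempty hb
      exact (norm_nonneg _).trans (hB w hw 0 (Nat.zero_le _))
    have hA : 0 ≤ ∫ z in Ω, ‖h z‖ := integral_nonneg fun _ => norm_nonneg _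
    have h1 := ih h H hh hi hH B (fun w hw k hk => hB w hw k (hk.trans (Nat.le_succ n))) a ha
    set A := ∫ z in Ω, ‖h z‖
    rcases Nat.lt_succ_iff_lt_or_eq.1 hk with hk | rfl
    · refine (h1 k hk).trans ?_
      have : 0 ≤ K' * (1 + n * K) * (B + A) := by positivity
      linarith
    · have h2 := hstep h H hh hi hH B (fun w hw => hB w hw _ le_rfl) a ha
      have h3 : ∑ j ∈ Finset.range k, ‖iteratedDeriv j h a‖ ≤ k * (K * (B + A)) := by
        have := Finset.sum_le_card_nsmul (Finset.range k) (fun j => ‖iteratedDeriv j h a‖)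
          (K * (B + A)) (fun j hj => h1 j (Finset.mem_range.1 hj))
        simpa using this
      refine h2.trans ?_
      calc K' * (B + A + ∑ j ∈ Finset.range k, ‖iteratedDeriv j h a‖)
          ≤ K' * (B + A + k * (K * (B + A))) := by gcongr
        _ ≤ _ := by
          have : 0 ≤ K * (B + A) := by positivity
          linarith

end SDB


namespace SDB
open MeasureTheory Set Filter Topology Metric
open scoped NNReal

/-- The kernel of order three halves. -/
noncomputable def qk (u : ℂ) : ℝ := ((√‖u‖) ^ 3)⁻¹

lemma qk_nonneg (u : ℂ) : 0 ≤ qk u := by unfold qk; positivity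

lemma qk_measurable : Measurable qk := by unfold qk; fun_prop

lemma qk_integrable : IntegrableOn qk (ball 0 1) := by
  have := (integrableOn_fun_norm_addHaar (volume : Measure ℂ) (f := fun y : ℝ => ((√y) ^ 3)⁻¹) (r := 1)).2 ?_
  · exact this
  · have h1 : IntegrableOn (fun y : ℝ => y ^ (-(1:ℝ)/2)) (Ioo 0 1) := by
      have := (intervalIntegral.intervalIntegrable_rpow' (a := 0) (b := 1) (r := -(1:ℝ)/2) (by norm_num))
      rw [intervalIntegrable_iff_integrableOn_Ioo_of_le zero_le_one] at this
      exact this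
    refine h1.congr_fun ?_ measurableSet_Ioo
    intro y hy
    have hy0 : 0 < y := hy.1
    have hs : 0 < √y := Real.sqrt_pos.2 hy0
    simp only [Complex.finrank_real_complex, smul_eq_mul]
    have e : y ^ (-(1:ℝ)/2) = (√y)⁻¹ := by
      rw [Real.sqrt_eq_rpow, ← Real.rpow_neg hy0.le]
      norm_num
    rw [e]
    have e2 : y = √y ^ 2 := (Real.sq_sqrt hy0.le).symm
    have e3 : y ^ (2 - 1) = √y ^ 2 := by norm_num; exact e2
    rw [e3]
    field_simp

lemma qk_bound {Ω : Set ℂ} (hv : volume Ω < ⊤) :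
    ∃ K : ℝ, 0 < K ∧ ∀ w, IntegrableOn (fun z => qk (z - w)) Ω ∧ ∫ z in Ω, qk (z - w) ≤ K := by
  set g : ℂ → ℝ := (ball 0 1).indicator qk with hg
  have hgi : Integrable g := qk_integrable.integrable_indicator measurableSet_ball
  have hg0 : ∀ u, 0 ≤ g u := fun u => indicator_nonneg (fun u _ => qk_nonneg u) u
  have hle : ∀ u, qk u ≤ g u + 1 := by
    intro u
    by_cases hu : u ∈ ball (0:ℂ) 1
    · rw [hg, indicator_of_mem hu]; linarith
    · rw [hg, indicator_of_notMem hu, zero_add]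
      have : 1 ≤ ‖u‖ := by simpa using hu
      unfold qk
      refine inv_le_one_of_one_le₀ (one_le_pow₀ ?_)
      rwa [Real.one_le_sqrt]
  have : IsFiniteMeasure (volume.restrict Ω) := ⟨by simpa using hv⟩
  refine ⟨(∫ u, g u) + volume.real Ω + 1, ?_, fun w => ?_⟩
  · have : 0 ≤ ∫ u, g u := integral_nonneg hg0
    have : 0 ≤ volume.real Ω := measureReal_nonneg
    linarith
  · have i1 : Integrable (fun z => g (z - w)) := hgi.comp_sub_right w
    have i2 : IntegrableOn (fun z => g (z - w) + 1) Ω := i1.integrableOn.add (integrable_const _)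
    have i3 : IntegrableOn (fun z => qk (z - w)) Ω := by
      refine i2.mono' ?_ (Eventually.of_forall fun z => ?_)
      · exact (qk_measurable.comp (measurable_id.sub_const w)).aestronglyMeasurable
      · rw [Real.norm_of_nonneg (qk_nonneg _)]
        exact hle _
    refine ⟨i3, ?_⟩
    calc ∫ z in Ω, qk (z - w) ≤ ∫ z in Ω, (g (z - w) + 1) :=
          integral_mono i3 i2 fun z => hle _
      _ = (∫ z in Ω, g (z - w)) + volume.real Ω := by
          rw [integral_add i1.integrableOn (integrable_const _)]
          simp
      _ ≤ (∫ z, g (z - w)) + volume.real Ω := by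
          have := setIntegral_le_integral (s := Ω) i1 (Eventually.of_forall fun z => hg0 (z - w))
          linarith
      _ ≤ _ := by rw [integral_sub_right_eq_self]; linarith

/-- The regularised Cauchy kernel. -/
noncomputable def kk (ρ : ℝ) (v : ℂ) : ℂ := (starRingEnd ℂ) (sk ρ v)

lemma kk_lip {ρ : ℝ} (hρ : 0 < ρ) : LipschitzWith (3 / ρ ^ 2).toNNReal (kk ρ) := by
  refine LipschitzWith.of_dist_le_mul fun x y => ?_
  unfold kk
  rw [dist_eq_norm, ← map_sub, RCLike.norm_conj, ← dist_eq_norm]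
  exact (sk_lip hρ).dist_le_mul x y

lemma kk_norm {ρ : ℝ} (hρ : 0 < ρ) (v : ℂ) : ‖kk ρ v‖ ≤ 1 / ρ := by
  unfold kk
  rw [RCLike.norm_conj]
  exact sk_norm hρ v

lemma kk_out {ρ : ℝ} (hρ : 0 < ρ) {v : ℂ} (hv : ρ ≤ ‖v‖) : kk ρ v = v⁻¹ := by
  unfold kk; rw [sk_out hρ hv]; simp

lemma sqrt_kernel {x y δ : ℝ} (hx : 0 < x) (hy : 0 < y) (hδ : 0 ≤ δ) (h : δ ≤ x + y) :
    δ / (x * y) ≤ √δ * (((√x) ^ 3)⁻¹ + ((√y) ^ 3)⁻¹) := by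
  have hs : √δ ≤ √x + √y := by
    refine (Real.sqrt_le_sqrt h).trans ?_
    rw [Real.sqrt_le_left (by positivity)]
    nlinarith [Real.sq_sqrt hx.le, Real.sq_sqrt hy.le, Real.sqrt_nonneg x, Real.sqrt_nonneg y,
      mul_nonneg (Real.sqrt_nonneg x) (Real.sqrt_nonneg y)]
  set s := √x with hsx
  set t := √y with hsy
  have hs0 : 0 < s := Real.sqrt_pos.2 hx
  have ht0 : 0 < t := Real.sqrt_pos.2 hy
  have ex : x = s ^ 2 := (Real.sq_sqrt hx.le).symm
  have ey : y = t ^ 2 := (Real.sq_sqrt hy.le).symm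
  have ed : δ = √δ * √δ := (Real.mul_self_sqrt hδ).symm
  have h1 : (s + t) / (s ^ 2 * t ^ 2) ≤ (s ^ 3)⁻¹ + (t ^ 3)⁻¹ := by
    have : (s ^ 3)⁻¹ + (t ^ 3)⁻¹ - (s + t) / (s ^ 2 * t ^ 2) = (s - t) ^ 2 * (s + t) / (s ^ 3 * t ^ 3) := by
      field_simp
      ring
    have h2 : 0 ≤ (s - t) ^ 2 * (s + t) / (s ^ 3 * t ^ 3) := by positivity
    linarith
  calc δ / (x * y) = √δ * (√δ / (s ^ 2 * t ^ 2)) := by rw [← ex, ← ey, ← mul_div_assoc, ← ed]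
    _ ≤ √δ * ((s + t) / (s ^ 2 * t ^ 2)) := by gcongr
    _ ≤ _ := by gcongr

lemma kk_diff {ρ : ℝ} (hρ : 0 < ρ) {z w w' : ℂ} (hz : z ≠ w) (hz' : z ≠ w') :
    ‖kk ρ (z - w) - (z - w')⁻¹‖ ≤ √ρ * qk (z - w) + √‖w - w'‖ * (qk (z - w) + qk (z - w')) := by
  have h1 : z - w ≠ 0 := sub_ne_zero.2 hz
  have h2 : z - w' ≠ 0 := sub_ne_zero.2 hz'
  have hx : 0 < ‖z - w‖ := norm_pos_iff.2 h1
  have hy : 0 < ‖z - w'‖ := norm_pos_iff.2 h2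
  have a1 : ‖(z - w)⁻¹ - (z - w')⁻¹‖ ≤ √‖w - w'‖ * (qk (z - w) + qk (z - w')) := by
    have e : (z - w)⁻¹ - (z - w')⁻¹ = (w - w') / ((z - w) * (z - w')) := by
      field_simp; ring
    rw [e, norm_div, norm_mul]
    refine sqrt_kernel hx hy (norm_nonneg _) ?_
    have : w - w' = (z - w') - (z - w) := by ring
    rw [this]
    linarith [norm_sub_le (z - w') (z - w)]
  have a2 : ‖kk ρ (z - w) - (z - w)⁻¹‖ ≤ √ρ * qk (z - w) := by
    by_cases hc : ρ ≤ ‖z - w‖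
    · rw [kk_out hρ hc, sub_self, norm_zero]
      exact mul_nonneg (Real.sqrt_nonneg _) (qk_nonneg _)
    · push Not at hc
      have e : kk ρ (z - w) - (z - w)⁻¹ = -((z - w)⁻¹ * ((1 - ‖z - w‖ ^ 2 / ρ ^ 2 : ℝ) : ℂ)) := by
        unfold kk
        rw [sk_in hc.le]
        have hρc : (ρ:ℂ) ≠ 0 := by exact_mod_cast hρ.ne'
        have e2 : ((‖z - w‖ : ℝ) : ℂ) ^ 2 = (z - w) * (starRingEnd ℂ) (z - w) := by
          rw [Complex.mul_conj, Complex.normSq_eq_norm_sq]; push_cast; rfl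
        push_cast
        rw [e2]
        simp only [map_div₀, map_pow, Complex.conj_ofReal]
        field_simp
        ring
      rw [e, norm_neg, norm_mul, norm_inv, Complex.norm_real, Real.norm_eq_abs]
      have h3 : |1 - ‖z - w‖ ^ 2 / ρ ^ 2| ≤ 1 := by
        have h4 : ‖z - w‖ ^ 2 / ρ ^ 2 ≤ 1 := by
          rw [div_le_one (by positivity)]
          gcongr
        have h5 : 0 ≤ ‖z - w‖ ^ 2 / ρ ^ 2 := by positivity
        rw [abs_le]; constructor <;> linarith
      set x := ‖z - w‖ with hxd
      calc x⁻¹ * |1 - x ^ 2 / ρ ^ 2| ≤ x⁻¹ * 1 := by gcongr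
        _ = √x * (√x ^ 3)⁻¹ := by
            have ex : x = √x ^ 2 := (Real.sq_sqrt hx.le).symm
            have hs : 0 < √x := Real.sqrt_pos.2 hx
            rw [mul_one]
            conv_lhs => rw [ex]
            field_simp
        _ ≤ √ρ * (√x ^ 3)⁻¹ := by gcongr
        _ = √ρ * qk (z - w) := rfl
  have e : kk ρ (z - w) - (z - w')⁻¹ = (kk ρ (z - w) - (z - w)⁻¹) + ((z - w)⁻¹ - (z - w')⁻¹) := by ring
  rw [e]
  exact (norm_add_le _ _).trans (add_le_add a2 a1)

lemma dzb_kk {ρ : ℝ} (hρ : 0 < ρ) (z : ℂ) {w : ℂ} (hw : w ∉ sphere z ρ) :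
    dzb (fun w => kk ρ (z - w)) w = (ball z ρ).indicator (fun _ => -(1 / (ρ:ℂ) ^ 2)) w := by
  by_cases hb : w ∈ ball z ρ
  · rw [indicator_of_mem hb]
    have e : (fun w => kk ρ (z - w)) =ᶠ[𝓝 w] fun w => (starRingEnd ℂ) ((z - w) / ρ ^ 2) := by
      filter_upwards [isOpen_ball.mem_nhds hb] with x hx
      unfold kk
      rw [sk_in]
      rw [mem_ball, dist_comm, dist_eq_norm] at hx
      exact hx.le
    rw [dzb_congr e]
    have hd : HasDerivAt (fun w => (z - w) / (ρ:ℂ) ^ 2) (-1 / (ρ:ℂ) ^ 2) w :=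
      ((hasDerivAt_id w).const_sub z).div_const _
    rw [dzb_anti hd]
    simp [neg_div]
  · rw [indicator_of_notMem hb]
    have hw' : w ∈ (closedBall z ρ)ᶜ := by
      intro h
      rw [mem_closedBall] at h
      rw [mem_ball] at hb
      exact hw (le_antisymm h (not_lt.1 hb))
    have e : (fun w => kk ρ (z - w)) =ᶠ[𝓝 w] fun w => (z - w)⁻¹ := by
      filter_upwards [isClosed_closedBall.isOpen_compl.mem_nhds hw'] with x hx
      refine kk_out hρ ?_
      have hx' : ¬ dist x z ≤ ρ := hx
      rw [dist_comm, dist_eq_norm] at hx'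
      exact (not_le.1 hx').le
    rw [dzb_congr e]
    have hza : z - w ≠ 0 := by
      intro h
      apply hw'
      rw [sub_eq_zero] at h
      rw [← h]
      exact mem_closedBall_self hρ.le
    have hd : DifferentiableAt ℂ (fun w => (z - w)⁻¹) w := by
      fun_prop (disch := assumption)
    exact dzb_hol hd.hasDerivAt

lemma kk_lip' {ρ : ℝ} (hρ : 0 < ρ) (z : ℂ) :
    LipschitzWith ((3 / ρ ^ 2).toNNReal * 1) (fun w => kk ρ (z - w)) :=
  (kk_lip hρ).comp (LipschitzWith.of_dist_le_mul (K := 1) fun x y => by rw [dist_sub_left]; simp)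

lemma pompeiu {φ : ℂ → ℂ} {K : ℝ≥0} (hφ : LipschitzWith K φ) (hc : HasCompactSupport φ) {ρ : ℝ}
    (hρ : 0 < ρ) (z : ℂ) :
    ‖(∫ w, dzb φ w * kk ρ (z - w)) - Real.pi * φ z‖ ≤ Real.pi * K * ρ := by
  obtain ⟨A, hA⟩ := lip_compact_bdd hφ.continuous hc
  have hk := kk_lip' hρ z
  have hkb : ∀ w, ‖kk ρ (z - w)‖ ≤ (1 / ρ).toNNReal := fun w => by
    rw [Real.coe_toNNReal _ (by positivity)]; exact kk_norm hρ _
  have hprod := lip_mul_bdd hφ hk hA hkb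
  have h0 := int_dzb_zero hprod hc.mul_right
  have hφi : Integrable φ := hφ.continuous.integrable_of_hasCompactSupport hc
  have hdi : Integrable (fun w => dzb φ w) := by
    unfold dzb
    exact ((lip_integrable_fderiv hφ hc 1).add ((lip_integrable_fderiv hφ hc _).const_mul _)).div_const _
  have hdki : Integrable (fun w => dzb φ w * kk ρ (z - w)) :=
    hdi.mul_bdd (c := 1 / ρ) hk.continuous.aestronglyMeasurable
      (Eventually.of_forall fun w => kk_norm hρ _)
  have hcn : (ρ:ℂ) ≠ 0 := by exact_mod_cast hρ.ne'
  have hbi : Integrable ((ball z ρ).indicator (fun w => -(1 / (ρ:ℂ) ^ 2) * φ w)) :=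
    ((hφi.const_mul _).integrableOn).integrable_indicator measurableSet_ball
  have h1 : ∫ w, dzb (fun w => φ w * kk ρ (z - w)) w =
      ∫ w, ((ball z ρ).indicator (fun w => -(1 / (ρ:ℂ) ^ 2) * φ w) w + dzb φ w * kk ρ (z - w)) := by
    refine integral_congr_ae ?_
    have hnull : (volume : Measure ℂ) (sphere z ρ) = 0 := Measure.addHaar_sphere _ _ _
    filter_upwards [measure_eq_zero_iff_ae_notMem.1 hnull, hφ.ae_differentiableAt (μ := (volume : Measure ℂ)),
      hk.ae_differentiableAt (μ := (volume : Measure ℂ))] with w hw h2 h3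
    rw [dzb_mul h2 h3, dzb_kk hρ z hw]
    by_cases hb : w ∈ ball z ρ
    · rw [indicator_of_mem hb, indicator_of_mem hb]; ring
    · rw [indicator_of_notMem hb, indicator_of_notMem hb]; ring
  rw [h1, integral_add hbi hdki, integral_indicator measurableSet_ball, integral_const_mul] at h0
  have hvol : volume.real (ball z ρ) = Real.pi * ρ ^ 2 := by
    rw [Measure.real, Complex.volume_ball]
    simp [hρ.le, mul_comm]
  have hfin : volume (ball z ρ) < ⊤ := measure_ball_lt_top
  have h2 : ∫ w in ball z ρ, (φ w - φ z) = (∫ w in ball z ρ, φ w) - Real.pi * ρ ^ 2 * φ z := by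
    rw [integral_sub hφi.integrableOn (integrableOn_const hfin.ne)]
    simp [hvol]
  have h3 : (∫ w, dzb φ w * kk ρ (z - w)) - Real.pi * φ z =
      1 / (ρ:ℂ) ^ 2 * ∫ w in ball z ρ, (φ w - φ z) := by
    rw [h2]
    have : (∫ w, dzb φ w * kk ρ (z - w)) = 1 / (ρ:ℂ) ^ 2 * ∫ w in ball z ρ, φ w := by
      linear_combination h0
    rw [this]
    field_simp
  rw [h3, norm_mul, norm_div, norm_pow, Complex.norm_real, Real.norm_of_nonneg hρ.le, norm_one]
  have h4 : ‖∫ w in ball z ρ, (φ w - φ z)‖ ≤ K * ρ * volume.real (ball z ρ) := by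
    refine norm_setIntegral_le_of_norm_le_const hfin fun w hw => ?_
    have := hφ.dist_le_mul w z
    rw [dist_eq_norm] at this
    refine this.trans ?_
    rw [mem_ball] at hw
    gcongr
  calc 1 / ρ ^ 2 * ‖∫ w in ball z ρ, (φ w - φ z)‖ ≤ 1 / ρ ^ 2 * (K * ρ * volume.real (ball z ρ)) := by
        gcongr
    _ = Real.pi * K * ρ := by rw [hvol]; field_simp

end SDB


namespace SDB
open MeasureTheory Set Filter Topology Metric
open scoped NNReal

lemma u_bound {Ω : Set ℂ} (hΩ : MeasurableSet Ω) {f : ℂ → ℂ} {S K : ℝ} (hS : 0 ≤ S)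
    (hf : ∀ z ∈ Ω, ‖f z‖ ≤ S) (hi : IntegrableOn f Ω)
    (hK : ∀ w, IntegrableOn (fun z => qk (z - w)) Ω ∧ ∫ z in Ω, qk (z - w) ≤ K)
    {ρ : ℝ} (hρ : 0 < ρ) {w w' : ℂ} (hw' : w' ∉ closure Ω) :
    ‖∫ z in Ω, f z * kk ρ (z - w)‖ ≤ ‖∫ z in Ω, f z / (z - w')‖ + S * ((√ρ + 2 * √‖w - w'‖) * K) := by
  have hkm : Measurable (fun z => kk ρ (z - w)) := ((kk_lip hρ).continuous.measurable).comp (measurable_id.sub_const w)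
  have i1 : IntegrableOn (fun z => f z * kk ρ (z - w)) Ω :=
    hi.mul_bdd (c := 1 / ρ) hkm.aestronglyMeasurable (Eventually.of_forall fun z => kk_norm hρ _)
  obtain ⟨δ, hδ, hball⟩ := Metric.isOpen_iff.1 isClosed_closure.isOpen_compl w' hw'
  have hfar : ∀ z ∈ Ω, δ ≤ ‖z - w'‖ := by
    intro z hz
    by_contra hn
    rw [← dist_eq_norm] at hn
    exact hball (mem_ball.2 (not_le.1 hn)) (subset_closure hz)
  have hm2 : Measurable (fun z : ℂ => (z - w')⁻¹) := by fun_prop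
  have i2 : IntegrableOn (fun z => f z * (z - w')⁻¹) Ω := by
    refine hi.mul_bdd (c := 1 / δ) hm2.aestronglyMeasurable ?_
    filter_upwards [ae_restrict_mem hΩ] with z hz
    rw [norm_inv, ← one_div]
    exact one_div_le_one_div_of_le hδ (hfar z hz)
  have e : ∫ z in Ω, f z * kk ρ (z - w) = (∫ z in Ω, f z / (z - w')) +
      ∫ z in Ω, f z * (kk ρ (z - w) - (z - w')⁻¹) := by
    simp_rw [div_eq_mul_inv, mul_sub]
    rw [integral_sub i1 i2]
    ring
  rw [e]
  refine (norm_add_le _ _).trans (add_le_add le_rfl ?_)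
  have iq : IntegrableOn (fun z => S * ((√ρ + √‖w - w'‖) * qk (z - w) + √‖w - w'‖ * qk (z - w'))) Ω :=
    (((hK w).1.const_mul _).add ((hK w').1.const_mul _)).const_mul _
  have hne : ∀ᵐ z ∂(volume.restrict Ω), z ≠ w ∧ z ≠ w' := by
    refine ae_restrict_of_ae ?_
    have h1 : (volume : Measure ℂ) {w} = 0 := by simp
    have h2 : (volume : Measure ℂ) {w'} = 0 := by simp
    filter_upwards [measure_eq_zero_iff_ae_notMem.1 h1, measure_eq_zero_iff_ae_notMem.1 h2] with z a b
    exact ⟨a, b⟩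
  calc ‖∫ z in Ω, f z * (kk ρ (z - w) - (z - w')⁻¹)‖
      ≤ ∫ z in Ω, S * ((√ρ + √‖w - w'‖) * qk (z - w) + √‖w - w'‖ * qk (z - w')) := by
        refine norm_integral_le_of_norm_le iq ?_
        filter_upwards [ae_restrict_mem hΩ, hne] with z hz hz2
        rw [norm_mul]
        refine mul_le_mul (hf z hz) ((kk_diff hρ hz2.1 hz2.2).trans (le_of_eq ?_)) (norm_nonneg _) hS
        ring
    _ = S * ((√ρ + √‖w - w'‖) * (∫ z in Ω, qk (z - w)) + √‖w - w'‖ * ∫ z in Ω, qk (z - w')) := by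
        rw [integral_const_mul, integral_add ((hK w).1.const_mul _) ((hK w').1.const_mul _),
          integral_const_mul, integral_const_mul]
    _ ≤ S * ((√ρ + √‖w - w'‖) * K + √‖w - w'‖ * K) := by
        have := (hK w).2
        have := (hK w').2
        gcongr
    _ = _ := by ring

/-- Existence of the cut-off version of a holomorphic function. -/
lemma cutoff_hol {Ω : Set ℂ} (hΩ : IsOpen Ω) (hb : Bornology.IsBounded Ω) {h : ℂ → ℂ}
    (hh : DifferentiableOn ℂ h Ω) {S : ℝ} (hS : ∀ z ∈ Ω, ‖h z‖ ≤ S) {ε : ℝ} (hε : 0 < ε) :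
    ∃ φ : ℂ → ℂ, ∃ K : ℝ≥0, LipschitzWith K φ ∧ HasCompactSupport φ ∧
      (∀ z, 2 * ε ≤ infDist z Ωᶜ → φ z = h z) ∧
      (∀ z ∈ Ω, ∃ t : ℝ, 0 ≤ t ∧ t ≤ 1 ∧ φ z = t * h z) ∧
      (∀ᵐ z, ‖dzb φ z‖ ≤ {z | z ∈ Ω ∧ infDist z Ωᶜ ≤ 2 * ε}.indicator (fun _ => S / ε) z) := by
  have hne : Ω ≠ univ := by
    rintro rfl
    exact NormedSpace.unbounded_univ ℝ ℂ hb
  have hsubΩ : ∀ z, 0 < infDist z Ωᶜ → z ∈ Ω := by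
    intro z hz
    by_contra hn
    have := infDist_zero_of_mem (show z ∈ Ωᶜ from hn)
    linarith
  set s : Set ℂ := {z | ε ≤ infDist z Ωᶜ} with hs
  have hsΩ : s ⊆ Ω := fun z hz => hsubΩ z (hε.trans_le hz)
  have hsc : IsCompact s := Metric.isCompact_of_isClosed_isBounded
    (isClosed_le continuous_const (continuous_infDist_pt _)) (hb.subset hsΩ)
  obtain ⟨χ, hχ, hχc, hχs, hχ1⟩ := exists_cutoff hsc hΩ hsΩ
  set F : ℂ → ℂ := fun z => h z * (χ z : ℂ) with hF
  have hFc : HasCompactSupport F := by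
    refine HasCompactSupport.of_support_subset_isCompact hχc.isCompact fun z hz => ?_
    refine subset_tsupport _ fun h0 => hz ?_
    simp [hF, h0]
  have hFd : ContDiff ℝ 1 F := by
    rw [contDiff_iff_contDiffAt]
    intro z
    by_cases hz : z ∈ Ω
    · have h1 : ContDiffAt ℂ 1 h z := (hh.analyticAt (hΩ.mem_nhds hz)).contDiffAt
      have h3 : ContDiffAt ℝ 1 (fun w => (χ w : ℂ)) z :=
        Complex.ofRealCLM.contDiff.contDiffAt.comp z ((hχ.of_le (by simp)).contDiffAt)
      exact (h1.restrict_scalars ℝ).mul h3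
    · have : F =ᶠ[𝓝 z] fun _ => 0 := by
        have hz' : z ∉ tsupport χ := fun h' => hz (hχs h')
        filter_upwards [(isClosed_tsupport χ).isOpen_compl.mem_nhds hz'] with w hw
        simp [hF, image_eq_zero_of_notMem_tsupport hw]
      exact (contDiffAt_const (c := (0 : ℂ))).congr_of_eventuallyEq this
  obtain ⟨KF, hKF⟩ := ContDiff.lipschitzWith_of_hasCompactSupport hFc hFd one_ne_zero
  obtain ⟨A, hA⟩ := lip_compact_bdd hFd.continuous hFc
  set ηr : ℂ → ℝ := fun z => max 0 (min 1 (infDist z Ωᶜ / ε - 1)) with hηr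
  set η : ℂ → ℂ := fun z => (ηr z : ℂ) with hη
  have hη0 : ∀ z, 0 ≤ ηr z := fun z => le_max_left _ _
  have hη1 : ∀ z, ηr z ≤ 1 := fun z => max_le zero_le_one (min_le_left _ _)
  have hηl : LipschitzWith (1 / ε).toNNReal η := by
    refine LipschitzWith.of_dist_le_mul fun x y => ?_
    rw [Real.coe_toNNReal _ (by positivity), dist_eq_norm]
    simp only [hη]
    rw [← Complex.ofReal_sub, Complex.norm_real, Real.norm_eq_abs]
    simp only [hηr]
    have h1 := abs_max_sub_max_le_abs (min 1 (infDist x Ωᶜ / ε - 1)) (min 1 (infDist y Ωᶜ / ε - 1)) 0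
    have h2 := abs_inf_sub_inf_le_abs (infDist x Ωᶜ / ε - 1) (infDist y Ωᶜ / ε - 1) 1
    rw [max_comm 0, max_comm 0]
    refine h1.trans ?_
    rw [min_comm 1, min_comm 1]
    refine h2.trans ?_
    have h3 : |infDist x Ωᶜ - infDist y Ωᶜ| ≤ dist x y := by
      have := (lipschitz_infDist_pt Ωᶜ).dist_le_mul x y
      simpa [Real.dist_eq] using this
    have e : infDist x Ωᶜ / ε - 1 - (infDist y Ωᶜ / ε - 1) = 1 / ε * (infDist x Ωᶜ - infDist y Ωᶜ) := by ring
    rw [e, abs_mul, abs_of_pos (by positivity : 0 < 1 / ε)]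
    gcongr
  have hηn : ∀ z, ‖η z‖ ≤ (1 : ℝ≥0) := by
    intro z
    simp only [hη, Complex.norm_real, Real.norm_of_nonneg (hη0 z)]
    exact hη1 z
  have hη_out : ∀ z, infDist z Ωᶜ ≤ ε → η z = 0 := by
    intro z hz
    have : infDist z Ωᶜ / ε ≤ 1 := (div_le_one hε).2 hz
    simp only [hη, hηr]
    rw [max_eq_left]
    · simp
    · exact (min_le_right _ _).trans (by linarith)
  have hη_in : ∀ z, 2 * ε ≤ infDist z Ωᶜ → η z = 1 := by
    intro z hz
    have : 2 ≤ infDist z Ωᶜ / ε := (le_div_iff₀ hε).2 hz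
    simp only [hη, hηr]
    rw [min_eq_left (by linarith), max_eq_right zero_le_one]
    simp
  have hprod := lip_mul_bdd hKF hηl hA hηn
  refine ⟨fun z => F z * η z, _, hprod, hFc.mul_right, ?_, ?_, ?_⟩
  · intro z hz
    have hz1 : z ∈ s := by change ε ≤ _; linarith
    have : χ z = 1 := (hχ1 z hz1).eq_of_nhds
    simp [hF, hη_in z hz, this]
  · intro z hz
    refine ⟨ηr z, hη0 z, hη1 z, ?_⟩
    by_cases hz1 : z ∈ s
    · have : χ z = 1 := (hχ1 z hz1).eq_of_nhds
      simp [hF, this, hη, mul_comm]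
    · have h0 := hη_out z (not_le.1 hz1).le
      have h1 : ((ηr z : ℝ) : ℂ) = 0 := h0
      change F z * η z = _
      rw [h0, h1]; simp
  · filter_upwards [hηl.ae_differentiableAt (μ := (volume : Measure ℂ))] with z hz
    have hS0 : 0 ≤ S / ε ∨ ¬ (z ∈ Ω) := by
      by_cases hzΩ : z ∈ Ω
      · left
        exact div_nonneg ((norm_nonneg _).trans (hS z hzΩ)) hε.le
      · right; exact hzΩ
    by_cases hz1 : z ∈ s
    · have hzΩ := hsΩ hz1
      have e1 : F =ᶠ[𝓝 z] h := by
        filter_upwards [hχ1 z hz1] with w hw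
        simp [hF, hw]
      rw [dzb_mul (hFd.differentiable one_ne_zero z) hz, dzb_congr e1,
        dzb_hol (hh.differentiableAt (hΩ.mem_nhds hzΩ)).hasDerivAt, mul_zero, add_zero, e1.eq_of_nhds]
      by_cases hz2 : infDist z Ωᶜ ≤ 2 * ε
      · rw [indicator_of_mem (show z ∈ {z | z ∈ Ω ∧ infDist z Ωᶜ ≤ 2 * ε} from ⟨hzΩ, hz2⟩), norm_mul]
        have h1 := dzb_norm_le hηl z
        rw [Real.coe_toNNReal _ (by positivity)] at h1
        calc ‖h z‖ * ‖dzb η z‖ ≤ S * (1 / ε) :=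
              mul_le_mul (hS z hzΩ) h1 (norm_nonneg _) ((norm_nonneg _).trans (hS z hzΩ))
          _ = S / ε := by ring
      · rw [indicator_of_notMem (fun h' => hz2 h'.2)]
        push Not at hz2
        have e2 : η =ᶠ[𝓝 z] fun _ => 1 := by
          filter_upwards [(isOpen_lt continuous_const (continuous_infDist_pt Ωᶜ)).mem_nhds hz2] with x hx
          exact hη_in x (le_of_lt hx)
        rw [dzb_congr e2]
        simp [dzb]
    · have hz1' : infDist z Ωᶜ < ε := not_le.1 hz1
      have e2 : (fun z => F z * η z) =ᶠ[𝓝 z] fun _ => 0 := by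
        filter_upwards [(isOpen_lt (continuous_infDist_pt Ωᶜ) continuous_const).mem_nhds hz1'] with x hx
        rw [hη_out x (le_of_lt hx), mul_zero]
      rw [dzb_congr e2]
      have : dzb (fun _ => (0:ℂ)) z = 0 := by simp [dzb]
      rw [this, norm_zero]
      refine indicator_apply_nonneg fun h' => ?_
      rcases hS0 with h0 | h0
      · exact h0
      · exact absurd h'.1 h0

end SDB


namespace SDB
open MeasureTheory Set Filter Topology Metric
open scoped NNReal

/-- inner boundary layer -/
def layer (Ω : Set ℂ) (ε : ℝ) : Set ℂ := {z | z ∈ Ω ∧ infDist z Ωᶜ ≤ ε}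

lemma layer_meas {Ω : Set ℂ} (hΩ : IsOpen Ω) (ε : ℝ) : MeasurableSet (layer Ω ε) :=
  hΩ.measurableSet.inter (isClosed_le (continuous_infDist_pt _) continuous_const).measurableSet

lemma exterior_near {Ω : Set ℂ} (hb : Bornology.IsBounded Ω)
    (hext : frontier Ω ⊆ closure (closure Ω)ᶜ) {ε : ℝ} (hε : 0 < ε) {w : ℂ}
    (hw : w ∈ layer Ω (2 * ε)) : ∃ w', w' ∉ closure Ω ∧ ‖w - w'‖ ≤ 4 * ε := by
  have hne : Ω ≠ univ := by
    rintro rfl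
    exact NormedSpace.unbounded_univ ℝ ℂ hb
  obtain ⟨y, hy, hd⟩ := exists_mem_frontier_infDist_compl_eq_dist hw.1 hne
  obtain ⟨w', hw', hd'⟩ := Metric.mem_closure_iff.1 (hext hy) ε hε
  refine ⟨w', hw', ?_⟩
  rw [← dist_eq_norm]
  have := dist_triangle w y w'
  have := hw.2
  linarith

lemma dual_eps {Ω : Set ℂ} (hΩ : IsOpen Ω) (hb : Bornology.IsBounded Ω)
    (hext : frontier Ω ⊆ closure (closure Ω)ᶜ) {K : ℝ}
    (hK : ∀ w, IntegrableOn (fun z => qk (z - w)) Ω ∧ ∫ z in Ω, qk (z - w) ≤ K) 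
    {f φ : ℂ → ℂ} {S B : ℝ} (hS : 0 ≤ S) (hf : ∀ z ∈ Ω, ‖f z‖ ≤ S) (hi : IntegrableOn f Ω)
    (hB : ∀ w ∉ closure Ω, ‖∫ z in Ω, f z / (z - w)‖ ≤ B) {ε : ℝ} (hε : 0 < ε)
    {L : ℝ≥0} (hφ : LipschitzWith L φ) (hc : HasCompactSupport φ)
    (hd : ∀ᵐ z, ‖dzb φ z‖ ≤ (layer Ω (2 * ε)).indicator (fun _ => S / ε) z) {ρ : ℝ} (hρ : 0 < ρ) :
    ‖Real.pi * ∫ z in Ω, f z * φ z‖ ≤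
      volume.real (layer Ω (2 * ε)) * (S / ε) * (B + S * ((√ρ + 4 * √ε) * K)) +
      (∫ z in Ω, ‖f z‖) * (Real.pi * L * ρ) := by
  have hv : volume Ω < ⊤ := hb.measure_lt_top
  have hlv : volume (layer Ω (2 * ε)) < ⊤ := (measure_mono (fun z hz => hz.1)).trans_lt hv
  have hlm := layer_meas hΩ (2 * ε)
  have hind : Integrable ((layer Ω (2 * ε)).indicator (fun _ : ℂ => S / ε)) :=
    (integrable_indicator_iff hlm).2 (integrableOn_const hlv.ne)
  have hdi : Integrable (dzb φ) := hind.mono' (dzb_measurable φ).aestronglyMeasurable hd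
  obtain ⟨A, hA⟩ := lip_compact_bdd hφ.continuous hc
  have hK0 : 0 ≤ K := (integral_nonneg (fun z => qk_nonneg _)).trans (hK 0).2
  -- Fubini
  have hkc : Continuous (kk ρ) := (kk_lip hρ).continuous
  have hprod : Integrable (fun p : ℂ × ℂ => (f p.1 * dzb φ p.2) * kk ρ (p.1 - p.2))
      ((volume.restrict Ω).prod volume) := by
    refine (Integrable.mul_prod (μ := volume.restrict Ω) (ν := (volume : Measure ℂ)) hi hdi).mul_bdd (c := 1 / ρ) ?_ (Eventually.of_forall fun p => kk_norm hρ _)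
    exact (hkc.comp (continuous_fst.sub continuous_snd)).aestronglyMeasurable
  have hswap := integral_integral_swap (f := fun z w => f z * dzb φ w * kk ρ (z - w)) hprod
  have e1 : ∀ z, ∫ w, (f z * dzb φ w) * kk ρ (z - w) = f z * ∫ w, dzb φ w * kk ρ (z - w) := by
    intro z
    rw [← integral_const_mul]
    simp_rw [mul_assoc]
  have e2 : ∀ w, ∫ z in Ω, (f z * dzb φ w) * kk ρ (z - w) = dzb φ w * ∫ z in Ω, f z * kk ρ (z - w) := by
    intro w
    rw [← integral_const_mul]
    congr 1; ext z; ring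
  simp only [e1, e2] at hswap
  -- difference
  have hfi : IntegrableOn (fun z => f z * ∫ w, dzb φ w * kk ρ (z - w)) Ω := by
    have := hprod.integral_prod_left
    simp only [e1] at this
    exact this
  have hfφ : IntegrableOn (fun z => f z * (Real.pi * φ z)) Ω := by
    refine hi.mul_bdd (c := Real.pi * A) (continuous_const.mul hφ.continuous).aestronglyMeasurable
      (Eventually.of_forall fun z => ?_)
    rw [norm_mul]
    simp only [Complex.norm_real, Real.norm_of_nonneg Real.pi_pos.le]
    gcongr
    exact hA z
  have hdiff : ‖(∫ z in Ω, f z * ∫ w, dzb φ w * kk ρ (z - w)) - ∫ z in Ω, f z * (Real.pi * φ z)‖ ≤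
      (∫ z in Ω, ‖f z‖) * (Real.pi * L * ρ) := by
    rw [← integral_sub hfi hfφ, ← integral_mul_const]
    refine norm_integral_le_of_norm_le (hi.norm.mul_const _) (Eventually.of_forall fun z => ?_)
    rw [← mul_sub, norm_mul]
    gcongr
    exact pompeiu hφ hc hρ z
  have hmain : ‖∫ w, dzb φ w * ∫ z in Ω, f z * kk ρ (z - w)‖ ≤
      volume.real (layer Ω (2 * ε)) * (S / ε) * (B + S * ((√ρ + 4 * √ε) * K)) := by
    have hi2 : Integrable ((layer Ω (2 * ε)).indicator (fun _ : ℂ => S / ε * (B + S * ((√ρ + 4 * √ε) * K)))) :=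
      (integrable_indicator_iff hlm).2 (integrableOn_const hlv.ne)
    refine (norm_integral_le_of_norm_le hi2 ?_).trans (le_of_eq ?_)
    · filter_upwards [hd] with w hw
      by_cases hwl : w ∈ layer Ω (2 * ε)
      · rw [indicator_of_mem hwl] at hw ⊢
        rw [norm_mul]
        refine mul_le_mul hw ?_ (norm_nonneg _) (by positivity)
        obtain ⟨w', hw', hdist⟩ := exterior_near hb hext hε hwl
        refine (u_bound hΩ.measurableSet hS hf hi hK hρ hw').trans ?_
        have hsq : √‖w - w'‖ ≤ 2 * √ε := by
          rw [show (2 : ℝ) * √ε = √(4 * ε) by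
            rw [Real.sqrt_mul (by norm_num), show (4 : ℝ) = 2 ^ 2 by norm_num, Real.sqrt_sq (by norm_num)]]
          exact Real.sqrt_le_sqrt hdist
        refine add_le_add (hB w' hw') ?_
        exact mul_le_mul_of_nonneg_left (mul_le_mul_of_nonneg_right (by linarith) hK0) hS
      · rw [indicator_of_notMem hwl] at hw ⊢
        have : dzb φ w = 0 := norm_le_zero_iff.1 hw
        rw [this]; simp
    · rw [integral_indicator hlm, setIntegral_const, smul_eq_mul]
      ring
  have e3 : (Real.pi : ℂ) * ∫ z in Ω, f z * φ z = ∫ z in Ω, f z * (Real.pi * φ z) := by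
    rw [← integral_const_mul]; congr 1; ext z; ring
  rw [e3]
  rw [hswap] at hdiff
  have := norm_sub_norm_le (∫ z in Ω, f z * (Real.pi * φ z)) (∫ w, dzb φ w * ∫ z in Ω, f z * kk ρ (z - w))
  rw [norm_sub_rev] at this
  linarith

lemma l2_bound {Ω : Set ℂ} (hΩ : IsOpen Ω) (hb : Bornology.IsBounded Ω)
    (hext : frontier Ω ⊆ closure (closure Ω)ᶜ) {CL : ℝ} 
    (hL : ∀ ε, 0 < ε → ε < 1 → volume.real (layer Ω ε) ≤ CL * ε)
    {h : ℂ → ℂ} (hh : DifferentiableOn ℂ h Ω) {S B : ℝ} (hS : 0 ≤ S)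
    (hhS : ∀ z ∈ Ω, ‖h z‖ ≤ S)
    (hB : ∀ w ∉ closure Ω, ‖∫ z in Ω, (starRingEnd ℂ) (h z) / (z - w)‖ ≤ B) :
    Real.pi * ∫ z in Ω, ‖h z‖ ^ 2 ≤ 2 * CL * S * B := by
  have hv : volume Ω < ⊤ := hb.measure_lt_top
  obtain ⟨K, hK0, hK⟩ := qk_bound hv
  have hhm : AEStronglyMeasurable h (volume.restrict Ω) := hh.continuousOn.aestronglyMeasurable hΩ.measurableSet
  have hhi : IntegrableOn h Ω := 
    IntegrableOn.of_bound hv hhm S (by filter_upwards [ae_restrict_mem hΩ.measurableSet] with z hz using hhS z hz)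
  set f : ℂ → ℂ := fun z => (starRingEnd ℂ) (h z) with hf
  have hfn : ∀ z, ‖f z‖ = ‖h z‖ := fun z => RCLike.norm_conj _
  have hfm : AEStronglyMeasurable f (volume.restrict Ω) := Complex.continuous_conj.comp_aestronglyMeasurable hhm
  have hfi : IntegrableOn f Ω := hhi.norm.mono' hfm (Eventually.of_forall fun z => (hfn z).le)
  have hfS : ∀ z ∈ Ω, ‖f z‖ ≤ S := fun z hz => (hfn z).le.trans (hhS z hz)
  have hB0 : 0 ≤ B := by
    obtain ⟨w, hw⟩ := exterior_nonempty hb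
    exact (norm_nonneg _).trans (hB w hw)
  have key : ∀ ε : ℝ, 0 < ε → ε < 1 / 2 → Real.pi * ∫ z in Ω, ‖h z‖ ^ 2 ≤
      Real.pi * (S ^ 2 * (CL * (2 * ε))) + 2 * CL * S * (B + S * (4 * √ε * K)) := by
    intro ε hε hε2
    obtain ⟨φ, L, hφ, hc, hφ1, hφ2, hd⟩ := cutoff_hol hΩ hb hh hhS hε
    have h1 : ‖Real.pi * ∫ z in Ω, f z * φ z‖ ≤
        volume.real (layer Ω (2 * ε)) * (S / ε) * (B + S * ((√0 + 4 * √ε) * K)) +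
        (∫ z in Ω, ‖f z‖) * (Real.pi * L * 0) := by
      have hcont : Continuous fun ρ : ℝ => volume.real (layer Ω (2 * ε)) * (S / ε) * (B + S * ((√ρ + 4 * √ε) * K)) +
        (∫ z in Ω, ‖f z‖) * (Real.pi * L * ρ) := by fun_prop
      refine ge_of_tendsto ((hcont.tendsto 0).mono_left nhdsWithin_le_nhds) (x := 𝓝[>] (0:ℝ)) ?_
      filter_upwards [self_mem_nhdsWithin] with ρ hρ
      exact dual_eps hΩ hb hext hK hS hfS hfi hB hε hφ hc hd hρ
    have hlay := hL (2 * ε) (by positivity) (by linarith)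
    rw [Real.sqrt_zero, zero_add, mul_zero, mul_zero, add_zero] at h1
    have h2 : volume.real (layer Ω (2 * ε)) * (S / ε) * (B + S * (4 * √ε * K)) ≤
        2 * CL * S * (B + S * (4 * √ε * K)) := by
      have : 2 * CL * S = CL * (2 * ε) * (S / ε) := by field_simp
      rw [this]
      gcongr
    have hlm := layer_meas hΩ (2 * ε)
    have hlv : volume (layer Ω (2 * ε)) < ⊤ := (measure_mono (fun z hz => hz.1)).trans_lt hv
    -- compare
    have hφi : IntegrableOn (fun z => f z * φ z) Ω := by
      obtain ⟨A, hA⟩ := lip_compact_bdd hφ.continuous hc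
      exact hfi.mul_bdd (c := A) hφ.continuous.aestronglyMeasurable (Eventually.of_forall hA)
    have hhi2 : IntegrableOn (fun z => f z * h z) Ω := by
      refine hfi.mul_bdd (c := S) hhm ?_
      filter_upwards [ae_restrict_mem hΩ.measurableSet] with z hz using hhS z hz
    have hi2 : IntegrableOn ((layer Ω (2 * ε)).indicator (fun _ : ℂ => S ^ 2)) Ω :=
      ((integrable_indicator_iff hlm).2 (integrableOn_const hlv.ne)).integrableOn
    have h3 : ‖(∫ z in Ω, f z * h z) - ∫ z in Ω, f z * φ z‖ ≤ S ^ 2 * volume.real (layer Ω (2 * ε)) := by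
      rw [← integral_sub hhi2 hφi]
      refine (norm_integral_le_of_norm_le hi2 ?_).trans (le_of_eq ?_)
      · filter_upwards [ae_restrict_mem hΩ.measurableSet] with z hz
        rw [← mul_sub, norm_mul]
        by_cases hzl : z ∈ layer Ω (2 * ε)
        · rw [indicator_of_mem hzl, sq]
          refine mul_le_mul (hfS z hz) ?_ (norm_nonneg _) hS
          obtain ⟨t, ht0, ht1, ht⟩ := hφ2 z hz
          rw [ht, ← one_sub_mul, norm_mul]
          have : ‖(1 : ℂ) - t‖ ≤ 1 := by
            rw [← Complex.ofReal_one, ← Complex.ofReal_sub, Complex.norm_real, Real.norm_of_nonneg (by linarith)]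
            linarith
          calc _ ≤ 1 * S := mul_le_mul this (hhS z hz) (norm_nonneg _) zero_le_one
            _ = S := one_mul S
        · rw [indicator_of_notMem hzl]
          have : 2 * ε ≤ infDist z Ωᶜ := by
            by_contra hn
            exact hzl ⟨hz, (not_le.1 hn).le⟩
          rw [hφ1 z this]; simp
      · rw [setIntegral_indicator hlm, inter_eq_self_of_subset_right (fun z hz => hz.1), setIntegral_const, smul_eq_mul, mul_comm]
    have h4 : (∫ z in Ω, f z * h z) = ((∫ z in Ω, ‖h z‖ ^ 2 : ℝ) : ℂ) := by
      rw [← integral_complex_ofReal]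
      congr 1; ext z
      rw [hf]
      simp only []
      rw [← Complex.normSq_eq_conj_mul_self, Complex.normSq_eq_norm_sq]
    rw [h4] at h3
    have hn0 : 0 ≤ ∫ z in Ω, ‖h z‖ ^ 2 := integral_nonneg fun z => by positivity
    have h5 := norm_sub_norm_le ((∫ z in Ω, ‖h z‖ ^ 2 : ℝ) : ℂ) (∫ z in Ω, f z * φ z)
    rw [Complex.norm_real, Real.norm_of_nonneg hn0] at h5
    rw [norm_mul, Complex.norm_real, Real.norm_of_nonneg Real.pi_pos.le] at h1
    have h6 : ∫ z in Ω, ‖h z‖ ^ 2 ≤ ‖∫ z in Ω, f z * φ z‖ + S ^ 2 * (CL * (2 * ε)) := by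
      have : S ^ 2 * volume.real (layer Ω (2 * ε)) ≤ S ^ 2 * (CL * (2 * ε)) := by gcongr
      linarith
    have h7 := mul_le_mul_of_nonneg_left h6 Real.pi_pos.le
    linarith
  have hcont : Continuous fun ε : ℝ => Real.pi * (S ^ 2 * (CL * (2 * ε))) + 2 * CL * S * (B + S * (4 * √ε * K)) := by fun_prop
  have := ge_of_tendsto (x := 𝓝[>] (0:ℝ)) (b := Real.pi * ∫ z in Ω, ‖h z‖ ^ 2) ((hcont.tendsto 0).mono_left nhdsWithin_le_nhds) (by
    filter_upwards [Ioo_mem_nhdsGT (show (0:ℝ) < 1/2 by norm_num)] with ε hε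
    exact key ε hε.1 hε.2)
  simpa using this

end SDB


namespace SDB
open MeasureTheory Set Filter Topology Metric
open scoped NNReal

lemma cs_l1 {Ω : Set ℂ} (hv : volume Ω < ⊤) {g : ℂ → ℝ} (h1 : IntegrableOn g Ω) (h2 : IntegrableOn (fun z => g z ^ 2) Ω) :
    (∫ z in Ω, g z) ^ 2 ≤ volume.real Ω * ∫ z in Ω, g z ^ 2 := by
  have hc : ∀ t : ℝ, 0 ≤ volume.real Ω * (t * t) + (-2 * ∫ z in Ω, g z) * t + ∫ z in Ω, g z ^ 2 := by
    intro t
    have e : ∫ z in Ω, (g z - t) ^ 2 = volume.real Ω * (t * t) + (-2 * ∫ z in Ω, g z) * t + ∫ z in Ω, g z ^ 2 := by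
      have : ∀ z, (g z - t) ^ 2 = g z ^ 2 + ((-2 * t) * g z + t * t) := fun z => by ring
      simp_rw [this]
      have i3 : IntegrableOn (fun _ : ℂ => t * t) Ω := integrableOn_const hv.ne
      have i2 : IntegrableOn (fun z => (-2 * t) * g z) Ω := h1.const_mul _
      have i4 : IntegrableOn (fun z => (-2 * t) * g z + t * t) Ω := i2.add i3
      rw [integral_add h2 i4, integral_add i2 i3, integral_const_mul, setIntegral_const, smul_eq_mul]
      ring
    rw [← e]
    exact integral_nonneg fun z => sq_nonneg _
  have := discrim_le_zero hc
  rw [discrim] at this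
  nlinarith

theorem final_of_geo {Ω : Set ℂ} (hΩ : IsOpen Ω) (hb : Bornology.IsBounded Ω) (hG : Geo Ω)
    (hext : frontier Ω ⊆ closure (closure Ω)ᶜ)
    (hL : ∃ CL : ℝ, 0 < CL ∧ ∀ ε, 0 < ε → ε < 1 → volume.real (layer Ω ε) ≤ CL * ε) (N : ℕ) :
    ∃ M : ℕ, 0 < M ∧ ∃ C : ℝ, 0 < C ∧
      ∀ h H : ℂ → ℂ,
        DifferentiableOn ℂ h Ω →
        IntegrableOn (fun z => ‖h z‖ ^ 2) Ω volume →
        DifferentiableOn ℂ H (closure Ω)ᶜ →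
        (∀ w ∉ closure Ω,
          (starRingEnd ℂ) (H w)
            = ∫ z in Ω, h z / ((starRingEnd ℂ) z - (starRingEnd ℂ) w)) →
        ∀ B : ℝ,
          (∀ w ∉ closure Ω, ∀ k ≤ M, ‖iteratedDeriv k H w‖ ≤ B) →
          ∀ z ∈ Ω, ∀ k ≤ N, ‖iteratedDeriv k h z‖ ≤ C * B := by
  obtain ⟨CL, hCL, hlay⟩ := hL
  obtain ⟨K, hK, hD⟩ := deriv_bound hΩ hb hG (N + 1)
  have hv : volume Ω < ⊤ := hb.measure_lt_top
  set V := volume.real Ω with hVdef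
  have hV0 : 0 ≤ V := measureReal_nonneg
  set q : ℝ := V * (2 * CL * K) with hq
  have hq0 : 0 ≤ q := by positivity
  refine ⟨N + 1, Nat.succ_pos N, K * (q + 2), by positivity, ?_⟩
  intro h H hh hsq _ hH B hB
  have hB0 : 0 ≤ B := by
    obtain ⟨w, hw⟩ := exterior_nonempty hb
    exact (norm_nonneg _).trans (hB w hw 0 (Nat.zero_le _))
  have hhm : AEStronglyMeasurable h (volume.restrict Ω) := hh.continuousOn.aestronglyMeasurable hΩ.measurableSet
  have hhi : IntegrableOn h Ω := by
    have i1 : IntegrableOn (fun _ : ℂ => (1 : ℝ)) Ω := integrableOn_const hv.ne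
    refine (i1.add hsq).mono' hhm (Eventually.of_forall fun z => ?_)
    change ‖h z‖ ≤ 1 + ‖h z‖ ^ 2
    nlinarith [sq_nonneg (‖h z‖ - 1)]
  have hH' : ∀ w ∉ closure Ω, H w = ∫ z in Ω, (starRingEnd ℂ) (h z) / (z - w) := by
    intro w hw
    have := congrArg (starRingEnd ℂ) (hH w hw)
    rw [Complex.conj_conj, ← integral_conj] at this
    rw [this]
    congr 1; ext z
    simp
  have hbd := hD h H hh hhi hH' B hB
  set A := ∫ z in Ω, ‖h z‖ with hA
  have hA0 : 0 ≤ A := integral_nonneg fun z => norm_nonneg _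
  have hS : ∀ z ∈ Ω, ‖h z‖ ≤ K * (B + A) := by
    intro z hz
    have := hbd z hz 0 (Nat.succ_pos N)
    rwa [iteratedDeriv_zero] at this
  have h2 := l2_bound hΩ hb hext hlay hh (S := K * (B + A)) (B := B) (by positivity) hS (by
    intro w hw
    rw [← hH' w hw]
    have := hB w hw 0 (Nat.zero_le _)
    rwa [iteratedDeriv_zero] at this)
  have h3 := cs_l1 hv hhi.norm hsq
  have hI0 : 0 ≤ ∫ z in Ω, ‖h z‖ ^ 2 := integral_nonneg fun z => by positivity
  have hpi : 1 ≤ Real.pi := by linarith [Real.pi_gt_three]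
  have h4 : ∫ z in Ω, ‖h z‖ ^ 2 ≤ 2 * CL * (K * (B + A)) * B := by nlinarith
  have h5 : A ^ 2 ≤ q * (B + A) * B := by
    calc A ^ 2 ≤ V * ∫ z in Ω, ‖h z‖ ^ 2 := h3
      _ ≤ V * (2 * CL * (K * (B + A)) * B) := by gcongr
      _ = q * (B + A) * B := by rw [hq]; ring
  have h6 : A ≤ (q + 1) * B := by
    by_contra hn
    push Not at hn
    have h7 : 0 < A := lt_of_le_of_lt (by positivity) hn
    have h8 : B ≤ A := by nlinarith [mul_nonneg hq0 hB0]
    nlinarith [mul_nonneg hq0 hB0, mul_le_mul_of_nonneg_left hn.le h7.le, mul_nonneg (mul_nonneg hq0 hB0) (sub_nonneg.2 h8), mul_lt_mul_of_pos_left hn h7, mul_le_mul_of_nonneg_left h8 hB0]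
  intro z hz k hk
  refine (hbd z hz k (Nat.lt_succ_of_le hk)).trans ?_
  rw [mul_assoc]
  gcongr
  linarith
end SDB


namespace SDB
open MeasureTheory Set Filter Topology Metric
open scoped NNReal

/-- Hypotheses on the parametrisation. -/
structure Crv (γ : ℝ → ℂ) : Prop where
  smooth : ContDiff ℝ (⊤ : ℕ∞) γ
  per : Function.Periodic γ (2 * Real.pi)
  inj : InjOn γ (Ico 0 (2 * Real.pi))
  reg : ∀ t, deriv γ t ≠ 0

lemma periodic_deriv {f : ℝ → ℂ} {T : ℝ} (hf : Function.Periodic f T) : Function.Periodic (deriv f) T := by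
  intro t
  rw [← deriv_comp_add_const]
  congr 1
  ext s; exact hf s

lemma periodic_bdd {f : ℝ → ℂ} (hc : Continuous f) (hf : Function.Periodic f (2 * Real.pi)) :
    ∃ C : ℝ, 0 < C ∧ ∀ t, ‖f t‖ ≤ C := by
  obtain ⟨C, hC⟩ := (isCompact_Icc (a := (0:ℝ)) (b := 2 * Real.pi)).exists_bound_of_continuousOn hc.continuousOn
  refine ⟨max C 1, by positivity, fun t => ?_⟩
  obtain ⟨s, hs, he⟩ := hf.exists_mem_Ico₀ (by positivity) t
  rw [he]
  exact (hC s (Ico_subset_Icc_self hs)).trans (le_max_left _ _)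

lemma near_rep (x t : ℝ) : ∃ k : ℤ, |t + k * (2 * Real.pi) - x| ≤ Real.pi := by
  refine ⟨-round ((t - x) / (2 * Real.pi)), ?_⟩
  have h := abs_sub_round ((t - x) / (2 * Real.pi))
  have hp := Real.pi_pos
  have e : t + ((-round ((t - x) / (2 * Real.pi)) : ℤ) : ℝ) * (2 * Real.pi) - x =
      ((t - x) / (2 * Real.pi) - round ((t - x) / (2 * Real.pi))) * (2 * Real.pi) := by
    push_cast; field_simp; ring
  rw [e, abs_mul, abs_of_pos (by positivity : 0 < 2 * Real.pi)]
  nlinarith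

lemma per_int {f : ℝ → ℂ} (hf : Function.Periodic f (2 * Real.pi)) (t : ℝ) (k : ℤ) :
    f (t + k * (2 * Real.pi)) = f t := hf.int_mul k t

lemma taylor_step {f f' : ℝ → ℂ} {M x : ℝ} {k : ℕ} (hM : 0 ≤ M) (hf : ∀ s, HasDerivAt f (f' s) s)
    (hb : ∀ s, ‖f' s‖ ≤ M * |s - x| ^ k) (h0 : f x = 0) (t : ℝ) : ‖f t‖ ≤ M * |t - x| ^ (k + 1) := by
  have := Convex.norm_image_sub_le_of_norm_hasDerivWithin_le (f := f) (f' := f') (s := uIcc x t)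
    (C := M * |t - x| ^ k) (x := x) (y := t) (fun s _ => (hf s).hasDerivWithinAt) (fun s hs => by
      refine (hb s).trans ?_
      have : |s - x| ≤ |t - x| := abs_sub_left_of_mem_uIcc hs
      gcongr) (convex_uIcc x t) left_mem_uIcc right_mem_uIcc
  rw [h0, sub_zero, Real.norm_eq_abs] at this
  rw [pow_succ, ← mul_assoc]
  exact this


variable {γ : ℝ → ℂ}

lemma Crv.cont (hγ : Crv γ) : Continuous γ := hγ.smooth.continuous
lemma Crv.diff (hγ : Crv γ) : Differentiable ℝ γ := hγ.smooth.differentiable (by simp)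
lemma Crv.hd (hγ : Crv γ) (t : ℝ) : HasDerivAt γ (deriv γ t) t := (hγ.diff t).hasDerivAt
lemma Crv.smooth_deriv (hγ : Crv γ) : ContDiff ℝ (⊤ : ℕ∞) (deriv γ) := by
  have := hγ.smooth.iterate_deriv 1
  simpa using this
lemma Crv.cont_deriv (hγ : Crv γ) : Continuous (deriv γ) := hγ.smooth_deriv.continuous
lemma Crv.bdd_deriv (hγ : Crv γ) : ∃ C : ℝ, 0 < C ∧ ∀ t, ‖deriv γ t‖ ≤ C :=
  periodic_bdd hγ.cont_deriv (periodic_deriv hγ.per)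

lemma Crv.low_deriv (hγ : Crv γ) : ∃ c : ℝ, 0 < c ∧ ∀ t, c ≤ ‖deriv γ t‖ := by
  have hp : Function.Periodic (fun t => (deriv γ t)⁻¹) (2 * Real.pi) := fun t => by
    change (deriv γ (t + 2 * Real.pi))⁻¹ = _
    rw [periodic_deriv hγ.per t]
  obtain ⟨C, hC, h⟩ := periodic_bdd (hγ.cont_deriv.inv₀ hγ.reg) hp
  refine ⟨C⁻¹, by positivity, fun t => ?_⟩
  have := h t
  rw [Pi.inv_apply, norm_inv] at this
  exact inv_le_of_inv_le₀ (norm_pos_iff.2 (hγ.reg t)) this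

lemma Crv.lip (hγ : Crv γ) {C : ℝ} (hC : ∀ t, ‖deriv γ t‖ ≤ C) (s t : ℝ) : ‖γ t - γ s‖ ≤ C * |t - s| := by
  have := Convex.norm_image_sub_le_of_norm_deriv_le (f := γ) (s := univ) (C := C) (x := s) (y := t)
    (fun x _ => hγ.diff x) (fun x _ => hC x) convex_univ (mem_univ _) (mem_univ _)
  simpa [Real.norm_eq_abs] using this

lemma Crv.taylor2 (hγ : Crv γ) : ∃ C : ℝ, 0 < C ∧ ∀ x t, ‖γ t - γ x - (t - x : ℝ) * deriv γ x‖ ≤ C * |t - x| ^ 2 := by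
  have hs2 : ContDiff ℝ (⊤ : ℕ∞) (deriv (deriv γ)) := by
    have := hγ.smooth.iterate_deriv 2
    simpa using this
  obtain ⟨C, hC, h⟩ := periodic_bdd hs2.continuous (periodic_deriv (periodic_deriv hγ.per))
  have hd2 : ∀ t, HasDerivAt (deriv γ) (deriv (deriv γ) t) t := fun t =>
    ((hγ.smooth_deriv.differentiable (by simp)) t).hasDerivAt
  refine ⟨C, hC, fun x t => ?_⟩
  have h1 : ∀ s, ‖deriv γ s - deriv γ x‖ ≤ C * |s - x| ^ 1 := by
    intro s
    refine taylor_step (f := fun s => deriv γ s - deriv γ x) (f' := deriv (deriv γ)) (k := 0) hC.le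
      (fun s => (hd2 s).sub_const _) (fun s => by simpa using h s) (by simp) s
  refine taylor_step (f := fun t => γ t - γ x - (t - x : ℝ) * deriv γ x) (f' := fun s => deriv γ s - deriv γ x)
    (k := 1) hC.le (fun s => ?_) h1 (by simp) t
  have e1 : HasDerivAt (fun t : ℝ => ((t - x : ℝ) : ℂ)) 1 s := by
    have := ((hasDerivAt_id s).sub_const x).ofReal_comp
    simpa using this
  have := ((hγ.hd s).sub_const (γ x)).sub (e1.mul_const (deriv γ x))
  rw [one_mul] at this
  exact this

lemma Crv.inj' (hγ : Crv γ) {s t : ℝ} (h : γ s = γ t) (hst : |s - t| ≤ Real.pi) : s = t := by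
  have hp := Real.two_pi_pos
  have h1 : γ (toIcoMod hp 0 s) = γ (toIcoMod hp 0 t) := by
    have e : ∀ u, γ (toIcoMod hp 0 u) = γ u := fun u => by
      rw [toIcoMod]
      exact hγ.per.sub_zsmul_eq _
    rw [e, e, h]
  have m : ∀ u, toIcoMod hp 0 u ∈ Ico 0 (2 * Real.pi) := fun u => by
    have := toIcoMod_mem_Ico hp 0 u
    rwa [zero_add] at this
  have h2 := hγ.inj (m s) (m t) h1
  have e3 := self_sub_toIcoMod hp 0 s
  have e4 := self_sub_toIcoMod hp 0 t
  have h5 : s - t = ((toIcoDiv hp 0 s - toIcoDiv hp 0 t : ℤ) : ℝ) * (2 * Real.pi) := by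
    simp only [zsmul_eq_mul] at e3 e4
    push_cast; linarith
  set k := toIcoDiv hp 0 s - toIcoDiv hp 0 t with hk
  by_cases hk0 : k = 0
  · rw [hk0] at h5; simp at h5; linarith
  · exfalso
    have : (1 : ℝ) ≤ |(k : ℝ)| := by exact_mod_cast Int.one_le_abs hk0
    rw [h5, abs_mul, abs_of_pos hp] at hst
    nlinarith [Real.pi_pos]

/-- off-diagonal chord bound -/
lemma Crv.far (hγ : Crv γ) {δ : ℝ} (hδ : 0 < δ) : ∃ c : ℝ, 0 < c ∧ ∀ x t, δ ≤ |t - x| → |t - x| ≤ Real.pi →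
    c ≤ ‖γ t - γ x‖ := by
  set K : Set (ℝ × ℝ) := Icc 0 (2 * Real.pi) ×ˢ (Icc (-Real.pi) Real.pi ∩ {u | δ ≤ |u|}) with hK
  have hKc : IsCompact K := isCompact_Icc.prod
    (isCompact_Icc.inter_right (isClosed_le continuous_const continuous_abs))
  have hcont : Continuous fun p : ℝ × ℝ => ‖γ (p.1 + p.2) - γ p.1‖ := by
    have := hγ.cont
    fun_prop
  have hpos : ∀ p ∈ K, 0 < ‖γ (p.1 + p.2) - γ p.1‖ := by
    rintro ⟨x, u⟩ ⟨_, hu, hu'⟩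
    rw [norm_pos_iff, sub_ne_zero]
    intro he
    have hu2 : |u| ≤ Real.pi := abs_le.2 hu
    have := hγ.inj' he (by simpa using hu2)
    have h0 : u = 0 := by simpa using this
    change δ ≤ |u| at hu'
    rw [h0, abs_zero] at hu'
    linarith
  obtain ⟨c, hc, h⟩ := hKc.exists_forall_le' (a := 0) hcont.continuousOn hpos
  refine ⟨c, hc, fun x t h1 h2 => ?_⟩
  obtain ⟨s, hs, k, hk⟩ : ∃ s ∈ Icc 0 (2 * Real.pi), ∃ k : ℤ, s = x + k * (2 * Real.pi) := by
    refine ⟨toIcoMod Real.two_pi_pos 0 x, ?_, -toIcoDiv Real.two_pi_pos 0 x, ?_⟩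
    · have := toIcoMod_mem_Ico Real.two_pi_pos 0 x
      rw [zero_add] at this
      exact Ico_subset_Icc_self this
    · have := self_sub_toIcoMod Real.two_pi_pos 0 x
      rw [zsmul_eq_mul] at this
      push_cast; linarith
  have := h (s, t - x) ⟨hs, abs_le.1 h2, h1⟩
  simp only at this
  rw [hk, per_int hγ.per, show x + k * (2 * Real.pi) + (t - x) = t + k * (2 * Real.pi) by ring, per_int hγ.per] at this
  exact this

/-- Normal offset curve -/
noncomputable def off (γ : ℝ → ℂ) (x σ : ℝ) : ℂ := γ x + Complex.I * σ * deriv γ x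

lemma norm_cplx_ge (a b : ℝ) : (|a| + |b|) / 2 ≤ ‖(Complex.I * a - b : ℂ)‖ := by
  have h1 := Complex.abs_re_le_norm (Complex.I * a - b : ℂ)
  have h2 := Complex.abs_im_le_norm (Complex.I * a - b : ℂ)
  simp at h1 h2
  linarith

lemma Crv.off_low (hγ : Crv γ) : ∃ σ0 : ℝ, 0 < σ0 ∧ ∃ c : ℝ, 0 < c ∧ ∀ x σ t, |σ| ≤ σ0 → |t - x| ≤ Real.pi →
    c * (|t - x| + |σ|) ≤ ‖γ t - off γ x σ‖ := by
  obtain ⟨c1, hc1, hlow⟩ := hγ.low_deriv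
  obtain ⟨C1, hC1, hup⟩ := hγ.bdd_deriv
  obtain ⟨C2, hC2, htay⟩ := hγ.taylor2
  set δ := c1 / (4 * C2) with hδ
  have hδ0 : 0 < δ := by positivity
  obtain ⟨c3, hc3, hfar⟩ := hγ.far hδ0
  set σ0 := min 1 (c3 / (2 * C1)) with hσ0
  have hpi := Real.pi_pos
  refine ⟨σ0, by positivity, min (c1 / 4) (c3 / (2 * (Real.pi + 1))), by positivity, ?_⟩
  intro x σ t hσ ht
  have ha := abs_nonneg (t - x)
  have hb := abs_nonneg σ
  by_cases hd : |t - x| ≤ δ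
  · have h1 := htay x t
    have e : γ t - off γ x σ = (γ t - γ x - (t - x : ℝ) * deriv γ x) - (Complex.I * σ - (t - x : ℝ)) * deriv γ x := by
      unfold off; ring
    have h2 := norm_sub_norm_le ((Complex.I * σ - (t - x : ℝ)) * deriv γ x) (γ t - γ x - (t - x : ℝ) * deriv γ x)
    rw [norm_sub_rev ((Complex.I * σ - (t - x : ℝ)) * deriv γ x), ← e, norm_mul] at h2
    have h3 : (|σ| + |t - x|) / 2 * c1 ≤ ‖(Complex.I * σ - (t - x : ℝ) : ℂ)‖ * ‖deriv γ x‖ :=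
      mul_le_mul (norm_cplx_ge _ _) (hlow x) hc1.le (norm_nonneg _)
    have h4 : C2 * |t - x| ^ 2 ≤ c1 / 4 * |t - x| := by
      have : C2 * |t - x| ≤ c1 / 4 := by
        calc C2 * |t - x| ≤ C2 * δ := by gcongr
          _ = c1 / 4 := by rw [hδ]; field_simp
      nlinarith
    calc _ ≤ c1 / 4 * (|t - x| + |σ|) := by gcongr; exact min_le_left _ _
      _ ≤ _ := by nlinarith
  · push Not at hd
    have h1 := hfar x t hd.le ht
    have h2 : ‖Complex.I * σ * deriv γ x‖ ≤ c3 / 2 := by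
      rw [norm_mul, norm_mul, Complex.norm_I, one_mul, Complex.norm_real, Real.norm_eq_abs]
      calc |σ| * ‖deriv γ x‖ ≤ c3 / (2 * C1) * C1 := by
            gcongr
            · exact hσ.trans (min_le_right _ _)
            · exact hup x
        _ = c3 / 2 := by field_simp
    have h3 := norm_sub_norm_le (γ t - γ x) (Complex.I * σ * deriv γ x)
    have e : γ t - γ x - Complex.I * σ * deriv γ x = γ t - off γ x σ := by unfold off; ring
    rw [e] at h3
    have hσ1 : |σ| ≤ 1 := hσ.trans (min_le_left _ _)
    calc _ ≤ c3 / (2 * (Real.pi + 1)) * (Real.pi + 1) := by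
          gcongr
          exact min_le_right _ _
      _ = c3 / 2 := by field_simp
      _ ≤ _ := by linarith

lemma Crv.chord (hγ : Crv γ) : ∃ c : ℝ, 0 < c ∧ ∀ x t, |t - x| ≤ Real.pi → c * |t - x| ≤ ‖γ t - γ x‖ := by
  obtain ⟨σ0, h0, c, hc, h⟩ := hγ.off_low
  refine ⟨c, hc, fun x t ht => ?_⟩
  have := h x 0 t (by simpa using h0.le) ht
  simpa [off] using this

lemma Crv.nearest (hγ : Crv γ) {a : ℂ} {x : ℝ} (hx : ∀ t, ‖a - γ x‖ ≤ ‖a - γ t‖) :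
    ∃ σ : ℝ, a = off γ x σ := by
  have hmin : IsLocalMin (fun t => ‖a - γ t‖ ^ 2) x := by
    refine Eventually.of_forall fun t => ?_
    have := hx t
    change ‖a - γ x‖ ^ 2 ≤ ‖a - γ t‖ ^ 2
    gcongr
  have hd : HasDerivAt (fun t => ‖a - γ t‖ ^ 2) (2 * inner ℝ (a - γ x) (- deriv γ x)) x :=
    ((hγ.hd x).const_sub a).norm_sq
  have h0 := hmin.hasDerivAt_eq_zero hd
  have h1 : inner ℝ (a - γ x) (deriv γ x) = 0 := by
    rw [inner_neg_right] at h0; linarith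
  rw [Complex.inner] at h1
  have hne := hγ.reg x
  refine ⟨((a - γ x) / deriv γ x).im, ?_⟩
  have hre : ((a - γ x) / deriv γ x).re = 0 := by
    rw [Complex.div_re]
    simp at h1
    have : (a - γ x).re * (deriv γ x).re + (a - γ x).im * (deriv γ x).im = 0 := by
      simp; linarith
    rw [← add_div, this, zero_div]
  have h2 : (a - γ x) / deriv γ x = Complex.I * (((a - γ x) / deriv γ x).im : ℝ) := by
    apply Complex.ext
    · simp only [hre]; simp
    · simp
  unfold off
  rw [← h2, div_mul_cancel₀ _ hne]
  ring

lemma Crv.exists_nearest (hγ : Crv γ) (a : ℂ) : ∃ x, ∀ t, ‖a - γ x‖ ≤ ‖a - γ t‖ := by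
  have hc : ContinuousOn (fun t => ‖a - γ t‖) (Icc 0 (2 * Real.pi)) := by
    have := hγ.cont
    fun_prop
  obtain ⟨x, _, hx⟩ := isCompact_Icc.exists_isMinOn (nonempty_Icc.2 Real.two_pi_pos.le) hc
  refine ⟨x, fun t => ?_⟩
  obtain ⟨s, hs, he⟩ := hγ.per.exists_mem_Ico₀ Real.two_pi_pos t
  rw [he]
  exact hx (Ico_subset_Icc_self hs)

end SDB


namespace SDB
open MeasureTheory Set Filter Topology Metric
open scoped NNReal

variable {γ : ℝ → ℂ} {Ω : Set ℂ}

lemma off_norm (x σ : ℝ) : ‖off γ x σ - γ x‖ = |σ| * ‖deriv γ x‖ := by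
  unfold off
  rw [add_sub_cancel_left, norm_mul, norm_mul, Complex.norm_I, one_mul, Complex.norm_real, Real.norm_eq_abs]

lemma Crv.off_far (hγ : Crv γ) (hbd : frontier Ω = range γ) : ∃ σ0 : ℝ, 0 < σ0 ∧ ∃ c : ℝ, 0 < c ∧
    ∀ x σ, |σ| ≤ σ0 → ∀ y ∈ frontier Ω, c * |σ| ≤ ‖y - off γ x σ‖ := by
  obtain ⟨σ0, h0, c, hc, h⟩ := hγ.off_low
  refine ⟨σ0, h0, c, hc, fun x σ hσ y hy => ?_⟩
  rw [hbd] at hy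
  obtain ⟨t, rfl⟩ := hy
  obtain ⟨k, hk⟩ := near_rep x t
  have := h x σ _ hσ hk
  rw [per_int hγ.per] at this
  refine le_trans ?_ this
  gcongr
  linarith [abs_nonneg (t + k * (2 * Real.pi) - x)]

lemma notMem_frontier_cases (hΩ : IsOpen Ω) {z : ℂ} (hz : z ∉ frontier Ω) : z ∈ Ω ∨ z ∈ (closure Ω)ᶜ := by
  by_cases h : z ∈ Ω
  · exact Or.inl h
  · right
    intro hc
    exact hz (by rw [hΩ.frontier_eq]; exact ⟨hc, h⟩)

lemma conn_cases (hΩ : IsOpen Ω) {S : Set ℂ} (hS : IsPreconnected S) (hd : ∀ z ∈ S, z ∉ frontier Ω) :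
    S ⊆ Ω ∨ S ⊆ (closure Ω)ᶜ := by
  refine isPreconnected_iff_subset_of_disjoint.1 hS Ω _ hΩ isClosed_closure.isOpen_compl
    (fun z hz => notMem_frontier_cases hΩ (hd z hz)) ?_
  ext z
  simp only [mem_inter_iff, mem_compl_iff, mem_empty_iff_false, iff_false, not_and, not_not]
  intro _ h
  exact subset_closure h

lemma Crv.sides (hγ : Crv γ) (hΩ : IsOpen Ω) (hne : Ω.Nonempty) (hb : Bornology.IsBounded Ω)
    (hbd : frontier Ω = range γ) :
    ∃ σ0 : ℝ, 0 < σ0 ∧ ∃ e : ℝ, (e = 1 ∨ e = -1) ∧ ∀ x σ, 0 < σ → σ ≤ σ0 → off γ x (e * σ) ∉ closure Ω := by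
  obtain ⟨σ0, h0, c, hc, h⟩ := hγ.off_far hbd
  refine ⟨σ0, h0, ?_⟩
  have hoff : Continuous fun p : ℝ × ℝ => off γ p.1 p.2 := by
    have h1 := hγ.cont
    have h2 := hγ.cont_deriv
    unfold off
    fun_prop
  have key : ∀ e : ℝ, |e| = 1 → (∀ x σ, 0 < σ → σ ≤ σ0 → off γ x (e * σ) ∈ Ω) ∨
      (∀ x σ, 0 < σ → σ ≤ σ0 → off γ x (e * σ) ∉ closure Ω) := by
    intro e he
    have hpre : IsPreconnected ((fun p : ℝ × ℝ => off γ p.1 (e * p.2)) '' (univ ×ˢ Ioc 0 σ0)) := by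
      refine (isPreconnected_univ.prod isPreconnected_Ioc).image _ ?_
      exact (hoff.comp (continuous_fst.prodMk (continuous_const.mul continuous_snd))).continuousOn
    have hcs := conn_cases hΩ hpre (by
      rintro _ ⟨⟨x, σ⟩, ⟨_, hσ⟩, rfl⟩ hf
      have h2 : |e * σ| = σ := by rw [abs_mul, he, one_mul, abs_of_pos hσ.1]
      have := h x (e * σ) (by rw [h2]; exact hσ.2) _ hf
      simp only [sub_self, norm_zero, h2] at this
      have := mul_pos hc hσ.1
      linarith)
    rcases hcs with h' | h'
    · left
      intro x σ h1 h2
      exact h' ⟨(x, σ), ⟨mem_univ _, h1, h2⟩, rfl⟩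
    · right
      intro x σ h1 h2
      exact h' ⟨(x, σ), ⟨mem_univ _, h1, h2⟩, rfl⟩
  rcases key 1 (by simp) with k1 | k1
  · rcases key (-1) (by simp) with k2 | k2
    · exfalso
      obtain ⟨c1, hc1, hlow⟩ := hγ.low_deriv
      have hopen : IsOpen (closure Ω) := by
        rw [isOpen_iff_mem_nhds]
        intro y hy
        by_cases hyΩ : y ∈ Ω
        · exact mem_of_superset (hΩ.mem_nhds hyΩ) subset_closure
        · have hyf : y ∈ frontier Ω := by rw [hΩ.frontier_eq]; exact ⟨hy, hyΩ⟩
          refine mem_of_superset (ball_mem_nhds y (mul_pos h0 hc1)) fun z hz => ?_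
          obtain ⟨x, hx⟩ := hγ.exists_nearest z
          obtain ⟨σ, hσ⟩ := hγ.nearest hx
          rw [hbd] at hyf
          obtain ⟨t, rfl⟩ := hyf
          have h1 := hx t
          rw [mem_ball, dist_eq_norm] at hz
          have h2 := off_norm (γ := γ) x σ
          rw [← hσ] at h2
          have h3 : |σ| * c1 < σ0 * c1 := by
            have : |σ| * c1 ≤ |σ| * ‖deriv γ x‖ := by gcongr; exact hlow x
            linarith
          have h4 : |σ| < σ0 := lt_of_mul_lt_mul_right h3 hc1.le
          rcases lt_trichotomy σ 0 with hs | hs | hs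
          · have := k2 x (-σ) (by linarith) (by rw [abs_of_neg hs] at h4; exact h4.le)
            rw [neg_one_mul, neg_neg, ← hσ] at this
            exact subset_closure this
          · have : z = γ x := by rw [hσ, hs]; simp [off]
            rw [this]
            apply frontier_subset_closure
            rw [hbd]; exact mem_range_self x
          · have := k1 x σ hs (by rw [abs_of_pos hs] at h4; exact h4.le)
            rw [one_mul, ← hσ] at this
            exact subset_closure this
      have huniv : closure Ω = univ := IsClopen.eq_univ ⟨isClosed_closure, hopen⟩ hne.closure
      have := hb.closure
      rw [huniv] at this
      exact NormedSpace.unbounded_univ ℝ ℂ this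
    · exact ⟨-1, Or.inr rfl, k2⟩
  · exact ⟨1, Or.inl rfl, k1⟩

lemma Crv.ext_dense (hγ : Crv γ) (hΩ : IsOpen Ω) (hne : Ω.Nonempty) (hb : Bornology.IsBounded Ω)
    (hbd : frontier Ω = range γ) : frontier Ω ⊆ closure (closure Ω)ᶜ := by
  obtain ⟨σ0, h0, e, he, h⟩ := hγ.sides hΩ hne hb hbd
  obtain ⟨C, hC, hup⟩ := hγ.bdd_deriv
  have he1 : |e| = 1 := by rcases he with rfl | rfl <;> simp
  intro y hy
  rw [hbd] at hy
  obtain ⟨x, rfl⟩ := hy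
  rw [Metric.mem_closure_iff]
  intro ε hε
  set σ := min σ0 (ε / (2 * C)) with hσ
  have hσ0 : 0 < σ := by positivity
  refine ⟨off γ x (e * σ), h x σ hσ0 (min_le_left _ _), ?_⟩
  rw [dist_comm, dist_eq_norm, off_norm, abs_mul, he1, one_mul, abs_of_pos hσ0]
  calc σ * ‖deriv γ x‖ ≤ ε / (2 * C) * C := by
        gcongr
        · exact min_le_right _ _
        · exact hup x
    _ = ε / 2 := by field_simp
    _ < ε := by linarith

/-- Reflection: an interior point near the boundary has an exterior reflected point. -/
lemma Crv.reflect (hγ : Crv γ) (hΩ : IsOpen Ω) (hne : Ω.Nonempty) (hb : Bornology.IsBounded Ω)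
    (hbd : frontier Ω = range γ) : ∃ σ0 : ℝ, 0 < σ0 ∧ ∃ c : ℝ, 0 < c ∧
    ∀ s, 0 < s → s ≤ σ0 → ∀ a ∈ Ω, infDist a Ωᶜ < c * s → ∃ x σ, σ ≠ 0 ∧ |σ| ≤ s ∧ a = off γ x σ ∧
      ∀ w, ‖w - off γ x (-σ)‖ < c * |σ| → w ∉ closure Ω := by
  obtain ⟨σ0, h0, e, he, h⟩ := hγ.sides hΩ hne hb hbd
  obtain ⟨σ1, h1, c, hc, hfar⟩ := hγ.off_far hbd
  obtain ⟨c1, hc1, hlow⟩ := hγ.low_deriv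
  refine ⟨min σ0 σ1, by positivity, min c c1, by positivity, ?_⟩
  intro s hs hs0 a ha had
  have hΩu : Ω ≠ univ := by
    rintro rfl
    exact NormedSpace.unbounded_univ ℝ ℂ hb
  obtain ⟨y, hy, hd⟩ := exists_mem_frontier_infDist_compl_eq_dist ha hΩu
  rw [hbd] at hy
  obtain ⟨x, rfl⟩ := hy
  have hfΩ : ∀ t, γ t ∈ Ωᶜ := by
    intro t
    have : γ t ∈ frontier Ω := by rw [hbd]; exact mem_range_self t
    rw [hΩ.frontier_eq] at this
    exact this.2
  obtain ⟨σ, hσ⟩ := hγ.nearest (a := a) (x := x) (fun t => by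
    rw [← dist_eq_norm, ← dist_eq_norm, ← hd]
    exact infDist_le_dist_of_mem (hfΩ t))
  have hσ0 : σ ≠ 0 := by
    rintro rfl
    have : a = γ x := by rw [hσ]; simp [off]
    rw [this] at ha
    exact hfΩ x ha
  have hσs : |σ| ≤ s := by
    rw [hd, dist_eq_norm] at had
    have h2 := off_norm (γ := γ) x σ
    rw [← hσ] at h2
    have h3 : |σ| * c1 ≤ |σ| * ‖deriv γ x‖ := by gcongr; exact hlow x
    have h4 : min c c1 * s ≤ c1 * s := by gcongr; exact min_le_right _ _
    by_contra hn
    push Not at hn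
    nlinarith
  have hσ00 : |σ| ≤ σ0 := hσs.trans (hs0.trans (min_le_left _ _))
  have hσ11 : |σ| ≤ σ1 := hσs.trans (hs0.trans (min_le_right _ _))
  have hpos : 0 < |σ| := abs_pos.2 hσ0
  have hside : off γ x (-σ) ∉ closure Ω := by
    have h5 := h x |σ| hpos hσ00
    have h6 : e * |σ| = σ ∨ e * |σ| = -σ := by
      rcases he with rfl | rfl
      · rw [one_mul]; exact abs_choice σ
      · rcases abs_choice σ with h' | h' <;> rw [h'] <;> simp
    rcases h6 with h6 | h6
    · rw [h6, ← hσ] at h5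
      exact absurd (subset_closure ha) h5
    · rwa [h6] at h5
  refine ⟨x, σ, hσ0, hσs, hσ, fun w hw => ?_⟩
  have hball := conn_cases (S := ball (off γ x (-σ)) (min c c1 * |σ|)) hΩ (convex_ball _ _).isPreconnected (by
    intro z hz hf
    rw [mem_ball, dist_eq_norm] at hz
    have h5 := hfar x (-σ) (by rwa [abs_neg]) z hf
    rw [abs_neg] at h5
    have : min c c1 * |σ| ≤ c * |σ| := by gcongr; exact min_le_left _ _
    linarith)
  have hcen : off γ x (-σ) ∈ ball (off γ x (-σ)) (min c c1 * |σ|) := mem_ball_self (by positivity)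
  rcases hball with h7 | h7
  · exact absurd (subset_closure (h7 hcen)) hside
  · exact h7 (by rw [mem_ball, dist_eq_norm]; exact hw)

lemma Crv.layer_bound (hγ : Crv γ) (hb : Bornology.IsBounded Ω)
    (hbd : frontier Ω = range γ) :
    ∃ CL : ℝ, 0 < CL ∧ ∀ ε, 0 < ε → ε < 1 → volume.real (layer Ω ε) ≤ CL * ε := by
  obtain ⟨C, hC, hup⟩ := hγ.bdd_deriv
  have hpi := Real.pi_pos
  set R := 2 + C * (2 * Real.pi) with hR
  have hR0 : 0 < R := by positivity
  refine ⟨2 * (R ^ 2 * Real.pi), by positivity, fun ε hε hε1 => ?_⟩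
  have hΩu : Ω ≠ univ := by
    rintro rfl
    exact NormedSpace.unbounded_univ ℝ ℂ hb
  set n := ⌈1 / ε⌉₊ with hn
  have hn1 : 1 / ε ≤ n := Nat.le_ceil _
  have hn2 : (n : ℝ) ≤ 1 / ε + 1 := (Nat.ceil_lt_add_one (by positivity)).le
  have hn0 : (0 : ℝ) < n := lt_of_lt_of_le (by positivity) hn1
  have hsub : layer Ω ε ⊆ ⋃ j ∈ Finset.range n, ball (γ (2 * Real.pi * j / n)) (R * ε) := by
    rintro z ⟨hz, hd⟩
    obtain ⟨y, hy, hdy⟩ := exists_mem_frontier_infDist_compl_eq_dist hz hΩu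
    rw [hbd] at hy
    obtain ⟨t, rfl⟩ := hy
    obtain ⟨s, hs, hts⟩ := hγ.per.exists_mem_Ico₀ Real.two_pi_pos t
    rw [hts] at hdy
    set j := ⌊s * n / (2 * Real.pi)⌋₊ with hj
    have hq0 : 0 ≤ s * n / (2 * Real.pi) := div_nonneg (mul_nonneg hs.1 hn0.le) (by positivity)
    have hj1 : (j : ℝ) ≤ s * n / (2 * Real.pi) := Nat.floor_le hq0
    have hj2 : s * n / (2 * Real.pi) < j + 1 := Nat.lt_floor_add_one _
    have hjn : j < n := by
      have : s * n / (2 * Real.pi) < n := by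
        rw [div_lt_iff₀ (by positivity)]
        nlinarith [hs.2]
      exact_mod_cast hj1.trans_lt this
    simp only [mem_iUnion, Finset.mem_range, exists_prop]
    refine ⟨j, hjn, ?_⟩
    rw [mem_ball]
    have h1 := hγ.lip hup (2 * Real.pi * j / n) s
    have h2 : |s - 2 * Real.pi * j / n| ≤ 2 * Real.pi * ε := by
      have e : s - 2 * Real.pi * j / n = 2 * Real.pi / n * (s * n / (2 * Real.pi) - j) := by field_simp
      rw [e, abs_mul, abs_of_pos (by positivity), abs_of_nonneg (by linarith)]
      have h4 : 2 * Real.pi / n ≤ 2 * Real.pi * ε := by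
        rw [div_le_iff₀ hn0]
        have : 1 ≤ ε * n := by rw [div_le_iff₀ hε] at hn1; linarith
        nlinarith
      calc _ ≤ 2 * Real.pi / n * 1 := by gcongr; linarith
        _ ≤ _ := by linarith
    have h5 := dist_triangle z (γ s) (γ (2 * Real.pi * j / n))
    rw [dist_eq_norm (γ s)] at h5
    have h6 : C * |s - 2 * Real.pi * j / n| ≤ C * (2 * Real.pi * ε) := by gcongr
    rw [hR]
    linarith
  have hball : ∀ z : ℂ, volume.real (ball z (R * ε)) = (R * ε) ^ 2 * Real.pi := by
    intro z
    rw [measureReal_def, Complex.volume_ball]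
    simp [ENNReal.toReal_mul, ENNReal.toReal_ofReal (by positivity : 0 ≤ R * ε)]
  have h1 : volume.real (layer Ω ε) ≤ ∑ j ∈ Finset.range n, volume.real (ball (γ (2 * Real.pi * j / n)) (R * ε)) := by
    refine (measureReal_mono hsub ?_).trans (measureReal_biUnion_finset_le _ _)
    refine ((measure_biUnion_finset_le _ _).trans_lt ?_).ne
    exact ENNReal.sum_lt_top.2 fun j _ => measure_ball_lt_top
  refine h1.trans ?_
  simp only [hball, Finset.sum_const, Finset.card_range, nsmul_eq_mul]
  have h2 : (n : ℝ) * ε ≤ 2 := by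
    calc (n : ℝ) * ε ≤ (1 / ε + 1) * ε := by gcongr
      _ = 1 + ε := by field_simp
      _ ≤ 2 := by linarith
  calc (n : ℝ) * ((R * ε) ^ 2 * Real.pi) = (n * ε) * (R ^ 2 * Real.pi) * ε := by ring
    _ ≤ 2 * (R ^ 2 * Real.pi) * ε := by gcongr

end SDB


namespace SDB
open MeasureTheory Set Filter Topology Metric
open scoped NNReal

variable {γ : ℝ → ℂ} {Ω : Set ℂ}

/-- conjugate curve -/
noncomputable def Yc (γ : ℝ → ℂ) (t : ℝ) : ℂ := (starRingEnd ℂ) (γ t)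
/-- its derivative -/
noncomputable def Yd (γ : ℝ → ℂ) (t : ℝ) : ℂ := (starRingEnd ℂ) (deriv γ t)

lemma Crv.hasDeriv_Yc (hγ : Crv γ) (t : ℝ) : HasDerivAt (Yc γ) (Yd γ t) t := by
  have := (hγ.hd t).star
  exact this

lemma Crv.Yd_ne (hγ : Crv γ) (t : ℝ) : Yd γ t ≠ 0 := by
  unfold Yd
  exact (map_ne_zero _).2 (hγ.reg t)

/-- iterated derivatives of `γ` with respect to `conj γ` -/
noncomputable def Gk (γ : ℝ → ℂ) : ℕ → ℝ → ℂ
  | 0 => γ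
  | (k + 1) => fun t => deriv (Gk γ k) t / Yd γ t

lemma Crv.Yd_smooth (hγ : Crv γ) : ContDiff ℝ (⊤ : ℕ∞) (Yd γ) :=
  Complex.conjCLE.contDiff.comp hγ.smooth_deriv

lemma Crv.Yd_per (hγ : Crv γ) : Function.Periodic (Yd γ) (2 * Real.pi) := fun t => by
  unfold Yd; rw [periodic_deriv hγ.per t]

lemma Crv.Gk_props (hγ : Crv γ) (k : ℕ) : ContDiff ℝ (⊤ : ℕ∞) (Gk γ k) ∧ Function.Periodic (Gk γ k) (2 * Real.pi) := by
  induction k with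
  | zero => exact ⟨hγ.smooth, hγ.per⟩
  | succ k ih =>
    have h1 : ContDiff ℝ (⊤ : ℕ∞) (deriv (Gk γ k)) := by
      have := ih.1.iterate_deriv 1
      simpa using this
    refine ⟨?_, fun t => ?_⟩
    · have h2 : ContDiff ℝ (⊤ : ℕ∞) (fun t => deriv (Gk γ k) t * (Yd γ t)⁻¹) :=
        h1.mul (hγ.Yd_smooth.inv hγ.Yd_ne)
      simp_rw [← div_eq_mul_inv] at h2
      exact h2
    change deriv (Gk γ k) _ / Yd γ _ = deriv (Gk γ k) t / Yd γ t
    rw [periodic_deriv ih.2 t, hγ.Yd_per t]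

lemma Crv.Gk_deriv (hγ : Crv γ) (k : ℕ) (t : ℝ) : HasDerivAt (Gk γ k) (Yd γ t * Gk γ (k + 1) t) t := by
  have h := (((hγ.Gk_props k).1.differentiable (by simp)) t).hasDerivAt
  refine h.congr_deriv ?_
  change _ = Yd γ t * (deriv (Gk γ k) t / Yd γ t)
  rw [mul_div_cancel₀ _ (hγ.Yd_ne t)]

lemma Crv.Gk_bdd (hγ : Crv γ) (k : ℕ) : ∃ C : ℝ, 0 < C ∧ ∀ t, ‖Gk γ k t‖ ≤ C :=
  periodic_bdd (hγ.Gk_props k).1.continuous (hγ.Gk_props k).2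

/-- Taylor remainder with respect to `conj γ` -/
noncomputable def Rk (γ : ℝ → ℂ) (k L : ℕ) (x t : ℝ) : ℂ :=
  Gk γ k t - ∑ i ∈ Finset.range (L + 1), Gk γ (k + i) x / (i.factorial : ℂ) * (Yc γ t - Yc γ x) ^ i

lemma Rk_self (k L : ℕ) (x : ℝ) : Rk γ k L x x = 0 := by
  unfold Rk
  rw [Finset.sum_range_succ']
  simp

lemma Crv.Rk_deriv (hγ : Crv γ) (k L : ℕ) (x t : ℝ) :
    HasDerivAt (Rk γ k (L + 1) x) (Yd γ t * Rk γ (k + 1) L x t) t := by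
  have h1 : ∀ i ∈ Finset.range (L + 1 + 1), HasDerivAt (fun t => Gk γ (k + i) x / (i.factorial : ℂ) * (Yc γ t - Yc γ x) ^ i)
      (Gk γ (k + i) x / (i.factorial : ℂ) * (i * (Yc γ t - Yc γ x) ^ (i - 1) * Yd γ t)) t := by
    intro i _
    exact (((hγ.hasDeriv_Yc t).sub_const _).fun_pow i).const_mul _
  have h2 := (hγ.Gk_deriv k t).sub (HasDerivAt.fun_sum h1)
  refine HasDerivAt.congr_deriv (f' := _) (show HasDerivAt (Rk γ k (L + 1) x) _ t from h2) ?_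
  unfold Rk
  rw [mul_sub, Finset.mul_sum, Finset.sum_range_succ']
  simp only [Nat.cast_zero, zero_mul, mul_zero, add_zero]
  congr 1
  refine Finset.sum_congr rfl fun i _ => ?_
  rw [Nat.factorial_succ, Nat.add_sub_cancel, show k + (i + 1) = k + 1 + i by ring]
  have h3 : (i.factorial : ℂ) ≠ 0 := by exact_mod_cast i.factorial_ne_zero
  have h4 : ((i : ℂ) + 1) ≠ 0 := by exact_mod_cast i.succ_ne_zero
  push_cast
  field_simp

lemma Crv.Rk_bound (hγ : Crv γ) (L : ℕ) : ∀ k, ∃ C : ℝ, 0 < C ∧ ∀ x t, ‖Rk γ k L x t‖ ≤ C * |t - x| ^ (L + 1) := by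
  obtain ⟨CY, hCY, hY⟩ := periodic_bdd hγ.Yd_smooth.continuous hγ.Yd_per
  induction L with
  | zero =>
    intro k
    obtain ⟨C, hC, h⟩ := hγ.Gk_bdd (k + 1)
    refine ⟨CY * C, by positivity, fun x t => ?_⟩
    refine taylor_step (f := Rk γ k 0 x) (f' := fun s => Yd γ s * Gk γ (k + 1) s) (k := 0) (by positivity)
      (fun s => ?_) (fun s => ?_) (Rk_self k 0 x) t
    · have e : Rk γ k 0 x = fun s => Gk γ k s - Gk γ k x := by
        ext s; simp [Rk]
      rw [e]
      exact (hγ.Gk_deriv k s).sub_const _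
    · rw [norm_mul, pow_zero, mul_one]
      exact mul_le_mul (hY s) (h s) (norm_nonneg _) hCY.le
  | succ L ih =>
    intro k
    obtain ⟨C, hC, h⟩ := ih (k + 1)
    refine ⟨CY * C, by positivity, fun x t => ?_⟩
    refine taylor_step (f := Rk γ k (L + 1) x) (f' := fun s => Yd γ s * Rk γ (k + 1) L x s) (k := L + 1) (by positivity)
      (fun s => hγ.Rk_deriv k L x s) (fun s => ?_) (Rk_self k (L + 1) x) t
    rw [norm_mul, mul_assoc]
    exact mul_le_mul (hY s) (h x s) (norm_nonneg _) hCY.le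

end SDB


namespace SDB
open Set Filter Topology Metric
open Polynomial (X C divX eval derivative)

/-- uniformly bounded families of polynomials -/
def BdF {ι : Type} (p : ι → Polynomial ℂ) : Prop :=
  ∃ c : ℝ, 0 ≤ c ∧ ∃ d : ℕ, ∀ i, (p i).natDegree ≤ d ∧ ∀ k, ‖(p i).coeff k‖ ≤ c

namespace BdF
variable {ι : Type} {p q : ι → Polynomial ℂ}

lemma add (hp : BdF p) (hq : BdF q) : BdF (fun i => p i + q i) := by
  obtain ⟨c, hc, d, h⟩ := hp
  obtain ⟨c', hc', d', h'⟩ := hq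
  refine ⟨c + c', by positivity, max d d', fun i => ⟨?_, fun k => ?_⟩⟩
  · exact (Polynomial.natDegree_add_le _ _).trans (max_le_max (h i).1 (h' i).1)
  · rw [Polynomial.coeff_add]
    exact (norm_add_le _ _).trans (add_le_add ((h i).2 k) ((h' i).2 k))

lemma mul (hp : BdF p) (hq : BdF q) : BdF (fun i => p i * q i) := by
  obtain ⟨c, hc, d, h⟩ := hp
  obtain ⟨c', hc', d', h'⟩ := hq
  refine ⟨(d + d' + 1) * (c * c'), by positivity, d + d', fun i => ?_⟩
  have hdeg : (p i * q i).natDegree ≤ d + d' := Polynomial.natDegree_mul_le.trans (add_le_add (h i).1 (h' i).1)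
  refine ⟨hdeg, fun k => ?_⟩
  by_cases hk : d + d' < k
  · rw [Polynomial.coeff_eq_zero_of_natDegree_lt (hdeg.trans_lt hk), norm_zero]
    positivity
  · push Not at hk
    rw [Polynomial.coeff_mul]
    calc _ ≤ ∑ x ∈ Finset.HasAntidiagonal.antidiagonal k, c * c' := by
          refine norm_sum_le_of_le _ fun x _ => ?_
          rw [norm_mul]
          exact mul_le_mul ((h i).2 _) ((h' i).2 _) (norm_nonneg _) hc
      _ = (k + 1) * (c * c') := by simp
      _ ≤ _ := by
          gcongr
          exact_mod_cast hk

lemma const {a : ι → ℂ} {c : ℝ} (ha : ∀ i, ‖a i‖ ≤ c) : BdF (fun i => C (a i)) := by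
  refine ⟨max c 0, le_max_right _ _, 0, fun i => ⟨by simp, fun k => ?_⟩⟩
  rw [Polynomial.coeff_C]
  split_ifs
  · exact (ha i).trans (le_max_left _ _)
  · simp

lemma X : BdF (fun _ : ι => (X : Polynomial ℂ)) := by
  refine ⟨1, zero_le_one, 1, fun i => ⟨Polynomial.natDegree_X_le, fun k => ?_⟩⟩
  rw [Polynomial.coeff_X]
  split_ifs <;> simp

lemma pow (hp : BdF p) (n : ℕ) : BdF (fun i => p i ^ n) := by
  induction n with
  | zero =>
    simp only [pow_zero, ← Polynomial.C_1]
    exact const (a := fun _ => 1) (c := 1) (by simp)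
  | succ n ih =>
    simp only [pow_succ]
    exact ih.mul hp

lemma zero : BdF (fun _ : ι => (0 : Polynomial ℂ)) := ⟨0, le_rfl, 0, fun i => by simp⟩

lemma sum {P : ℕ → ι → Polynomial ℂ} (n : ℕ) (h : ∀ k, BdF (P k)) :
    BdF (fun i => ∑ k ∈ Finset.range n, P k i) := by
  induction n with
  | zero => simpa using zero
  | succ n ih =>
    simp only [Finset.sum_range_succ]
    exact ih.add (h n)

lemma divX (hp : BdF p) : BdF (fun i => (p i).divX) := by
  obtain ⟨c, hc, d, h⟩ := hp
  refine ⟨c, hc, d, fun i => ⟨?_, fun k => ?_⟩⟩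
  · exact Polynomial.natDegree_divX_le.trans (h i).1
  · rw [Polynomial.coeff_divX]; exact (h i).2 _

lemma divX_iter (hp : BdF p) (n : ℕ) : BdF (fun i => Polynomial.divX^[n] (p i)) := by
  induction n with
  | zero => exact hp
  | succ n ih =>
    simp only [Function.iterate_succ_apply']
    exact ih.divX

lemma deriv (hp : BdF p) : BdF (fun i => derivative (p i)) := by
  obtain ⟨c, hc, d, h⟩ := hp
  refine ⟨c * d, by positivity, d, fun i => ⟨?_, fun k => ?_⟩⟩
  · exact (Polynomial.natDegree_derivative_le _).trans ((Nat.sub_le _ _).trans (h i).1)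
  · rw [Polynomial.coeff_derivative]
    by_cases hk : d < k + 1
    · rw [Polynomial.coeff_eq_zero_of_natDegree_lt ((h i).1.trans_lt hk), zero_mul, norm_zero]
      positivity
    · push Not at hk
      rw [norm_mul]
      refine mul_le_mul ((h i).2 _) ?_ (norm_nonneg _) hc
      have : ((k : ℂ) + 1) = ((k + 1 : ℕ) : ℂ) := by push_cast; rfl
      rw [this, Complex.norm_natCast]
      exact_mod_cast hk

lemma eval_bdd (hp : BdF p) (M : ℝ) : ∃ K : ℝ, 0 ≤ K ∧ ∀ i z, ‖z‖ ≤ M → ‖eval z (p i)‖ ≤ K := by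
  obtain ⟨c, hc, d, h⟩ := hp
  refine ⟨∑ k ∈ Finset.range (d + 1), c * (max M 0) ^ k, by positivity, fun i z hz => ?_⟩
  rw [Polynomial.eval_eq_sum_range' (Nat.lt_succ_of_le (h i).1)]
  refine norm_sum_le_of_le _ fun k _ => ?_
  rw [norm_mul, norm_pow]
  have := hz.trans (le_max_left M 0)
  have := (h i).2 k
  gcongr

end BdF

lemma eval_divX_iter (p : Polynomial ℂ) (n : ℕ) (z : ℂ) :
    eval z p = ∑ k ∈ Finset.range n, p.coeff k * z ^ k + z ^ n * eval z (divX^[n] p) := by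
  have hc : ∀ n k, (divX^[n] p).coeff k = p.coeff (k + n) := by
    intro n
    induction n with
    | zero => intro k; rfl
    | succ n ih =>
      intro k
      rw [Function.iterate_succ_apply', Polynomial.coeff_divX, ih]
      congr 1; ring
  induction n with
  | zero => simp
  | succ n ih =>
    rw [ih, Finset.sum_range_succ, Function.iterate_succ_apply']
    have h1 : eval z (divX^[n] p) = z * eval z (divX (divX^[n] p)) + p.coeff n := by
      conv_lhs => rw [← Polynomial.X_mul_divX_add (divX^[n] p)]
      simp [hc]
    rw [h1]; ring

/-- graded classes of families of functions -/
def XF {ι : Type} (T : ι → Set ℝ) (y : ι → ℝ → ℂ) (k : ℤ) (E : ι → ℝ → ℂ) : Prop :=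
  ∃ c : ℝ, 0 ≤ c ∧ ∀ i, ∀ t ∈ T i, ∃ E' : ℂ, HasDerivAt (E i) E' t ∧
    ‖E i t‖ ≤ c * ‖y i t‖ ^ k ∧ ‖E'‖ * ‖y i t‖ ≤ c * ‖y i t‖ ^ k

namespace XF
variable {ι : Type} {T : ι → Set ℝ} {y : ι → ℝ → ℂ} {k l : ℤ} {E F : ι → ℝ → ℂ}

lemma add (hE : XF T y k E) (hF : XF T y k F) : XF T y k (fun i t => E i t + F i t) := by
  obtain ⟨c, hc, h⟩ := hE
  obtain ⟨c', hc', h'⟩ := hF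
  refine ⟨c + c', by positivity, fun i t ht => ?_⟩
  obtain ⟨e, he, h1, h2⟩ := h i t ht
  obtain ⟨f, hf, h3, h4⟩ := h' i t ht
  refine ⟨e + f, he.add hf, ?_, ?_⟩
  · linarith [norm_add_le (E i t) (F i t)]
  · have := norm_add_le e f
    have := norm_nonneg (y i t)
    nlinarith

lemma neg (hE : XF T y k E) : XF T y k (fun i t => - E i t) := by
  obtain ⟨c, hc, h⟩ := hE
  refine ⟨c, hc, fun i t ht => ?_⟩
  obtain ⟨e, he, h1, h2⟩ := h i t ht
  exact ⟨-e, he.neg, by rwa [norm_neg], by rwa [norm_neg]⟩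

lemma sub (hE : XF T y k E) (hF : XF T y k F) : XF T y k (fun i t => E i t - F i t) := by
  have := hE.add hF.neg
  simpa only [sub_eq_add_neg] using this

lemma mul (hy : ∀ i, ∀ t ∈ T i, y i t ≠ 0) (hE : XF T y k E) (hF : XF T y l F) :
    XF T y (k + l) (fun i t => E i t * F i t) := by
  obtain ⟨c, hc, h⟩ := hE
  obtain ⟨c', hc', h'⟩ := hF
  refine ⟨2 * (c * c'), by positivity, fun i t ht => ?_⟩
  obtain ⟨e, he, h1, h2⟩ := h i t ht
  obtain ⟨f, hf, h3, h4⟩ := h' i t ht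
  have hy0 : ‖y i t‖ ≠ 0 := norm_ne_zero_iff.2 (hy i t ht)
  have hyp : 0 < ‖y i t‖ := norm_pos_iff.2 (hy i t ht)
  have ez : ‖y i t‖ ^ (k + l) = ‖y i t‖ ^ k * ‖y i t‖ ^ l := zpow_add₀ hy0 k l
  have p1 : 0 < ‖y i t‖ ^ k := by positivity
  have p2 : 0 < ‖y i t‖ ^ l := by positivity
  refine ⟨_, he.mul hf, ?_, ?_⟩
  · rw [norm_mul, ez]
    calc ‖E i t‖ * ‖F i t‖ ≤ (c * ‖y i t‖ ^ k) * (c' * ‖y i t‖ ^ l) :=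
          mul_le_mul h1 h3 (norm_nonneg _) (by positivity)
      _ ≤ _ := by nlinarith [mul_nonneg (mul_nonneg hc hc') (mul_pos p1 p2).le]
  · rw [ez]
    calc ‖e * F i t + E i t * f‖ * ‖y i t‖ ≤ (‖e‖ * ‖F i t‖ + ‖E i t‖ * ‖f‖) * ‖y i t‖ := by
          gcongr
          refine (norm_add_le _ _).trans ?_
          rw [norm_mul, norm_mul]
      _ = (‖e‖ * ‖y i t‖) * ‖F i t‖ + ‖E i t‖ * (‖f‖ * ‖y i t‖) := by ring
      _ ≤ (c * ‖y i t‖ ^ k) * (c' * ‖y i t‖ ^ l) + (c * ‖y i t‖ ^ k) * (c' * ‖y i t‖ ^ l) := by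
          refine add_le_add (mul_le_mul h2 h3 (norm_nonneg _) (by positivity)) (mul_le_mul h1 h4 (by positivity) (by positivity))
      _ = _ := by ring

lemma inv (hy : ∀ i, ∀ t ∈ T i, y i t ≠ 0) (hE : XF T y k E) {a : ℝ} (ha : 0 < a)
    (hl : ∀ i, ∀ t ∈ T i, a * ‖y i t‖ ^ k ≤ ‖E i t‖) : XF T y (-k) (fun i t => (E i t)⁻¹) := by
  obtain ⟨c, hc, h⟩ := hE
  refine ⟨a⁻¹ + c * a⁻¹ ^ 2, by positivity, fun i t ht => ?_⟩
  obtain ⟨e, he, h1, h2⟩ := h i t ht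
  have hyp : 0 < ‖y i t‖ := norm_pos_iff.2 (hy i t ht)
  have p1 : 0 < ‖y i t‖ ^ k := by positivity
  have hlo := hl i t ht
  have hEp : 0 < ‖E i t‖ := lt_of_lt_of_le (by positivity) hlo
  have hEi : ‖E i t‖⁻¹ ≤ a⁻¹ * ‖y i t‖ ^ (-k) := by
    rw [zpow_neg, ← mul_inv]
    exact inv_anti₀ (by positivity) hlo
  have p3 : 0 < ‖y i t‖ ^ (-k) := by positivity
  have hkk : ‖y i t‖ ^ k * ‖y i t‖ ^ (-k) = 1 := by
    rw [zpow_neg]; field_simp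
  refine ⟨_, he.fun_inv (norm_pos_iff.1 hEp), ?_, ?_⟩
  · rw [norm_inv]
    refine hEi.trans ?_
    gcongr
    have : 0 ≤ c * a⁻¹ ^ 2 := by positivity
    linarith
  · rw [norm_div, norm_neg, norm_pow, div_eq_mul_inv]
    calc ‖e‖ * (‖E i t‖ ^ 2)⁻¹ * ‖y i t‖ = (‖e‖ * ‖y i t‖) * (‖E i t‖⁻¹) ^ 2 := by rw [inv_pow]; ring
      _ ≤ (c * ‖y i t‖ ^ k) * (a⁻¹ * ‖y i t‖ ^ (-k)) ^ 2 := by gcongr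
      _ = c * a⁻¹ ^ 2 * ‖y i t‖ ^ (-k) * (‖y i t‖ ^ k * ‖y i t‖ ^ (-k)) := by ring
      _ = c * a⁻¹ ^ 2 * ‖y i t‖ ^ (-k) := by rw [hkk, mul_one]
      _ ≤ _ := by
        gcongr
        have : 0 ≤ a⁻¹ := by positivity
        linarith

lemma one : XF T y 0 (fun _ _ => 1) :=
  ⟨1, zero_le_one, fun i t _ => ⟨0, hasDerivAt_const _ _, by simp, by simp⟩⟩

lemma zero : XF T y k (fun _ _ => 0) := by
  refine ⟨0, le_rfl, fun i t _ => ⟨0, hasDerivAt_const _ _, by simp, by simp⟩⟩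

lemma pow (hy : ∀ i, ∀ t ∈ T i, y i t ≠ 0) (hE : XF T y k E) (n : ℕ) :
    XF T y (n * k) (fun i t => E i t ^ n) := by
  induction n with
  | zero => simpa using one
  | succ n ih =>
    have := ih.mul hy hE
    simp only [pow_succ]
    convert this using 1
    push_cast; ring

lemma sum {P : ℕ → ι → ℝ → ℂ} (n : ℕ) (h : ∀ j < n, XF T y k (P j)) :
    XF T y k (fun i t => ∑ j ∈ Finset.range n, P j i t) := by
  induction n with
  | zero => simpa using zero
  | succ n ih =>
    simp only [Finset.sum_range_succ]
    exact (ih fun j hj => h j (hj.trans (Nat.lt_succ_self n))).add (h n (Nat.lt_succ_self n))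

end XF

/-- hypotheses on the base variable -/
structure BaseY {ι : Type} (T : ι → Set ℝ) (y : ι → ℝ → ℂ) (M : ℝ) : Prop where
  ne : ∀ i, ∀ t ∈ T i, y i t ≠ 0
  bd : ∀ i, ∀ t ∈ T i, ‖y i t‖ ≤ M
  der : ∀ i, ∀ t ∈ T i, ∃ d, HasDerivAt (y i) d t ∧ ‖d‖ ≤ M

section
variable {ι : Type} {T : ι → Set ℝ} {y : ι → ℝ → ℂ} {M : ℝ}

lemma BaseY.self (h : BaseY T y M) : XF T y 1 y := by
  refine ⟨max M 1, by positivity, fun i t ht => ?_⟩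
  obtain ⟨d, hd, hb⟩ := h.der i t ht
  refine ⟨d, hd, ?_, ?_⟩
  · rw [zpow_one]
    nlinarith [le_max_right M 1, norm_nonneg (y i t)]
  · rw [zpow_one]
    gcongr
    exact hb.trans (le_max_left _ _)

lemma BaseY.poly_deriv (h : BaseY T y M) {p : ι → Polynomial ℂ} (hp : BdF p) :
    ∃ K : ℝ, 0 ≤ K ∧ ∀ i, ∀ t ∈ T i, ∃ d, HasDerivAt (fun t => eval (y i t) (p i)) d t ∧ ‖d‖ ≤ K := by
  obtain ⟨K, hK, hk⟩ := hp.deriv.eval_bdd M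
  refine ⟨K * max M 0, by positivity, fun i t ht => ?_⟩
  obtain ⟨d, hd, hb⟩ := h.der i t ht
  refine ⟨_, ((p i).hasDerivAt (y i t)).comp t hd, ?_⟩
  rw [norm_mul]
  exact mul_le_mul (hk i _ (h.bd i t ht)) (hb.trans (le_max_left _ _)) (norm_nonneg _) hK

lemma BaseY.poly (h : BaseY T y M) {p : ι → Polynomial ℂ} (hp : BdF p) :
    XF T y 0 (fun i t => eval (y i t) (p i)) := by
  obtain ⟨K, hK, hk⟩ := hp.eval_bdd M
  obtain ⟨K', hK', hk'⟩ := h.poly_deriv hp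
  refine ⟨K + K' * max M 0, by positivity, fun i t ht => ?_⟩
  obtain ⟨d, hd, hb⟩ := hk' i t ht
  have h1 := hk i _ (h.bd i t ht)
  refine ⟨d, hd, ?_, ?_⟩
  · rw [zpow_zero, mul_one]
    have : 0 ≤ K' * max M 0 := by positivity
    linarith
  · rw [zpow_zero, mul_one]
    have : ‖d‖ * ‖y i t‖ ≤ K' * max M 0 :=
      mul_le_mul hb ((h.bd i t ht).trans (le_max_left _ _)) (norm_nonneg _) hK'
    linarith

end
end SDB


namespace SDB
open Set Filter Topology Metric
open Polynomial (X C divX eval derivative)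

theorem expand {ι : Type} {T : ι → Set ℝ} {y : ι → ℝ → ℂ} {M : ℝ} (hY : BaseY T y M) (m : ℕ)
    {p : ι → Polynomial ℂ} (hp : BdF p) {c : ℝ} (hc : 0 < c) (hp0 : ∀ i, c ≤ ‖(p i).coeff 0‖)
    {ρ v : ι → ℝ → ℂ} (hρ : XF T y (m + 3) ρ)
    (hv : ∀ i t, v i t = y i t * eval (y i t) (p i) + ρ i t)
    (hvl : ∀ i, ∀ t ∈ T i, c * ‖y i t‖ ≤ ‖v i t‖)
    (hvx : XF T y 1 v) :
    ∃ D : ι → ℕ → ℂ, ∃ K : ℝ, 0 < K ∧ (∀ i, ∀ j ≤ m, ‖D i j‖ ≤ K) ∧ (∀ i, 1 / K ≤ ‖D i m‖) ∧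
      ∀ i, ∀ t ∈ T i, ∃ E', HasDerivAt (fun t => (v i t ^ (m + 1))⁻¹ -
        ∑ j ∈ Finset.range (m + 1), D i j * (y i t ^ (j + 1))⁻¹) E' t ∧ ‖E'‖ ≤ K := by
  set b : ι → ℂ := fun i => (p i).coeff 0 with hb
  have hb0 : ∀ i, b i ≠ 0 := fun i => norm_pos_iff.1 (hc.trans_le (hp0 i))
  have hbi : ∀ i, ‖(b i)⁻¹‖ ≤ c⁻¹ := fun i => by
    rw [norm_inv]; exact inv_anti₀ hc (hp0 i)
  set nn : ι → Polynomial ℂ := fun i => C (-(b i)⁻¹) * divX (p i) with hnn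
  have hnnB : BdF nn := (BdF.const (c := c⁻¹) (fun i => by rw [norm_neg]; exact hbi i)).mul hp.divX
  set q : ι → Polynomial ℂ := fun i => C (b i)⁻¹ * ∑ k ∈ Finset.range (m + 2), (X * nn i) ^ k with hq
  have hqB : BdF q := (BdF.const hbi).mul (BdF.sum (P := fun k i => (X * nn i) ^ k) (m + 2) fun k => (BdF.X.mul hnnB).pow k)
  have hpq : ∀ i z, 1 - eval z (p i) * eval z (q i) = z ^ (m + 2) * eval z (nn i ^ (m + 2)) := by
    intro i z
    have h1 : eval z (p i) = b i * (1 - z * eval z (nn i)) := by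
      conv_lhs => rw [← Polynomial.X_mul_divX_add (p i)]
      simp only [hnn, Polynomial.eval_add, Polynomial.eval_mul, Polynomial.eval_X, Polynomial.eval_C]
      have := hb0 i
      field_simp
      simp only [hb]; ring
    have h2 : eval z (q i) = (b i)⁻¹ * ∑ k ∈ Finset.range (m + 2), (z * eval z (nn i)) ^ k := by
      simp only [hq, Polynomial.eval_mul, Polynomial.eval_C, Polynomial.eval_finsetSum, Polynomial.eval_pow, Polynomial.eval_X]
    have h3 := mul_neg_geom_sum (z * eval z (nn i)) (m + 2)
    rw [h1, h2]
    have h4 : b i * (1 - z * eval z (nn i)) * ((b i)⁻¹ * ∑ k ∈ Finset.range (m + 2), (z * eval z (nn i)) ^ k) =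
        (b i * (b i)⁻¹) * ((1 - z * eval z (nn i)) * ∑ k ∈ Finset.range (m + 2), (z * eval z (nn i)) ^ k) := by ring
    rw [h4, h3, mul_inv_cancel₀ (hb0 i), Polynomial.eval_pow, mul_pow]
    ring
  set Q : ι → Polynomial ℂ := fun i => q i ^ (m + 1) with hQ
  have hQB : BdF Q := hqB.pow (m + 1)
  set r : ι → Polynomial ℂ := fun i => divX^[m + 1] (Q i) with hr
  have hrB : BdF r := hQB.divX_iter (m + 1)
  obtain ⟨cQ, hcQ, dQ, hQc⟩ := id hQB
  obtain ⟨cp, hcp, dp, hpc⟩ := id hp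
  -- the error term
  have hyinv : XF T y (-1) (fun i t => (y i t)⁻¹) :=
    hY.self.inv hY.ne one_pos (fun i t _ => by rw [zpow_one, one_mul])
  have hvinv : XF T y (-1) (fun i t => (v i t)⁻¹) :=
    hvx.inv hY.ne hc (fun i t ht => by rw [zpow_one]; exact hvl i t ht)
  have hvne : ∀ i, ∀ t ∈ T i, v i t ≠ 0 := fun i t ht => norm_pos_iff.1
    (lt_of_lt_of_le (mul_pos hc (norm_pos_iff.2 (hY.ne i t ht))) (hvl i t ht))
  set δ : ι → ℝ → ℂ := fun i t => (y i t ^ (m + 3) * eval (y i t) (nn i ^ (m + 2)) -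
    ρ i t * eval (y i t) (q i)) * (v i t)⁻¹ * (y i t)⁻¹ with hδ
  have hδX : XF T y (m + 1) δ := by
    have a1 : XF T y (m + 3) (fun i t => y i t ^ (m + 3) * eval (y i t) (nn i ^ (m + 2))) := by
      have := (hY.self.pow hY.ne (m + 3)).mul hY.ne (hY.poly (hnnB.pow (m + 2)))
      convert this using 1
      push_cast; ring
    have a2 : XF T y (m + 3) (fun i t => ρ i t * eval (y i t) (q i)) := by
      have := hρ.mul hY.ne (hY.poly hqB)
      convert this using 1
      ring
    have := ((a1.sub a2).mul hY.ne hvinv).mul hY.ne hyinv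
    convert this using 1
    ring
  have hδe : ∀ i t, v i t ≠ 0 → y i t ≠ 0 →
      (v i t)⁻¹ = eval (y i t) (q i) * (y i t)⁻¹ + δ i t := by
    intro i t h1 h2
    have h3 := hpq i (y i t)
    have h4 : y i t - v i t * eval (y i t) (q i) = y i t ^ (m + 3) * eval (y i t) (nn i ^ (m + 2)) -
        ρ i t * eval (y i t) (q i) := by
      rw [hv i t]
      have : y i t ^ (m + 3) * eval (y i t) (nn i ^ (m + 2)) = y i t * (y i t ^ (m + 2) * eval (y i t) (nn i ^ (m + 2))) := by ring
      rw [this, ← h3]; ring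
    simp only [hδ]
    rw [← h4]
    field_simp
    ring
  set A : ι → ℝ → ℂ := fun i t => eval (y i t) (q i) * (y i t)⁻¹ with hA
  have hAX : XF T y (-1) A := by
    have := (hY.poly hqB).mul hY.ne hyinv
    convert this using 1
    norm_num
  have hWX : XF T y 1 (fun i t => δ i t * ∑ j ∈ Finset.range (m + 1), (v i t)⁻¹ ^ j * A i t ^ (m + 1 - 1 - j)) := by
    have h1 : XF T y (-m) (fun i t => ∑ j ∈ Finset.range (m + 1), (v i t)⁻¹ ^ j * A i t ^ (m + 1 - 1 - j)) := by
      refine XF.sum (m + 1) fun j hj => ?_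
      have := (hvinv.pow hY.ne j).mul hY.ne (hAX.pow hY.ne (m + 1 - 1 - j))
      convert this using 1
      have : j ≤ m := Nat.lt_succ_iff.1 hj
      rw [Nat.add_sub_cancel, Nat.cast_sub this]
      ring
    have := hδX.mul hY.ne h1
    convert this using 1
    ring
  obtain ⟨K1, hK1, hW⟩ := hWX
  obtain ⟨K2, hK2, hr'⟩ := hY.poly_deriv hrB
  refine ⟨fun i j => (Q i).coeff (m - j), K1 + K2 + cQ + (cp + 1) ^ (m + 1), by positivity, ?_, ?_, ?_⟩
  · intro i j _
    have := (hQc i).2 (m - j)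
    have : 0 ≤ (cp + 1) ^ (m + 1) := by positivity
    linarith
  · intro i
    have e : (Q i).coeff (m - m) = (b i)⁻¹ ^ (m + 1) := by
      rw [Nat.sub_self, Polynomial.coeff_zero_eq_eval_zero]
      simp only [hQ, hq, Polynomial.eval_pow, Polynomial.eval_mul, Polynomial.eval_C, Polynomial.eval_finsetSum,
        Polynomial.eval_X, zero_mul]
      rw [Finset.sum_range_succ']
      simp
    change 1 / _ ≤ ‖(Q i).coeff (m - m)‖
    rw [e, norm_pow, norm_inv, inv_pow, ← one_div]
    refine one_div_le_one_div_of_le (pow_pos (norm_pos_iff.2 (hb0 i)) _) ?_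
    have h1 : ‖b i‖ ^ (m + 1) ≤ (cp + 1) ^ (m + 1) := by
      have := (hpc i).2 0
      gcongr
      simp only [hb]; linarith
    linarith
  · intro i t ht
    obtain ⟨e1, he1, _, hb1⟩ := hW i t ht
    obtain ⟨e2, he2, hb2⟩ := hr' i t ht
    have hyp : 0 < ‖y i t‖ := norm_pos_iff.2 (hY.ne i t ht)
    rw [zpow_one] at hb1
    have hb1' : ‖e1‖ ≤ K1 := le_of_mul_le_mul_right hb1 hyp
    refine ⟨e1 + e2, ?_, ?_⟩
    · refine (he1.add he2).congr_of_eventuallyEq ?_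
      obtain ⟨yd, hyd, -⟩ := hY.der i t ht
      obtain ⟨cv, hcv, hvd⟩ := hvx
      obtain ⟨vd, hvd', -⟩ := hvd i t ht
      filter_upwards [hyd.continuousAt.eventually_ne (hY.ne i t ht),
        hvd'.continuousAt.eventually_ne (hvne i t ht)] with s hys hvs
      have g1 := (Commute.all ((v i s)⁻¹) (A i s)).mul_geom_sum₂ (m + 1)
      have g2 : (v i s)⁻¹ - A i s = δ i s := by rw [hδe i s hvs hys]; simp only [hA]; ring
      rw [g2] at g1
      have g3 : A i s ^ (m + 1) = eval (y i s) (Q i) * (y i s ^ (m + 1))⁻¹ := by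
        simp only [hA, hQ, Polynomial.eval_pow, mul_pow, inv_pow]
      have g4 := eval_divX_iter (Q i) (m + 1) (y i s)
      have g5 : ∑ j ∈ Finset.range (m + 1), (Q i).coeff (m - j) * (y i s ^ (j + 1))⁻¹ =
          (∑ k ∈ Finset.range (m + 1), (Q i).coeff k * y i s ^ k) * (y i s ^ (m + 1))⁻¹ := by
        rw [← Finset.sum_range_reflect (fun k => (Q i).coeff k * y i s ^ k), Finset.sum_mul]
        refine Finset.sum_congr rfl fun j hj => ?_
        have hj' : j ≤ m := Nat.lt_succ_iff.1 (Finset.mem_range.1 hj)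
        obtain ⟨l, rfl⟩ := Nat.exists_eq_add_of_le hj'
        have e1 : j + l + 1 - 1 - j = l := by omega
        have e2 : j + l - j = l := by omega
        rw [e1, e2]
        field_simp
        ring
      have hp1 : y i s ^ (m + 1) ≠ 0 := pow_ne_zero _ hys
      change (v i s ^ (m + 1))⁻¹ - ∑ j ∈ Finset.range (m + 1), (Q i).coeff (m - j) * (y i s ^ (j + 1))⁻¹ =
        δ i s * ∑ j ∈ Finset.range (m + 1), (v i s)⁻¹ ^ j * A i s ^ (m + 1 - 1 - j) + eval (y i s) (r i)
      rw [g1, g5, g3, g4, inv_pow]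
      simp only [hr]
      field_simp
      ring
    · have : 0 ≤ (cp + 1) ^ (m + 1) := by positivity
      have := norm_add_le e1 e2
      linarith
end SDB


namespace SDB
open Set Filter Topology Metric
open Polynomial (X C divX eval derivative)

variable {γ : ℝ → ℂ} {Ω : Set ℂ}

/-- Taylor coefficients of `γ` in terms of `conj γ` -/
noncomputable def bk (γ : ℝ → ℂ) (i : ℕ) (x : ℝ) : ℂ := Gk γ i x / (i.factorial : ℂ)
/-- conjugate offset -/
noncomputable def et (γ : ℝ → ℂ) (x σ : ℝ) : ℂ := -Complex.I * σ * Yd γ x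
/-- reflected point -/
noncomputable def wp (γ : ℝ → ℂ) (L : ℕ) (x σ : ℝ) : ℂ := ∑ i ∈ Finset.range (L + 1), bk γ i x * et γ x σ ^ i
/-- base function -/
noncomputable def yy (γ : ℝ → ℂ) (x σ t : ℝ) : ℂ := (starRingEnd ℂ) (γ t - off γ x σ)
/-- polynomial approximating `γ - w` -/
noncomputable def PPo (γ : ℝ → ℂ) (L : ℕ) (x σ : ℝ) : Polynomial ℂ :=
  ∑ i ∈ Finset.range (L + 1), C (bk γ i x) * ((X + C (et γ x σ)) ^ i + C (-(et γ x σ) ^ i))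

lemma yy_add (x σ t : ℝ) : yy γ x σ t + et γ x σ = Yc γ t - Yc γ x := by
  unfold yy et off Yc Yd
  simp only [map_sub, map_add, map_mul, Complex.conj_I, Complex.conj_ofReal]
  ring

lemma v_eq (L : ℕ) (x σ t : ℝ) : γ t - wp γ L x σ = eval (yy γ x σ t) (PPo γ L x σ) + Rk γ 0 L x t := by
  unfold PPo Rk wp
  simp only [Polynomial.eval_finsetSum, Polynomial.eval_mul, Polynomial.eval_add, Polynomial.eval_pow,
    Polynomial.eval_C, Polynomial.eval_X, yy_add, mul_add, Finset.sum_add_distrib, mul_neg, Finset.sum_neg_distrib]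
  simp only [zero_add, bk, Gk]
  ring

lemma PPo_zero (L : ℕ) (x σ : ℝ) : (PPo γ L x σ).coeff 0 = 0 := by
  rw [Polynomial.coeff_zero_eq_eval_zero]
  unfold PPo
  simp [Polynomial.eval_finsetSum]

lemma PPo_one (L : ℕ) (x σ : ℝ) : (PPo γ L x σ).coeff 1 =
    ∑ i ∈ Finset.range (L + 1), bk γ i x * (et γ x σ ^ (i - 1) * i) := by
  unfold PPo
  rw [Polynomial.finsetSum_coeff]
  refine Finset.sum_congr rfl fun i _ => ?_
  rw [Polynomial.coeff_C_mul, Polynomial.coeff_add, Polynomial.coeff_X_add_C_pow, Polynomial.coeff_C]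
  simp

lemma bk_zero (x : ℝ) : bk γ 0 x = γ x := by simp [bk, Gk]

lemma bk_one (x : ℝ) : bk γ 1 x = deriv γ x / Yd γ x := by simp [bk, Gk]

lemma Crv.bk_one_norm (hγ : Crv γ) (x : ℝ) : ‖bk γ 1 x‖ = 1 := by
  have h : ‖Yd γ x‖ = ‖deriv γ x‖ := by unfold Yd; exact RCLike.norm_conj _
  rw [bk_one, norm_div, h, div_self (norm_ne_zero_iff.2 (hγ.reg x))]

lemma Crv.bk_one_et (hγ : Crv γ) (x σ : ℝ) : bk γ 1 x * et γ x σ = -Complex.I * σ * deriv γ x := by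
  have := hγ.Yd_ne x
  rw [bk_one, et]; field_simp

lemma Crv.bk_bdd (hγ : Crv γ) (L : ℕ) : ∃ B : ℝ, 0 < B ∧ ∀ i ≤ L, ∀ x, ‖bk γ i x‖ ≤ B := by
  choose B hB h using hγ.Gk_bdd
  refine ⟨∑ i ∈ Finset.range (L + 1), B i, Finset.sum_pos (fun i _ => hB i) (by simp), fun i hi x => ?_⟩
  have h1 : B i ≤ ∑ i ∈ Finset.range (L + 1), B i :=
    Finset.single_le_sum (fun i _ => (hB i).le) (Finset.mem_range.2 (Nat.lt_succ_iff.2 hi))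
  refine le_trans ?_ h1
  refine le_trans ?_ (h i x)
  rw [bk, norm_div]
  refine div_le_self (norm_nonneg _) ?_
  rw [Complex.norm_natCast]
  exact_mod_cast Nat.one_le_iff_ne_zero.2 (Nat.factorial_ne_zero i)

lemma Crv.et_bdd (hγ : Crv γ) : ∃ C1 : ℝ, 1 ≤ C1 ∧ ∀ x σ, ‖et γ x σ‖ ≤ C1 * |σ| := by
  obtain ⟨C, hC, h⟩ := hγ.bdd_deriv
  refine ⟨C + 1, by linarith, fun x σ => ?_⟩
  have h1 : ‖Yd γ x‖ = ‖deriv γ x‖ := by unfold Yd; exact RCLike.norm_conj _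
  rw [et, norm_mul, norm_mul, norm_neg, Complex.norm_I, one_mul, Complex.norm_real, Real.norm_eq_abs, h1, mul_comm]
  have := h x
  gcongr
  linarith

lemma Crv.wp_near (hγ : Crv γ) (l : ℕ) : ∃ K : ℝ, 0 < K ∧ ∀ x σ, |σ| ≤ 1 →
    ‖wp γ (l + 2) x σ - off γ x (-σ)‖ ≤ K * |σ| ^ 2 ∧ 1 - K * |σ| ≤ ‖(PPo γ (l + 2) x σ).coeff 1‖ := by
  obtain ⟨B, hB, hb⟩ := hγ.bk_bdd (l + 2)
  obtain ⟨C1, hC1, he⟩ := hγ.et_bdd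
  have hC0 : 0 < C1 := by linarith
  have hpw : ∀ x σ, |σ| ≤ 1 → ∀ j i, i ≤ l + 1 → ‖et γ x σ ^ (i + j)‖ ≤ C1 ^ (l + 1) * C1 ^ j * |σ| ^ j := by
    intro x σ hσ j i hi
    rw [norm_pow]
    calc ‖et γ x σ‖ ^ (i + j) ≤ (C1 * |σ|) ^ (i + j) := by gcongr; exact he x σ
      _ = C1 ^ i * C1 ^ j * |σ| ^ j * |σ| ^ i := by ring
      _ ≤ C1 ^ (l + 1) * C1 ^ j * |σ| ^ j * 1 := by
        gcongr
        · exact pow_le_one₀ (abs_nonneg _) hσ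
      _ = _ := by ring
  refine ⟨(l + 1) * (B * (C1 ^ (l + 1) * C1 ^ 2)) + (l + 1) * (B * (C1 ^ (l + 1) * C1 ^ 1 * (l + 2))), by positivity, fun x σ hσ => ⟨?_, ?_⟩⟩
  · have e : wp γ (l + 2) x σ - off γ x (-σ) = ∑ i ∈ Finset.range (l + 1), bk γ (i + 2) x * et γ x σ ^ (i + 2) := by
      unfold wp
      rw [Finset.sum_range_succ', Finset.sum_range_succ']
      simp only [zero_add, pow_one, pow_zero, mul_one, bk_zero, hγ.bk_one_et]
      unfold off
      push_cast
      simp only [add_assoc, show (1:ℕ) + 1 = 2 from rfl]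
      ring
    rw [e]
    have : ‖∑ i ∈ Finset.range (l + 1), bk γ (i + 2) x * et γ x σ ^ (i + 2)‖ ≤
        ∑ i ∈ Finset.range (l + 1), B * (C1 ^ (l + 1) * C1 ^ 2 * |σ| ^ 2) := by
      refine norm_sum_le_of_le _ fun i hi => ?_
      have hi' := Finset.mem_range.1 hi
      rw [norm_mul]
      have h1 := hb (i + 2) (by omega) x
      have h2 := hpw x σ hσ 2 i (by omega)
      gcongr
    refine this.trans ?_
    rw [Finset.sum_const, Finset.card_range, nsmul_eq_mul, add_mul]
    push_cast
    have : 0 ≤ (l + 1) * (B * (C1 ^ (l + 1) * C1 ^ 1 * (l + 2))) * |σ| ^ 2 := by positivity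
    linarith
  · have e : (PPo γ (l + 2) x σ).coeff 1 = bk γ 1 x + ∑ i ∈ Finset.range (l + 1), bk γ (i + 2) x * (et γ x σ ^ (i + 1) * (i + 2 : ℕ)) := by
      rw [PPo_one]
      rw [Finset.sum_range_succ', Finset.sum_range_succ']
      simp only [zero_add, Nat.cast_zero, mul_zero, Nat.cast_one, mul_one, add_zero, Nat.sub_self, pow_zero, Nat.add_sub_cancel]
      simp only [add_assoc, show (1:ℕ) + 1 = 2 from rfl]
      ring
    have : ‖∑ i ∈ Finset.range (l + 1), bk γ (i + 2) x * (et γ x σ ^ (i + 1) * (i + 2 : ℕ))‖ ≤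
        ∑ i ∈ Finset.range (l + 1), B * (C1 ^ (l + 1) * C1 ^ 1 * |σ| ^ 1 * (l + 2)) := by
      refine norm_sum_le_of_le _ fun i hi => ?_
      have hi' := Finset.mem_range.1 hi
      rw [norm_mul, norm_mul, Complex.norm_natCast]
      have h1 := hb (i + 2) (by omega) x
      have h2 := hpw x σ hσ 1 i (by omega)
      have h3 : ((i + 2 : ℕ) : ℝ) ≤ l + 2 := by exact_mod_cast (by omega : i + 2 ≤ l + 2)
      gcongr
    rw [Finset.sum_const, Finset.card_range, nsmul_eq_mul] at this
    rw [e]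
    have h1 := norm_sub_norm_le (bk γ 1 x) (-∑ i ∈ Finset.range (l + 1), bk γ (i + 2) x * (et γ x σ ^ (i + 1) * (i + 2 : ℕ)))
    rw [sub_neg_eq_add, norm_neg, hγ.bk_one_norm] at h1
    have : 0 ≤ (l + 1) * (B * (C1 ^ (l + 1) * C1 ^ 2)) * |σ| := by positivity
    push_cast at *
    nlinarith

lemma PPo_bd (hγ : Crv γ) (L : ℕ) : BdF (fun i : {p : ℝ × ℝ // |p.2| ≤ 1} => PPo γ L i.1.1 i.1.2) := by
  obtain ⟨B, hB, hb⟩ := hγ.bk_bdd L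
  obtain ⟨C1, hC1, he⟩ := hγ.et_bdd
  have he' : ∀ i : {p : ℝ × ℝ // |p.2| ≤ 1}, ‖et γ i.1.1 i.1.2‖ ≤ C1 := fun i => by
    have h1 := he i.1.1 i.1.2
    have h2 := i.2
    nlinarith
  have key : BdF (fun i : {p : ℝ × ℝ // |p.2| ≤ 1} => ∑ k ∈ Finset.range (L + 1), 
      (if k ≤ L then C (bk γ k i.1.1) else 0) * ((X + C (et γ i.1.1 i.1.2)) ^ k + C (-(et γ i.1.1 i.1.2) ^ k))) := by
    refine BdF.sum (P := fun k (i : {p : ℝ × ℝ // |p.2| ≤ 1}) => (if k ≤ L then C (bk γ k i.1.1) else 0) * ((X + C (et γ i.1.1 i.1.2)) ^ k + C (-(et γ i.1.1 i.1.2) ^ k))) (L + 1) fun k => ?_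
    refine BdF.mul ?_ (((BdF.X.add (BdF.const he')).pow k).add (BdF.const (c := C1 ^ k) fun i => ?_))
    · split_ifs with h
      · exact BdF.const fun i => hb k h i.1.1
      · exact BdF.zero
    · rw [norm_neg, norm_pow]
      gcongr
      exact he' i
  convert key using 2 with i
  unfold PPo
  refine Finset.sum_congr rfl fun k hk => ?_
  rw [if_pos (Nat.lt_succ_iff.1 (Finset.mem_range.1 hk))]
end SDB


namespace SDB
open Set Filter Topology Metric
open Polynomial (X C divX eval derivative)

variable {γ : ℝ → ℂ} {Ω : Set ℂ}

lemma Crv.core (hγ : Crv γ) (m : ℕ) {s0 : ℝ} (hs0 : 0 < s0) : ∃ σ1 : ℝ, 0 < σ1 ∧ σ1 ≤ s0 ∧ ∃ K : ℝ, 0 < K ∧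
    ∀ x σ, σ ≠ 0 → |σ| ≤ σ1 → ‖wp γ (m + 2) x σ - off γ x (-σ)‖ ≤ s0 * |σ| ∧
    ∃ D : ℕ → ℂ, (∀ j ≤ m, ‖D j‖ ≤ K) ∧ 1 / K ≤ ‖D m‖ ∧ ∀ t, |t - x| ≤ Real.pi →
      ∃ E', HasDerivAt (fun t => ((γ t - wp γ (m + 2) x σ) ^ (m + 1))⁻¹ -
        ∑ j ∈ Finset.range (m + 1), D j * (yy γ x σ t ^ (j + 1))⁻¹) E' t ∧ ‖E'‖ ≤ K := by
  obtain ⟨σo, hσo, co, hco, hlow⟩ := hγ.off_low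
  obtain ⟨K0, hK0, hw⟩ := hγ.wp_near m
  obtain ⟨C0, hC0, hd⟩ := hγ.bdd_deriv
  obtain ⟨C2, hC2, hR0⟩ := hγ.Rk_bound (m + 2) 0
  obtain ⟨C3, hC3, hR1⟩ := hγ.Rk_bound (m + 1) 1
  have hpi := Real.pi_pos
  set e : ℝ := min (1 / 2) (min (co / 2) s0) with he
  have he0 : 0 < e := by positivity
  have hea : e ≤ 1 / 2 := min_le_left _ _
  have heb : e ≤ co / 2 := (min_le_right _ _).trans (min_le_left _ _)
  have hec : e ≤ s0 := (min_le_right _ _).trans (min_le_right _ _)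
  set σ1 : ℝ := min (min σo 1) (min s0 (e / K0)) with hσ1
  have hσ1p : 0 < σ1 := by positivity
  have ha : σ1 ≤ σo := (min_le_left _ _).trans (min_le_left _ _)
  have hb : σ1 ≤ 1 := (min_le_left _ _).trans (min_le_right _ _)
  have hc : σ1 ≤ s0 := (min_le_right _ _).trans (min_le_left _ _)
  have hdd : σ1 ≤ e / K0 := (min_le_right _ _).trans (min_le_right _ _)
  have hKσ : ∀ σ, |σ| ≤ σ1 → K0 * |σ| ≤ e := fun σ h => by
    have := (le_div_iff₀ hK0).1 (h.trans hdd); linarith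
  have hwn : ∀ x σ, |σ| ≤ σ1 → ‖wp γ (m + 2) x σ - off γ x (-σ)‖ ≤ e * |σ| := fun x σ h => by
    refine (hw x σ (h.trans hb)).1.trans ?_
    have := hKσ σ h
    nlinarith [abs_nonneg σ]
  have hyn : ∀ x σ t, ‖yy γ x σ t‖ = ‖γ t - off γ x σ‖ := fun x σ t => by unfold yy; exact RCLike.norm_conj _
  have hylow : ∀ x σ t, |σ| ≤ σ1 → |t - x| ≤ Real.pi → co * (|t - x| + |σ|) ≤ ‖yy γ x σ t‖ := fun x σ t h ht => by
    rw [hyn]; exact hlow x σ t (h.trans ha) ht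
  have hup : ∀ x σ t, ‖γ t - off γ x σ‖ ≤ C0 * (|t - x| + |σ|) := fun x σ t => by
    have h1 := hγ.lip hd x t
    have h2 := off_norm (γ := γ) x σ
    have h3 := hd x
    have h4 : γ t - off γ x σ = (γ t - γ x) - (off γ x σ - γ x) := by ring
    rw [h4]
    refine (norm_sub_le _ _).trans ?_
    rw [h2]
    nlinarith [abs_nonneg σ]
  have hvlow : ∀ x σ t, |σ| ≤ σ1 → |t - x| ≤ Real.pi → co / 2 * (|t - x| + |σ|) ≤ ‖γ t - wp γ (m + 2) x σ‖ := by
    intro x σ t h ht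
    have h1 := hlow x (-σ) t (by rw [abs_neg]; exact h.trans ha) ht
    rw [abs_neg] at h1
    have h2 := hwn x σ h
    have h3 := norm_sub_norm_le (γ t - off γ x (-σ)) (wp γ (m + 2) x σ - off γ x (-σ))
    rw [sub_sub_sub_cancel_right] at h3
    nlinarith [abs_nonneg σ, abs_nonneg (t - x)]
  have hvup : ∀ x σ t, |σ| ≤ σ1 → ‖γ t - wp γ (m + 2) x σ‖ ≤ (C0 + 1) * (|t - x| + |σ|) := by
    intro x σ t h
    have h1 := hup x (-σ) t
    rw [abs_neg] at h1
    have h2 := hwn x σ h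
    have h3 := norm_sub_le (γ t - off γ x (-σ)) (wp γ (m + 2) x σ - off γ x (-σ))
    rw [sub_sub_sub_cancel_right] at h3
    nlinarith [abs_nonneg σ, abs_nonneg (t - x)]
  let ι := {p : ℝ × ℝ // p.2 ≠ 0 ∧ |p.2| ≤ σ1}
  let T : ι → Set ℝ := fun i => {t | |t - i.1.1| ≤ Real.pi}
  let y : ι → ℝ → ℂ := fun i t => yy γ i.1.1 i.1.2 t
  let v : ι → ℝ → ℂ := fun i t => γ t - wp γ (m + 2) i.1.1 i.1.2
  let ρ : ι → ℝ → ℂ := fun i t => Rk γ 0 (m + 2) i.1.1 t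
  let p : ι → Polynomial ℂ := fun i => divX (PPo γ (m + 2) i.1.1 i.1.2)
  have hYdn : ∀ t, ‖Yd γ t‖ ≤ C0 := fun t => by
    unfold Yd; rw [RCLike.norm_conj]; exact hd t
  have hyd : ∀ (i : ι) t, HasDerivAt (y i) (Yd γ t) t := fun i t => by
    have h := (hγ.hasDeriv_Yc t).sub_const ((starRingEnd ℂ) (off γ i.1.1 i.1.2))
    have e : y i = fun t => Yc γ t - (starRingEnd ℂ) (off γ i.1.1 i.1.2) := by
      funext t; simp only [y, yy, Yc, map_sub]
    rw [e]; exact h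
  have hyl : ∀ i : ι, ∀ t ∈ T i, co * (|t - i.1.1| + |i.1.2|) ≤ ‖y i t‖ := fun i t ht => hylow _ _ t i.2.2 ht
  have hypos : ∀ i : ι, ∀ t ∈ T i, 0 < ‖y i t‖ := fun i t ht => by
    have h1 := abs_pos.2 i.2.1
    have h2 := hyl i t ht
    have : 0 < co * (|t - i.1.1| + |i.1.2|) := mul_pos hco (by linarith [abs_nonneg (t - i.1.1)])
    linarith
  have hyu : ∀ i : ι, ∀ t, ‖y i t‖ ≤ C0 * (|t - i.1.1| + |i.1.2|) := fun i t => by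
    have := hup i.1.1 i.1.2 t; rw [← hyn] at this; exact this
  have hY : BaseY T y (C0 * (Real.pi + 1)) := by
    refine ⟨fun i t ht => norm_pos_iff.1 (hypos i t ht), fun i t ht => ?_, fun i t ht => ⟨_, hyd i t, ?_⟩⟩
    · refine (hyu i t).trans ?_
      have h1 := i.2.2
      have h2 : |t - i.1.1| ≤ Real.pi := ht
      gcongr
      linarith
    · have := hYdn t
      nlinarith
  have hp : BdF p := by
    obtain ⟨c, hc, d, h⟩ := (PPo_bd hγ (m + 2)).divX
    exact ⟨c, hc, d, fun i => h ⟨i.1, i.2.2.trans hb⟩⟩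
  set c : ℝ := min (1 / 2) (co / (2 * C0)) with hcdef
  have hcp : 0 < c := by positivity
  have hp0 : ∀ i, c ≤ ‖(p i).coeff 0‖ := fun i => by
    have h1 := (hw i.1.1 i.1.2 (i.2.2.trans hb)).2
    have h2 := hKσ _ i.2.2
    simp only [p]
    rw [Polynomial.coeff_divX]
    have : c ≤ 1 / 2 := min_le_left _ _
    simp only [zero_add]
    linarith
  have htx : ∀ i : ι, ∀ t ∈ T i, |t - i.1.1| ≤ co⁻¹ * ‖y i t‖ := fun i t ht => by
    have h1 := hyl i t ht
    rw [inv_mul_eq_div, le_div_iff₀ hco]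
    nlinarith [abs_nonneg i.1.2]
  have hρ : XF T y (m + 3) ρ := by
    have ez : ((m : ℤ) + 3) = ((m + 3 : ℕ) : ℤ) := by push_cast; rfl
    refine ⟨C2 * co⁻¹ ^ (m + 3) + C0 * C3 * co⁻¹ ^ (m + 2), by positivity, fun i t ht => ⟨_, hγ.Rk_deriv 0 (m + 1) i.1.1 t, ?_, ?_⟩⟩
    · rw [ez, zpow_natCast]
      have h1 := hR0 i.1.1 t
      have h2 : |t - i.1.1| ^ (m + 3) ≤ (co⁻¹ * ‖y i t‖) ^ (m + 3) := by gcongr; exact htx i t ht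
      rw [mul_pow] at h2
      have h3 : 0 ≤ C0 * C3 * co⁻¹ ^ (m + 2) * ‖y i t‖ ^ (m + 3) := by positivity
      have h4 := mul_le_mul_of_nonneg_left h2 hC2.le
      have h5 : ‖ρ i t‖ ≤ C2 * |t - i.1.1| ^ (m + 3) := h1
      nlinarith
    · rw [ez, zpow_natCast]
      have h1 := hR1 i.1.1 t
      have h2 : |t - i.1.1| ^ (m + 2) ≤ (co⁻¹ * ‖y i t‖) ^ (m + 2) := by gcongr; exact htx i t ht
      have h3 : 0 ≤ C2 * co⁻¹ ^ (m + 3) * ‖y i t‖ ^ (m + 3) := by positivity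
      rw [norm_mul]
      have h4 := hYdn t
      calc ‖Yd γ t‖ * ‖Rk γ (0 + 1) (m + 1) i.1.1 t‖ * ‖y i t‖ ≤ C0 * (C3 * (co⁻¹ * ‖y i t‖) ^ (m + 2)) * ‖y i t‖ := by
            gcongr
            exact h1.trans (by gcongr)
        _ = C0 * C3 * co⁻¹ ^ (m + 2) * ‖y i t‖ ^ (m + 3) := by ring
        _ ≤ _ := by rw [add_mul]; linarith
  have hv : ∀ i t, v i t = y i t * eval (y i t) (p i) + ρ i t := fun i t => by
    have h1 := v_eq (γ := γ) (m + 2) i.1.1 i.1.2 t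
    have h2 : eval (y i t) (PPo γ (m + 2) i.1.1 i.1.2) = y i t * eval (y i t) (p i) := by
      conv_lhs => rw [← Polynomial.X_mul_divX_add (PPo γ (m + 2) i.1.1 i.1.2), PPo_zero]
      simp [p]
    simp only [v, ρ]
    rw [h1, ← h2]
  have hvl : ∀ i, ∀ t ∈ T i, c * ‖y i t‖ ≤ ‖v i t‖ := fun i t ht => by
    have h1 := hvlow i.1.1 i.1.2 t i.2.2 ht
    have h2 := hyu i t
    calc c * ‖y i t‖ ≤ co / (2 * C0) * (C0 * (|t - i.1.1| + |i.1.2|)) := by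
          gcongr; exact min_le_right _ _
      _ = co / 2 * (|t - i.1.1| + |i.1.2|) := by field_simp
      _ ≤ _ := h1
  have hvx : XF T y 1 v := by
    refine ⟨(C0 + 1) * co⁻¹ + C0, by positivity, fun i t ht => ⟨_, (hγ.hd t).sub_const _, ?_, ?_⟩⟩
    · rw [zpow_one]
      have h1 := hvup i.1.1 i.1.2 t i.2.2
      have h2 := hyl i t ht
      have h3 : |t - i.1.1| + |i.1.2| ≤ co⁻¹ * ‖y i t‖ := by
        rw [inv_mul_eq_div, le_div_iff₀ hco]; linarith
      have h4 : 0 ≤ C0 * ‖y i t‖ := by positivity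
      calc ‖v i t‖ ≤ (C0 + 1) * (|t - i.1.1| + |i.1.2|) := h1
        _ ≤ (C0 + 1) * (co⁻¹ * ‖y i t‖) := by gcongr
        _ ≤ _ := by linarith
    · rw [zpow_one]
      have h1 := hd t
      have h2 : 0 ≤ (C0 + 1) * co⁻¹ := by positivity
      gcongr
      linarith
  obtain ⟨D, K, hK, hD, hDm, hE⟩ := expand hY m hp hcp hp0 hρ hv hvl hvx
  refine ⟨σ1, hσ1p, hc, K, hK, fun x σ h0 hσ => ⟨(hwn x σ hσ).trans (by gcongr), D ⟨(x, σ), h0, hσ⟩, hD _, hDm _,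
    fun t ht => hE ⟨(x, σ), h0, hσ⟩ t ht⟩⟩

theorem Crv.geo (hγ : Crv γ) (hΩ : IsOpen Ω) (hne : Ω.Nonempty) (hb : Bornology.IsBounded Ω)
    (hbd : frontier Ω = range γ) : Geo Ω := by
  intro m
  obtain ⟨σr, hσr, cr, hcr, hrf⟩ := hγ.reflect hΩ hne hb hbd
  obtain ⟨c0, hc0, hch⟩ := hγ.chord
  obtain ⟨σ1, hσ1, hσ1s, K, hK, hcore⟩ := hγ.core m (s0 := min σr (cr / 2)) (by positivity)
  refine ⟨cr * σ1, by positivity, K + K / c0, by positivity, fun a ha had => ?_⟩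
  obtain ⟨x, σ, h0, hσ, rfl, hw⟩ := hrf σ1 hσ1 (hσ1s.trans (min_le_left _ _)) a ha had
  obtain ⟨hwn, D, hD, hDm, hE⟩ := hcore x σ h0 hσ
  have hKc : 0 < K / c0 := by positivity
  refine ⟨wp γ (m + 2) x σ, hw _ ?_, D, fun j hj => (hD j hj).trans (by linarith), le_trans ?_ hDm, ?_⟩
  · refine lt_of_le_of_lt hwn ?_
    have h1 := abs_pos.2 h0
    have h2 : min σr (cr / 2) ≤ cr / 2 := min_le_right _ _
    nlinarith
  · exact one_div_le_one_div_of_le hK (by linarith)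
  set E : ℝ → ℂ := fun t => ((γ t - wp γ (m + 2) x σ) ^ (m + 1))⁻¹ -
        ∑ j ∈ Finset.range (m + 1), D j * (yy γ x σ t ^ (j + 1))⁻¹ with hEdef
  have hper : ∀ t (k : ℤ), E (t + k * (2 * Real.pi)) = E t := fun t k => by
    simp only [hEdef, yy, per_int hγ.per t k]
  have hglob : ∀ t, ∃ E', HasDerivAt E E' t ∧ ‖E'‖ ≤ K := fun t => by
    obtain ⟨k, hk⟩ := near_rep x t
    obtain ⟨E', h1, h2⟩ := hE _ hk
    refine ⟨E', ?_, h2⟩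
    have h3 := HasDerivAt.comp_add_const t (k * (2 * Real.pi)) h1
    have h4 : (fun t => E (t + k * (2 * Real.pi))) = E := funext fun t => hper t k
    rw [← h4]; exact h3
  choose E' hE1 hE2 using hglob
  have hlip : ∀ s t, ‖E t - E s‖ ≤ K * |t - s| := fun s t => by
    have := convex_univ.norm_image_sub_le_of_norm_hasDerivWithin_le (f := E) (f' := E') (C := K)
      (fun u _ => (hE1 u).hasDerivWithinAt) (fun u _ => hE2 u) (mem_univ s) (mem_univ t)
    rwa [Real.norm_eq_abs] at this
  intro z hz z' hz'
  rw [hbd] at hz hz'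
  obtain ⟨t, rfl⟩ := hz
  obtain ⟨t', rfl⟩ := hz'
  obtain ⟨k, hk⟩ := near_rep t' t
  have h1 := hlip t' (t + k * (2 * Real.pi))
  have h2 := hch t' (t + k * (2 * Real.pi)) hk
  rw [hper] at h1
  rw [per_int hγ.per] at h2
  change ‖E t - E t'‖ ≤ _
  have h3 : |t + k * (2 * Real.pi) - t'| ≤ ‖γ t - γ t'‖ / c0 := by
    rw [le_div_iff₀ hc0]; linarith
  calc ‖E t - E t'‖ ≤ K * (‖γ t - γ t'‖ / c0) := h1.trans (by gcongr)
    _ = K / c0 * ‖γ t - γ t'‖ := by ring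
    _ ≤ _ := by gcongr; linarith
end SDB

open MeasureTheory Finset

/-- Theorem 4.1: let `Ω` be a bounded simply connected domain whose boundary is a
simple closed `C^∞`-smooth curve. For `h` holomorphic and square-integrable on `Ω`,
let `H` be the holomorphic function on the exterior of `Ω` defined by
`conj (H w) = ∬_{z∈Ω} h(z)/(z̄ − w̄) dA_z`. Then for every positive integer `N`
there are a positive integer `M` and `C > 0`, depending only on `Ω` and `N`, such
that if the `C^M`-norm of `H` on the exterior is finite (bounded by `B`), then the
`C^N`-norm of `h` on `Ω` is bounded by `C·B`. -/
theorem sup_derivative_bound_inside_from_outside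
    (Ω : Set ℂ) (hΩopen : IsOpen Ω) (hΩconn : IsConnected Ω)
    (hΩbdd : Bornology.IsBounded Ω) (hΩsc : SimplyConnectedSpace Ω)
    (γ : ℝ → ℂ) (hγsmooth : ContDiff ℝ (⊤ : ℕ∞) γ)
    (hγper : Function.Periodic γ (2 * Real.pi))
    (hγinj : Set.InjOn γ (Set.Ico 0 (2 * Real.pi)))
    (hγreg : ∀ t, deriv γ t ≠ 0)
    (hγbd : frontier Ω = Set.range γ)
    (N : ℕ) (hN : 0 < N) :
    ∃ M : ℕ, 0 < M ∧ ∃ C : ℝ, 0 < C ∧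
      ∀ h H : ℂ → ℂ,
        DifferentiableOn ℂ h Ω →
        IntegrableOn (fun z => ‖h z‖ ^ 2) Ω volume →
        DifferentiableOn ℂ H (closure Ω)ᶜ →
        (∀ w ∉ closure Ω,
          (starRingEnd ℂ) (H w)
            = ∫ z in Ω, h z / ((starRingEnd ℂ) z - (starRingEnd ℂ) w)) →
        ∀ B : ℝ,
          (∀ w ∉ closure Ω, ∀ k ≤ M, ‖iteratedDeriv k H w‖ ≤ B) →
          ∀ z ∈ Ω, ∀ k ≤ N, ‖iteratedDeriv k h z‖ ≤ C * B := by
  have hγ : SDB.Crv γ := ⟨hγsmooth, hγper, hγinj, hγreg⟩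
  exact SDB.final_of_geo hΩopen hΩbdd (hγ.geo hΩopen hΩconn.nonempty hΩbdd hγbd)
    (hγ.ext_dense hΩopen hΩconn.nonempty hΩbdd hγbd) (hγ.layer_bound hΩbdd hγbd) N
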